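/- Let p, q, s be distinct primes with p ≡ 5 (mod 8), q ≡ 3 (mod 8), s ≡ 3 (mod 4), (p/q) = (p/s) = 1. Then the 2-Sylow subgroup of the ideal class group of the multiquadratic field F₁ = ℚ(√(pq), √(ps), √2) is isomorphic to ℤ/2ℤ × ℤ/2ℤ. -/

import Mathlib

open NumberField

/-- The multiquadratic field `F₁ = ℚ(√(pq), √(ps), √2)`, realized inside `ℂ`. -/
noncomputable def fieldF1 (p q s : ℕ) : IntermediateField ℚ ℂ :=
  IntermediateField.adjoin ℚ
    {((Real.sqrt (p * q) : ℝ) : ℂ), ((Real.sqrt (p * s) : ℝ) : ℂ),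
     ((Real.sqrt 2 : ℝ) : ℂ)}

/-!
Write `K = F₁` and `k = ℚ(√2, √(qs))`. The field `k` has odd class number, and the ambiguous class
bound for the quadratic extension `K / k`, read off from 2-Selmer groups and the index of the unit
norms, gives `|Cl(K)[2]| ≤ 4`.

Let `x` be an ideal class of `K` with `x⁴ = 1`. As `k` has odd class number, the norms to `k` of all
the conjugates of `x` are trivial, so that `x²` is the product of the norms of `x`, lifted to `K`,
to the other two fields between `ℚ(√2)` and `K`, which are `ℚ(√2, √(pq))` and `ℚ(√2, √(ps))`. In
each of these the 2-torsion of the class group is generated by the class of an ideal `D` with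
`D² = (√2)`, on which the genus character at `p` is nontrivial. Hence the two norms are both trivial
or both the class of `D`, depending only on the genus character of `x`, and `x² = 1`.

The class of `D` in `K` is nontrivial: otherwise `2`, multiplied by a unit of `ℚ(√(qs))`, would be a
norm from `ℚ_p(√(pq))`, whereas those units are squares in `ℚ_p` and `2` is not such a norm. The
genus character at `p` is trivial on this class, since `D` has norm `4` in `K`, but it is nontrivial
on an ideal whose norm is a prime that is not a square modulo `p`. Hence `|Cl(K)[2]| = 4`, and this
elementary abelian group is the Sylow 2-subgroup.
-/

section SquareClasses

/-- The group `G / G²` of square classes of a commutative group. -/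
abbrev SquareClasses (G : Type*) [CommGroup G] : Type _ := G ⧸ (powMonoidHom 2 : G →* G).range

/-- The subgroup `G[2]` of a commutative group, the kernel of squaring. For a class group `G`,
`twoTorsion G = ⊥` expresses that the class number is odd. -/
abbrev twoTorsion (G : Type*) [CommGroup G] : Subgroup G := (powMonoidHom 2 : G →* G).ker

variable {G : Type*} [CommGroup G]

lemma mem_twoTorsion {x : G} : x ∈ twoTorsion G ↔ x ^ 2 = 1 := Iff.rfl

lemma squareClass_eq_iff {x y : G} :
    (QuotientGroup.mk x : SquareClasses G) = QuotientGroup.mk y ↔ ∃ z, y = x * z ^ 2 := by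
  rw [QuotientGroup.eq]
  exact exists_congr fun z => by rw [powMonoidHom_apply, eq_inv_mul_iff_mul_eq, eq_comm]

lemma squareClass_sq (X : SquareClasses G) : X ^ 2 = 1 := by
  obtain ⟨x, rfl⟩ := QuotientGroup.mk_surjective X
  rw [← QuotientGroup.mk_pow, QuotientGroup.eq_one_iff]
  exact ⟨x, rfl⟩

end SquareClasses

section Units

variable (K : Type*) [Field K] [NumberField K]

/-- Dirichlet's unit theorem as a group isomorphism `μ(K) × ℤʳ ≃ 𝓞ˣ`, given by the fundamental
system of units. -/
noncomputable def torsionProdEquivUnits :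
    Units.torsion K × Multiplicative (Fin (Units.rank K) → ℤ) ≃* (𝓞 K)ˣ :=
  let f : Units.torsion K × Multiplicative (Fin (Units.rank K) → ℤ) →* (𝓞 K)ˣ :=
    { toFun := fun x => x.1 * ∏ i, Units.fundSystem K i ^ x.2.toAdd i
      map_one' := by simp
      map_mul' := fun x y => by
        simp only [Prod.fst_mul, Prod.snd_mul, Subgroup.coe_mul, toAdd_mul, Pi.add_apply, zpow_add,
          Finset.prod_mul_distrib]
        exact mul_mul_mul_comm _ _ _ _ }
  MulEquiv.ofBijective f
    ⟨fun x y hxy => (Units.exist_unique_eq_mul_prod K _).unique (y₁ := x) (y₂ := y) rfl hxy,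
      fun u => (Units.exist_unique_eq_mul_prod K u).exists.imp fun _ h => h.symm⟩

lemma index_range_powMonoidHom_units (n : ℕ) :
    (powMonoidHom n : (𝓞 K)ˣ →* (𝓞 K)ˣ).range.index =
      (Units.torsionOrder K).gcd n * n ^ Units.rank K := by
  have hfree : (powMonoidHom n : Multiplicative (Fin (Units.rank K) → ℤ) →* _).range.index =
      n ^ Units.rank K := by
    have h := AddSubgroup.index_range_nsmul (Fin (Units.rank K) → ℤ) n
    rwa [Module.finrank_fin_fun] at h
  have hprod : (powMonoidHom n : Units.torsion K × Multiplicative (Fin (Units.rank K) → ℤ) →* _)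
      = (powMonoidHom n).prodMap (powMonoidHom n) := rfl
  rw [← (torsionProdEquivUnits K).map_range_powMonoidHom n, Subgroup.index_map_equiv, hprod,
    MonoidHom.range_prodMap, Subgroup.index_prod, hfree, IsCyclic.index_powMonoidHom_range,
    Units.torsionOrder]

instance finite_squareClasses_units : Finite (SquareClasses (𝓞 K)ˣ) := by
  refine Nat.finite_of_card_ne_zero ?_
  change (powMonoidHom 2 : (𝓞 K)ˣ →* (𝓞 K)ˣ).range.index ≠ 0
  rw [index_range_powMonoidHom_units]
  exact Nat.mul_ne_zero (Nat.gcd_ne_zero_right two_ne_zero) (pow_ne_zero _ two_ne_zero)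

lemma card_squareClasses_units [IsTotallyReal K] :
    Nat.card (SquareClasses (𝓞 K)ˣ) = 2 ^ Module.finrank ℚ K := by
  have h := InfinitePlace.card_eq_nrRealPlaces_add_nrComplexPlaces K
  rw [IsTotallyReal.nrComplexPlaces_eq_zero, add_zero, ← IsTotallyReal.finrank] at h
  change (powMonoidHom 2 : (𝓞 K)ˣ →* (𝓞 K)ˣ).range.index = _
  rw [index_range_powMonoidHom_units,
    Nat.gcd_eq_right (even_iff_two_dvd.1 (Units.even_torsionOrder K)),
    ← pow_succ', Units.rank, h, Nat.sub_add_cancel Module.finrank_pos]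

end Units

section SelmerGroup

open IsDedekindDomain HeightOneSpectrum UniqueFactorizationMonoid
open scoped nonZeroDivisors

variable {R : Type*} [CommRing R] [IsDedekindDomain R]

lemma isSquare_ideal_iff {I : Ideal R} (hI : I ≠ 0) :
    (∃ J, I = J ^ 2) ↔ ∀ v : HeightOneSpectrum R, Even (multiplicity v.asIdeal I) := by
  classical
  constructor
  · rintro ⟨J, rfl⟩ v
    have hJ : J ≠ 0 := ne_zero_pow two_ne_zero hI
    rw [FiniteMultiplicity.multiplicity_pow v.prime (.of_prime_left v.prime hJ)]
    exact even_two_mul _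
  · intro h
    obtain ⟨u, hu⟩ := Multiset.exists_smul_of_dvd_count (normalizedFactors I) (k := 2) (by
      intro P hP
      have hp := prime_of_normalized_factor P hP
      have hcount := emultiplicity_eq_count_normalizedFactors hp.irreducible hI
      rw [normalize_eq] at hcount
      rw [← multiplicity_eq_of_emultiplicity_eq_some hcount]
      exact (h ⟨P, Ideal.isPrime_of_prime hp, hp.ne_zero⟩).two_dvd)
    refine ⟨u.prod, ?_⟩
    rw [← Ideal.prod_normalizedFactors_eq_self hI, hu, Multiset.prod_nsmul]

lemma ideal_sq_injective {I J : Ideal R} (h : I ^ 2 = J ^ 2) : I = J :=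
  dvd_antisymm ((pow_dvd_pow_iff_dvd two_ne_zero).1 h.dvd)
    ((pow_dvd_pow_iff_dvd two_ne_zero).1 h.symm.dvd)

variable {K : Type*} [Field K] [Algebra R K] [IsFractionRing R K]

lemma valuationOfNeZeroMod_two_eq_one_iff (v : HeightOneSpectrum R) (x : Kˣ) :
    v.valuationOfNeZeroMod 2 (QuotientGroup.mk x : SquareClasses Kˣ) = 1 ↔
      Even (v.valuationOfNeZero x).toAdd := by
  change (Int.quotientZMultiplesNatEquivZMod 2).toMultiplicative _ = 1 ↔ _
  rw [MulEquiv.map_eq_one_iff]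
  change (QuotientGroup.mk (v.valuationOfNeZero x) :
    Multiplicative ℤ ⧸ (AddSubgroup.zmultiples ((2 : ℕ) : ℤ)).toSubgroup) = 1 ↔ _
  rw [QuotientGroup.eq_one_iff]
  change (v.valuationOfNeZero x).toAdd ∈ AddSubgroup.zmultiples ((2 : ℕ) : ℤ) ↔ _
  rw [Int.mem_zmultiples_iff, even_iff_two_dvd, Nat.cast_ofNat]

lemma toAdd_valuationOfNeZero_of_algebraMap (v : HeightOneSpectrum R) {x : Kˣ} {a : R}
    (hx : (x : K) = algebraMap R K a) :
    (v.valuationOfNeZero x).toAdd = -(multiplicity v.asIdeal (Ideal.span {a}) : ℤ) := by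
  have ha : a ≠ 0 := by
    rintro rfl
    exact x.ne_zero (by rw [hx, map_zero])
  have h := valuationOfNeZero_eq v x
  rw [hx, valuation_of_algebraMap, intValuation_eq_exp_neg_multiplicity v ha] at h
  exact WithZero.coe_injective h

variable (R K) in
/-- The 2-Selmer group `K(S, 2)`: square classes of `K` with even valuation at all primes of `R`
outside `S`. -/
abbrev selmerTwo (S : Set (HeightOneSpectrum R)) : Subgroup (SquareClasses Kˣ) :=
  selmerGroup (R := R) (K := K) (S := S) (n := 2)

variable (R) in
lemma exists_integral_squareClass (X : SquareClasses Kˣ) :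
    ∃ (x : Kˣ) (a : R), X = QuotientGroup.mk x ∧ (x : K) = algebraMap R K a := by
  obtain ⟨x, rfl⟩ := QuotientGroup.mk_surjective X
  obtain ⟨a, b, hb, h⟩ := IsFractionRing.div_surjective (A := R) (x : K)
  have hb0 : algebraMap R K b ≠ 0 :=
    (map_ne_zero_iff _ (IsFractionRing.injective R K)).2 (nonZeroDivisors.ne_zero hb)
  refine ⟨x * (Units.mk0 _ hb0) ^ 2, a * b, squareClass_eq_iff.2 ⟨_, rfl⟩, ?_⟩
  simp only [Units.val_mul, Units.val_pow_eq_pow_val, Units.val_mk0, map_mul, ← h]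
  field_simp

lemma mk_mem_selmerTwo_iff {x : Kˣ} {a : R} (hx : (x : K) = algebraMap R K a) :
    (QuotientGroup.mk x : SquareClasses Kˣ) ∈ selmerTwo R K ∅ ↔
      ∃ J : Ideal R, Ideal.span {a} = J ^ 2 := by
  have ha : Ideal.span {a} ≠ (0 : Ideal R) := by
    rw [Ideal.zero_eq_bot, Ne, Ideal.span_singleton_eq_bot]
    rintro rfl
    exact x.ne_zero (by rw [hx, map_zero])
  rw [isSquare_ideal_iff ha]
  refine forall_congr' fun v => ?_
  rw [imp_iff_right (Set.notMem_empty v), valuationOfNeZeroMod_two_eq_one_iff,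
    toAdd_valuationOfNeZero_of_algebraMap v hx, even_neg, Int.even_coe_nat]

/-- `J` is the ideal with `(a) = J²`, for an integral representative `a` of the square class `X`. It
is determined by `X` up to principal ideals. -/
def IsSelmerDivisor (X : SquareClasses Kˣ) (J : (Ideal R)⁰) : Prop :=
  ∃ (x : Kˣ) (a : R), X = QuotientGroup.mk x ∧ (x : K) = algebraMap R K a ∧
    Ideal.span {a} = (J : Ideal R) ^ 2

namespace IsSelmerDivisor

variable {X Y : SquareClasses Kˣ} {I J : (Ideal R)⁰}

lemma exists_of_mem (hX : X ∈ selmerTwo R K ∅) : ∃ J : (Ideal R)⁰, IsSelmerDivisor X J := by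
  obtain ⟨x, a, rfl, hx⟩ := exists_integral_squareClass R X
  obtain ⟨J, hJ⟩ := (mk_mem_selmerTwo_iff hx).1 hX
  have hJ0 : J ≠ 0 := by
    rintro rfl
    rw [zero_pow two_ne_zero, Ideal.zero_eq_bot, Ideal.span_singleton_eq_bot] at hJ
    exact x.ne_zero (by rw [hx, hJ, map_zero])
  exact ⟨⟨J, mem_nonZeroDivisors_iff_ne_zero.2 hJ0⟩, x, a, rfl, hx, hJ⟩

lemma mem (h : IsSelmerDivisor X J) : X ∈ selmerTwo R K ∅ := by
  obtain ⟨x, a, rfl, hx, hJ⟩ := h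
  exact (mk_mem_selmerTwo_iff hx).2 ⟨J, hJ⟩

omit [IsDedekindDomain R] [IsFractionRing R K] in
lemma mul (hX : IsSelmerDivisor X I) (hY : IsSelmerDivisor Y J) :
    IsSelmerDivisor (X * Y) (I * J) := by
  obtain ⟨x, a, rfl, hx, hI⟩ := hX
  obtain ⟨y, b, rfl, hy, hJ⟩ := hY
  refine ⟨x * y, a * b, rfl, by rw [Units.val_mul, map_mul, hx, hy], ?_⟩
  rw [← Ideal.span_singleton_mul_span_singleton, hI, hJ, Submonoid.coe_mul, mul_pow]

omit [IsFractionRing R K] in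
lemma mk0_mem_twoTorsion (h : IsSelmerDivisor X J) :
    ClassGroup.mk0 J ∈ twoTorsion (ClassGroup R) := by
  obtain ⟨x, a, -, -, hJ⟩ := h
  rw [mem_twoTorsion, ← map_pow, ClassGroup.mk0_eq_one_iff, SubmonoidClass.coe_pow]
  exact ⟨a, hJ.symm⟩

lemma exists_of_mem_twoTorsion {c : ClassGroup R} (hc : c ∈ twoTorsion (ClassGroup R)) :
    ∃ (X : SquareClasses Kˣ) (J : (Ideal R)⁰), IsSelmerDivisor X J ∧ ClassGroup.mk0 J = c := by
  obtain ⟨J, rfl⟩ := ClassGroup.mk0_surjective c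
  rw [mem_twoTorsion, ← map_pow, ClassGroup.mk0_eq_one_iff, SubmonoidClass.coe_pow] at hc
  obtain ⟨a, ha⟩ := hc
  have ha0 : algebraMap R K a ≠ 0 := by
    rw [map_ne_zero_iff _ (IsFractionRing.injective R K)]
    rintro rfl
    exact pow_ne_zero 2 (nonZeroDivisors.ne_zero J.2) (ha.trans Ideal.span_zero)
  exact ⟨QuotientGroup.mk (Units.mk0 _ ha0), J, ⟨_, a, rfl, rfl, ha.symm⟩, rfl⟩

lemma mk0_eq_one_iff (h : IsSelmerDivisor X J) :
    ClassGroup.mk0 J = 1 ↔ ∃ u : Rˣ, X = QuotientGroup.mk (Units.map (algebraMap R K) u) := by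
  obtain ⟨x, a, rfl, hx, hJ⟩ := h
  rw [ClassGroup.mk0_eq_one_iff]
  constructor
  · rintro ⟨b, hb⟩
    rw [Ideal.submodule_span_eq] at hb
    rw [hb, Ideal.span_singleton_pow, Ideal.span_singleton_eq_span_singleton] at hJ
    obtain ⟨u, hu⟩ := hJ.symm
    have hxu : (x : K) = algebraMap R K u * algebraMap R K b ^ 2 := by
      rw [hx, ← hu, map_mul, map_pow, mul_comm]
    have hb0 : algebraMap R K b ≠ 0 := by
      rintro hb0
      exact x.ne_zero (by rw [hxu, hb0]; ring)
    exact ⟨u, (squareClass_eq_iff.2 ⟨Units.mk0 _ hb0, by ext; simpa using hxu⟩).symm⟩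
  · rintro ⟨u, hu⟩
    obtain ⟨z, hz⟩ := squareClass_eq_iff.1 hu.symm
    have hz' : (z : K) ^ 2 = algebraMap R K (a * (u⁻¹ : Rˣ)) := by
      rw [map_mul, ← hx, hz, Units.val_mul, Units.coe_map, Units.val_pow_eq_pow_val,
        mul_right_comm, MonoidHom.coe_coe, ← map_mul, Units.mul_inv, map_one, one_mul]
    obtain ⟨b, hb⟩ := IsIntegrallyClosed.exists_algebraMap_eq_of_isIntegral_pow (R := R)
      two_pos (hz' ▸ isIntegral_algebraMap)
    refine ⟨b, ideal_sq_injective ?_⟩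
    rw [Ideal.submodule_span_eq, ← hJ, Ideal.span_singleton_pow,
      Ideal.span_singleton_eq_span_singleton]
    exact ⟨u⁻¹, IsFractionRing.injective R K (by rw [← hz', map_pow, hb])⟩

lemma mk0_eq (hI : IsSelmerDivisor X I) (hJ : IsSelmerDivisor X J) :
    ClassGroup.mk0 I = ClassGroup.mk0 J := by
  have h : ClassGroup.mk0 (I * J) = 1 :=
    (hI.mul hJ).mk0_eq_one_iff.2 ⟨1, by rw [← pow_two, squareClass_sq, map_one]; rfl⟩
  have hJ2 := mem_twoTorsion.1 hJ.mk0_mem_twoTorsion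
  rw [map_mul] at h
  rw [pow_two] at hJ2
  exact mul_right_cancel (h.trans hJ2.symm)

end IsSelmerDivisor

variable (R K) in
/-- The homomorphism `K(∅, 2) → Cl(R)[2]` sending the class of `a`, where `(a) = J²`, to the class
of `J`. -/
noncomputable def selmerToTwoTorsion : selmerTwo R K ∅ →* twoTorsion (ClassGroup R) where
  toFun X := ⟨_, (IsSelmerDivisor.exists_of_mem X.2).choose_spec.mk0_mem_twoTorsion⟩
  map_one' := Subtype.ext <|
    (IsSelmerDivisor.exists_of_mem (one_mem _)).choose_spec.mk0_eq_one_iff.2 ⟨1, by simp⟩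
  map_mul' X Y := Subtype.ext <| by
    have hXY := (IsSelmerDivisor.exists_of_mem X.2).choose_spec.mul
      (IsSelmerDivisor.exists_of_mem Y.2).choose_spec
    exact ((IsSelmerDivisor.exists_of_mem (X * Y).2).choose_spec.mk0_eq hXY).trans (map_mul _ _ _)

lemma selmerToTwoTorsion_surjective : Function.Surjective (selmerToTwoTorsion R K) := by
  rintro ⟨c, hc⟩
  obtain ⟨X, J, hJ, rfl⟩ := IsSelmerDivisor.exists_of_mem_twoTorsion (K := K) hc
  exact ⟨⟨X, hJ.mem⟩,
    Subtype.ext ((IsSelmerDivisor.exists_of_mem hJ.mem).choose_spec.mk0_eq hJ)⟩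

lemma ker_selmerToTwoTorsion :
    (selmerToTwoTorsion R K).ker = (selmerGroup.fromUnit (n := 2)).range := by
  ext X
  rw [MonoidHom.mem_ker, ← Subtype.val_inj]
  refine (IsSelmerDivisor.exists_of_mem X.2).choose_spec.mk0_eq_one_iff.trans ?_
  exact exists_congr fun u => eq_comm.trans (Subtype.ext_iff (a1 := selmerGroup.fromUnit u)).symm

variable (R K)

theorem card_selmerTwo_empty : Nat.card (selmerTwo R K ∅) =
    Nat.card (twoTorsion (ClassGroup R)) * Nat.card (SquareClasses Rˣ) := by
  have : Fact (0 < 2) := ⟨two_pos⟩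
  rw [Subgroup.card_eq_card_quotient_mul_card_subgroup (selmerToTwoTorsion R K).ker,
    Nat.card_congr (QuotientGroup.quotientKerEquivOfSurjective _
      selmerToTwoTorsion_surjective).toEquiv, ker_selmerToTwoTorsion,
    ← Nat.card_congr (QuotientGroup.quotientKerEquivRange _).toEquiv, selmerGroup.fromUnit_ker]

lemma card_selmerTwo (S : Set (HeightOneSpectrum R)) : Nat.card (selmerTwo R K S) =
    Nat.card (selmerGroup.valuation (R := R) (K := K) (S := S) (n := 2)).range *
      Nat.card (selmerTwo R K ∅) := by
  rw [Subgroup.card_eq_card_quotient_mul_card_subgroup (selmerGroup.valuation (S := S)).ker,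
    Nat.card_congr (QuotientGroup.quotientKerEquivRange _).toEquiv, selmerGroup.valuation_ker_eq,
    Nat.card_congr (Subgroup.subgroupOfEquivOfLe (selmerGroup.monotone S.empty_subset)).toEquiv]

lemma finite_selmerTwo [Finite (selmerTwo R K ∅)] {S : Set (HeightOneSpectrum R)} (hS : S.Finite) :
    Finite (selmerTwo R K S) := by
  have : Finite S := hS
  refine Nat.finite_of_card_ne_zero ?_
  rw [card_selmerTwo]
  exact mul_ne_zero Nat.card_pos.ne' Nat.card_pos.ne'

lemma card_selmerTwo_le {S : Set (HeightOneSpectrum R)} (hS : S.Finite) :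
    Nat.card (selmerTwo R K S) ≤ 2 ^ S.ncard * Nat.card (selmerTwo R K ∅) := by
  have : Finite S := hS
  rw [card_selmerTwo]
  refine Nat.mul_le_mul_right _ ((Subgroup.card_le_card_group _).trans_eq ?_)
  rw [Nat.card_fun, Nat.card_coe_set_eq, Nat.card_congr Multiplicative.toAdd, Nat.card_zmod]

end SelmerGroup

section QuadraticExtension

variable {k K : Type*} [Field k] [Field K] [Algebra k K]

/-- `K = k(√d)` is a quadratic extension of `k`, with `θ` as the chosen square root of `d`. -/
structure IsSqrtExtension (θ : K) (d : k) : Prop where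
  finrank_eq_two : Module.finrank k K = 2
  sq_eq : θ ^ 2 = algebraMap k K d
  not_isSquare : ¬ IsSquare d

namespace IsSqrtExtension

variable {θ : K} {d : k}

lemma exists_basis (h : IsSqrtExtension θ d) :
    ∃ b : Module.Basis (Fin 2) k K, b 0 = 1 ∧ b 1 = θ := by
  have hli : LinearIndependent k ![(1 : K), θ] := by
    rw [LinearIndependent.pair_iff]
    intro s t hst
    rw [Algebra.smul_def, Algebra.smul_def, mul_one] at hst
    have ht : t = 0 := by
      by_contra ht
      have ht' : algebraMap k K t ≠ 0 := by simpa using ht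
      refine h.not_isSquare ⟨s / t, (algebraMap k K).injective ?_⟩
      rw [← h.sq_eq, map_mul, map_div₀,
        show θ = -(algebraMap k K s / algebraMap k K t) by field_simp; linear_combination hst]
      ring
    subst ht
    simpa using hst
  have : FiniteDimensional k K :=
    Module.finite_of_finrank_pos (two_pos.trans_eq h.finrank_eq_two.symm)
  refine ⟨basisOfLinearIndependentOfCardEqFinrank hli ?_, ?_, ?_⟩
  · rw [Fintype.card_fin, h.finrank_eq_two]
  all_goals simp [coe_basisOfLinearIndependentOfCardEqFinrank]

lemma exists_eq_add_mul (h : IsSqrtExtension θ d) (x : K) :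
    ∃ u v : k, x = algebraMap k K u + algebraMap k K v * θ := by
  obtain ⟨b, h0, h1⟩ := h.exists_basis
  refine ⟨b.repr x 0, b.repr x 1, ?_⟩
  have := b.sum_repr x
  rw [Fin.sum_univ_two, h0, h1, Algebra.smul_def, Algebra.smul_def, mul_one] at this
  exact this.symm

lemma norm_add_mul (h : IsSqrtExtension θ d) (u v : k) :
    Algebra.norm k (algebraMap k K u + algebraMap k K v * θ) = u ^ 2 - d * v ^ 2 := by
  obtain ⟨b, h0, h1⟩ := h.exists_basis
  have e0 : (algebraMap k K u + algebraMap k K v * θ) * b 0 = u • b 0 + v • b 1 := by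
    rw [h0, h1, Algebra.smul_def, Algebra.smul_def]; ring
  have e1 : (algebraMap k K u + algebraMap k K v * θ) * b 1 = (d * v) • b 0 + u • b 1 := by
    rw [h0, h1, Algebra.smul_def, Algebra.smul_def, map_mul, ← h.sq_eq]; ring
  rw [Algebra.norm_eq_matrix_det b, Matrix.det_fin_two]
  simp only [Algebra.leftMulMatrix_eq_repr_mul, e0, e1, map_add, map_smul, Finsupp.add_apply,
    Finsupp.smul_apply, Module.Basis.repr_self, smul_eq_mul, Finsupp.single_eq_same,
    Finsupp.single_eq_of_ne (zero_ne_one' (Fin 2)), Finsupp.single_eq_of_ne (one_ne_zero' (Fin 2))]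
  ring

/-- If `N(a) = c²` with `a = u + vθ`, then `(u + c + vθ)² = 2(u + c) a`. -/
lemma exists_mul_sq_eq_of_norm_eq_sq [NeZero (2 : k)] (h : IsSqrtExtension θ d) {a : K}
    (ha : a ≠ 0) {c : k} (hc : Algebra.norm k a = c ^ 2) :
    ∃ (b : k) (z : K), b ≠ 0 ∧ z ≠ 0 ∧ a * z ^ 2 = algebraMap k K b := by
  obtain ⟨u, v, rfl⟩ := h.exists_eq_add_mul a
  rw [h.norm_add_mul] at hc
  by_cases huc : u + c = 0
  · have hdv : d * v ^ 2 = 0 := by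
      rw [eq_neg_of_add_eq_zero_right huc] at hc
      linear_combination -hc
    have hd : d ≠ 0 := fun hd => h.not_isSquare (hd ▸ IsSquare.zero)
    obtain rfl : v = 0 := by simpa [hd] using hdv
    exact ⟨u, 1, by rintro rfl; simp at ha, one_ne_zero, by simp⟩
  · set y := algebraMap k K (u + c) + algebraMap k K v * θ with hy
    have hne : algebraMap k K (2 * (u + c)) ≠ 0 :=
      (map_ne_zero _).2 (mul_ne_zero two_ne_zero huc)
    have hsq : y ^ 2 =
        algebraMap k K (2 * (u + c)) * (algebraMap k K u + algebraMap k K v * θ) := by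
      have hc' := congrArg (algebraMap k K) hc
      simp only [hy, map_sub, map_mul, map_pow, map_add, map_ofNat] at hc' ⊢
      linear_combination (algebraMap k K v) ^ 2 * h.sq_eq - hc'
    have hy0 : y ≠ 0 := ne_zero_pow two_ne_zero (hsq ▸ mul_ne_zero hne ha)
    refine ⟨2 * (u + c), algebraMap k K (2 * (u + c)) * y⁻¹, mul_ne_zero two_ne_zero huc,
      mul_ne_zero hne (inv_ne_zero hy0), ?_⟩
    field_simp
    rw [hsq]
    ring

end IsSqrtExtension

end QuadraticExtension

section AmbiguousClasses

open IsDedekindDomain HeightOneSpectrum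

section Homomorphisms

variable (k K : Type*) [Field k] [Field K] [Algebra k K]

/-- The homomorphism on square classes induced by the inclusion of a field in an extension. -/
noncomputable def squareClassBaseChange : SquareClasses kˣ →* SquareClasses Kˣ :=
  QuotientGroup.map _ _ (Units.map (algebraMap k K)) <| by
    rintro _ ⟨x, rfl⟩
    exact ⟨Units.map (algebraMap k K) x, (map_pow (Units.map _) x 2).symm⟩

/-- The homomorphism on square classes induced by the norm of a field extension. -/
noncomputable def squareClassNorm : SquareClasses Kˣ →* SquareClasses kˣ :=
  QuotientGroup.map _ _ (Units.map (Algebra.norm k)) <| by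
    rintro _ ⟨x, rfl⟩
    exact ⟨Units.map (Algebra.norm k) x, (map_pow (Units.map (Algebra.norm k)) x 2).symm⟩

end Homomorphisms

lemma card_map_mul_card_inf_ker {G H : Type*} [Group G] [Group H] (A : Subgroup G)
    (f : G →* H) : Nat.card (A.map f) * Nat.card (f.ker ⊓ A : Subgroup G) = Nat.card A := by
  rw [← Subgroup.relIndex_ker, ← Subgroup.relIndex_bot_left, mul_comm,
    ← Subgroup.inf_relIndex_right f.ker A, Subgroup.relIndex_mul_relIndex _ _ _ bot_le inf_le_right,
    Subgroup.relIndex_bot_left]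

variable (k K : Type*) [Field k] [Field K] [NumberField k] [NumberField K] [Algebra k K]

/-- Some prime of `K` above the prime `v` of `k` has ramification index `1`. -/
def IsUnramifiedAbove (v : HeightOneSpectrum (𝓞 k)) : Prop :=
  ∃ w : HeightOneSpectrum (𝓞 K), w.asIdeal.LiesOver v.asIdeal ∧
    v.asIdeal.ramificationIdx' w.asIdeal = 1

variable {k K}

lemma mem_selmerTwo_of_baseChange {S : Set (HeightOneSpectrum (𝓞 k))}
    (hS : ∀ v ∉ S, IsUnramifiedAbove k K v) {X : SquareClasses kˣ}
    (hX : squareClassBaseChange k K X ∈ selmerTwo (𝓞 K) K ∅) : X ∈ selmerTwo (𝓞 k) k S := by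
  obtain ⟨x, rfl⟩ := QuotientGroup.mk_surjective X
  intro v hv
  obtain ⟨w, hw, he⟩ := hS v hv
  have heven := hX w (Set.notMem_empty w)
  change w.valuationOfNeZeroMod 2
    (QuotientGroup.mk (Units.map (algebraMap k K).toMonoidHom x)) = 1 at heven
  have hval : v.valuationOfNeZero x =
      w.valuationOfNeZero (Units.map (algebraMap k K).toMonoidHom x) := by
    refine WithZero.coe_injective ?_
    rw [valuationOfNeZero_eq, valuationOfNeZero_eq]
    have := valuation_liesOver K v w (x : k)
    rwa [he, pow_one] at this
  rw [valuationOfNeZeroMod_two_eq_one_iff] at heven ⊢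
  rwa [hval]

lemma squareClassNorm_mem_selmerTwo {X : SquareClasses Kˣ} (hX : X ∈ selmerTwo (𝓞 K) K ∅) :
    squareClassNorm k K X ∈ selmerTwo (𝓞 k) k ∅ := by
  obtain ⟨⟨J, hJ0⟩, x, a, rfl, hx, hJ⟩ := IsSelmerDivisor.exists_of_mem hX
  have hN : (Units.map (Algebra.norm k : K →* k) x : k) =
      algebraMap (𝓞 k) k (Algebra.intNorm (𝓞 k) (𝓞 K) a) := by
    rw [Algebra.algebraMap_intNorm (L := K), ← hx, Units.coe_map]
  refine (mk_mem_selmerTwo_iff hN).2 ⟨Ideal.relNorm (𝓞 k) J, ?_⟩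
  rw [← Ideal.relNorm_singleton, hJ, map_pow]

lemma exists_unit_of_mem_selmerTwo_empty {R F : Type*} [CommRing R] [IsDedekindDomain R] [Field F]
    [Algebra R F] [IsFractionRing R F] (hcl : twoTorsion (ClassGroup R) = ⊥)
    {X : SquareClasses Fˣ} (hX : X ∈ selmerTwo R F ∅) :
    ∃ u : Rˣ, X = QuotientGroup.mk (Units.map (algebraMap R F) u) := by
  obtain ⟨J, hJ⟩ := IsSelmerDivisor.exists_of_mem hX
  exact hJ.mk0_eq_one_iff.1 (Subgroup.mem_bot.1 (hcl ▸ hJ.mk0_mem_twoTorsion))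

lemma map_squareClassNorm_selmerTwo_le (h2 : Module.finrank k K = 2)
    (hcl : twoTorsion (ClassGroup (𝓞 k)) = ⊥) {U : Subgroup (𝓞 k)ˣ}
    (hU : ∀ u : (𝓞 k)ˣ, (∃ a : K, Algebra.norm k a = (u : 𝓞 k)) → u ∈ U) :
    (selmerTwo (𝓞 K) K ∅).map (squareClassNorm k K) ≤
      U.map ((selmerTwo (𝓞 k) k ∅).subtype.comp selmerGroup.fromUnit) := by
  rintro _ ⟨X, hX, rfl⟩
  obtain ⟨u, hu⟩ := exists_unit_of_mem_selmerTwo_empty hcl (squareClassNorm_mem_selmerTwo hX)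
  refine ⟨u, hU u ?_, hu.symm⟩
  obtain ⟨x, rfl⟩ := QuotientGroup.mk_surjective X
  obtain ⟨z, hz⟩ := squareClass_eq_iff.1 hu
  refine ⟨x * algebraMap k K z, ?_⟩
  rw [map_mul, Algebra.norm_algebraMap, h2]
  exact (congrArg Units.val hz).symm

lemma card_map_squareClassNorm_mul_index_le (h2 : Module.finrank k K = 2)
    (hcl : twoTorsion (ClassGroup (𝓞 k)) = ⊥) {U : Subgroup (𝓞 k)ˣ}
    (hU : ∀ u : (𝓞 k)ˣ, (∃ a : K, Algebra.norm k a = (u : 𝓞 k)) → u ∈ U) :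
    Nat.card ((selmerTwo (𝓞 K) K ∅).map (squareClassNorm k K)) * U.index ≤
      Nat.card (SquareClasses (𝓞 k)ˣ) := by
  have : Fact (0 < 2) := ⟨two_pos⟩
  set ι := (selmerTwo (𝓞 k) k ∅).subtype.comp selmerGroup.fromUnit
  have hker : ι.ker = (powMonoidHom 2 : (𝓞 k)ˣ →* _).range := by
    refine Eq.trans ?_ (selmerGroup.fromUnit_ker (K := k))
    exact MonoidHom.ker_comp_of_injective _ _ (Subgroup.subtype_injective _)
  have hkerU : ι.ker ≤ U := by
    rw [hker]
    rintro _ ⟨u, rfl⟩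
    exact hU _ ⟨algebraMap k K (u : 𝓞 k), by rw [Algebra.norm_algebraMap, h2]; simp⟩
  have hcard : Nat.card (U.map ι) * U.index = Nat.card (SquareClasses (𝓞 k)ˣ) := by
    rw [← Subgroup.relIndex_ker, Subgroup.relIndex_mul_index hkerU, hker, Subgroup.index]
  have : Finite (U.map ι) :=
    Nat.finite_of_card_ne_zero (left_ne_zero_of_mul (hcard.trans_ne Nat.card_pos.ne'))
  rw [← hcard]
  exact Nat.mul_le_mul_right _
    (Subgroup.card_le_of_le (map_squareClassNorm_selmerTwo_le h2 hcl hU))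

lemma ker_squareClassNorm_inf_selmerTwo_le {θ : K} {d : k} (hθ : IsSqrtExtension θ d)
    {S : Set (HeightOneSpectrum (𝓞 k))} (hS : ∀ v ∉ S, IsUnramifiedAbove k K v) :
    (squareClassNorm k K).ker ⊓ selmerTwo (𝓞 K) K ∅ ≤
      (selmerTwo (𝓞 k) k S).map (squareClassBaseChange k K) := by
  rintro X ⟨hX1, hX⟩
  obtain ⟨x, rfl⟩ := QuotientGroup.mk_surjective X
  obtain ⟨c, hc⟩ := (QuotientGroup.eq_one_iff _).1 (MonoidHom.mem_ker.1 hX1)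
  obtain ⟨b, z, hb, hz, hbz⟩ :=
    hθ.exists_mul_sq_eq_of_norm_eq_sq x.ne_zero (congrArg Units.val hc).symm
  have hbx : squareClassBaseChange k K (QuotientGroup.mk (Units.mk0 b hb)) = QuotientGroup.mk x :=
    (squareClass_eq_iff.2 ⟨Units.mk0 z hz, by ext; exact hbz.symm⟩).symm
  exact ⟨_, mem_selmerTwo_of_baseChange hS (hbx ▸ hX), hbx⟩

lemma IsSqrtExtension.exists_squareClass_baseChange_eq_one {k K : Type*} [Field k] [Field K]
    [Algebra k K] {θ : K} {d : k} (hθ : IsSqrtExtension θ d) :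
    ∃ X : SquareClasses kˣ, X ≠ 1 ∧ squareClassBaseChange k K X = 1 := by
  have hd : d ≠ 0 := fun hd => hθ.not_isSquare (hd ▸ IsSquare.zero)
  have hθ0 : θ ≠ 0 := ne_zero_pow two_ne_zero (hθ.sq_eq ▸ (map_ne_zero _).2 hd)
  refine ⟨QuotientGroup.mk (Units.mk0 d hd), fun h => hθ.not_isSquare ?_,
    (QuotientGroup.eq_one_iff _).2 ⟨Units.mk0 θ hθ0, by ext; exact hθ.sq_eq⟩⟩
  obtain ⟨z, hz⟩ := (QuotientGroup.eq_one_iff _).1 h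
  exact ⟨z, (congrArg Units.val hz).symm.trans (sq (z : k))⟩

lemma two_mul_card_ker_squareClassNorm_le {θ : K} {d : k} (hθ : IsSqrtExtension θ d)
    {S : Set (HeightOneSpectrum (𝓞 k))} [Finite (selmerTwo (𝓞 k) k S)]
    (hS : ∀ v ∉ S, IsUnramifiedAbove k K v) :
    2 * Nat.card ((squareClassNorm k K).ker ⊓ selmerTwo (𝓞 K) K ∅ : Subgroup _) ≤
      Nat.card (selmerTwo (𝓞 k) k S) := by
  set T := selmerTwo (𝓞 k) k S
  set j := squareClassBaseChange k K
  have : Finite (T.map j) := (T : Set (SquareClasses kˣ)).toFinite.image j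
  have : Finite (j.ker ⊓ T : Subgroup _) :=
    (T : Set (SquareClasses kˣ)).toFinite.subset Set.inter_subset_right
  have hker : 2 ≤ Nat.card (j.ker ⊓ T : Subgroup _) := by
    obtain ⟨X, hX, hjX⟩ := hθ.exists_squareClass_baseChange_eq_one
    refine (Subgroup.one_lt_card_iff_ne_bot _).2 (Subgroup.ne_bot_iff_exists_ne_one.2
      ⟨⟨X, hjX, mem_selmerTwo_of_baseChange hS (hjX ▸ one_mem _)⟩, ?_⟩)
    exact fun h => hX (congrArg Subtype.val h)
  rw [← card_map_mul_card_inf_ker T j, mul_comm]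
  exact Nat.mul_le_mul
    (Subgroup.card_le_of_le (ker_squareClassNorm_inf_selmerTwo_le hθ hS)) hker

theorem ambiguous_class_bound [IsTotallyReal K] {θ : K} {d : k} (hθ : IsSqrtExtension θ d)
    (hcl : twoTorsion (ClassGroup (𝓞 k)) = ⊥) {S : Set (HeightOneSpectrum (𝓞 k))}
    (hSfin : S.Finite) (hS : ∀ v ∉ S, IsUnramifiedAbove k K v) {U : Subgroup (𝓞 k)ˣ}
    (hU : ∀ u : (𝓞 k)ˣ, (∃ a : K, Algebra.norm k a = (u : 𝓞 k)) → u ∈ U) :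
    2 * U.index * Nat.card (twoTorsion (ClassGroup (𝓞 K))) ≤ 2 ^ S.ncard := by
  have : IsTotallyReal k := IsTotallyReal.of_algebra k K
  set e := Nat.card (SquareClasses (𝓞 k)ˣ) with he
  have hepos : 0 < e := Nat.card_pos
  have hunits : Nat.card (SquareClasses (𝓞 K)ˣ) = e * e := by
    rw [he, card_squareClasses_units, card_squareClasses_units,
      ← Module.finrank_mul_finrank ℚ k K, hθ.finrank_eq_two, pow_mul, sq]
  have hsel : Nat.card (selmerTwo (𝓞 k) k ∅) = e := by
    rw [card_selmerTwo_empty, hcl, Subgroup.card_bot, one_mul]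
  have : Finite (selmerTwo (𝓞 k) k ∅) := Nat.finite_of_card_ne_zero (hsel.trans_ne hepos.ne')
  have : Finite (selmerTwo (𝓞 k) k S) := finite_selmerTwo _ _ hSfin
  have himage := card_map_squareClassNorm_mul_index_le hθ.finrank_eq_two hcl hU
  have hkernel := (two_mul_card_ker_squareClassNorm_le hθ hS).trans
    (card_selmerTwo_le (𝓞 k) k hSfin)
  have hcard := card_selmerTwo_empty (𝓞 K) K
  rw [← card_map_mul_card_inf_ker _ (squareClassNorm k K), hunits] at hcard
  rw [hsel] at hkernel
  refine Nat.le_of_mul_le_mul_right ?_ (Nat.mul_pos hepos hepos)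
  calc _ = 2 * U.index * (Nat.card (twoTorsion (ClassGroup (𝓞 K))) * (e * e)) := by ring
    _ = _ * U.index * (2 * Nat.card ((squareClassNorm k K).ker ⊓ selmerTwo (𝓞 K) K ∅ :
        Subgroup _)) := by rw [← hcard]; ring
    _ ≤ e * (2 ^ S.ncard * e) := Nat.mul_le_mul himage hkernel
    _ = 2 ^ S.ncard * (e * e) := by ring

end AmbiguousClasses

section Ramification

open IsDedekindDomain Polynomial

lemma minpoly_eq_of_quadratic {A B : Type*} [CommRing A] [IsDomain A] [IsIntegrallyClosed A]
    [CommRing B] [IsDomain B] [Algebra A B] [Module.IsTorsionFree A B] {x : B} {t n : A}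
    (hx : x ^ 2 - algebraMap A B t * x + algebraMap A B n = 0) (hxA : x ∉ (algebraMap A B).range) :
    minpoly A x = X ^ 2 + (C (-t) * X + C n) := by
  have hlow : (C (-t) * X + C n).degree < ((2 : ℕ) : WithBot ℕ) :=
    degree_linear_le.trans_lt (by norm_num)
  have hmonic : (X ^ 2 + (C (-t) * X + C n)).Monic := monic_X_pow_add hlow
  have hroot : aeval x (X ^ 2 + (C (-t) * X + C n)) = 0 := by
    simp only [map_add, map_mul, map_pow, aeval_X, aeval_C, map_neg]
    linear_combination hx
  have hint : IsIntegral A x := ⟨_, hmonic, hroot⟩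
  refine (eq_of_monic_of_dvd_of_natDegree_le (minpoly.monic hint) hmonic
    (minpoly.isIntegrallyClosed_dvd hint hroot) ?_).symm
  rw [natDegree_eq_of_degree_eq_some
    ((degree_add_eq_left_of_degree_lt (by rwa [degree_X_pow])).trans (degree_X_pow 2))]
  exact (minpoly.two_le_natDegree_iff hint).2 hxA

lemma exists_integer_sq_eq {K : Type*} [Field K] {a : K} {d : ℕ} (ha : a ^ 2 = d) :
    ∃ a' : 𝓞 K, (a' : K) = a ∧ a' ^ 2 = d := by
  obtain ⟨a', rfl⟩ : ∃ a' : 𝓞 K, (a' : K) = a :=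
    ⟨⟨a, .of_pow two_pos (ha ▸ isIntegral_natCast d)⟩, rfl⟩
  exact ⟨a', rfl, RingOfIntegers.ext (by simpa using ha)⟩

lemma exists_integer_half_one_add {K : Type*} [Field K] [CharZero K] {b : K} {n : ℕ}
    (hb : b ^ 2 = (4 * n + 1 : ℕ)) :
    ∃ θ : 𝓞 K, 2 * (θ : K) = 1 + b ∧ θ ^ 2 - θ - n = 0 := by
  have hroot : ((1 + b) / 2) ^ 2 - (1 + b) / 2 - n = 0 := by
    push_cast at hb
    linear_combination hb / 4
  have hint : IsIntegral ℤ ((1 + b) / 2) := by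
    refine ⟨X ^ 2 + (C (-1) * X + C (-(n : ℤ))), monic_X_pow_add ?_, ?_⟩
    · exact degree_linear_le.trans_lt (by norm_num)
    · simp only [eval₂_add, eval₂_mul, eval₂_pow, eval₂_X, eval₂_C]
      simp only [eq_intCast]
      push_cast
      linear_combination hroot
  obtain ⟨θ, hθ⟩ : ∃ θ : 𝓞 K, (θ : K) = (1 + b) / 2 := ⟨⟨_, hint⟩, rfl⟩
  exact ⟨θ, by rw [hθ, mul_div_cancel₀ _ two_ne_zero],
    RingOfIntegers.ext (by simpa [hθ] using hroot)⟩

variable {k K : Type*} [Field k] [Field K] [NumberField k] [NumberField K] [Algebra k K]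

lemma ramificationIdx'_eq_one_of_aeval_derivative_notMem {θ : 𝓞 K}
    (hθ : Algebra.adjoin k {(θ : K)} = ⊤) {v : HeightOneSpectrum (𝓞 k)} {P : Ideal (𝓞 K)}
    [P.LiesOver v.asIdeal] (hP : aeval θ (derivative (minpoly (𝓞 k) θ)) ∉ P) :
    v.asIdeal.ramificationIdx' P = 1 := by
  by_contra he
  rw [← ne_eq, Ideal.ramificationIdx'_ne_one_iff
    (Ideal.map_le_iff_le_comap.2 (P.over_def v.asIdeal).le)] at he
  have := v.isMaximal
  have hdvd := pow_sub_one_dvd_differentIdeal (𝓞 k) P 2 v.ne_bot (Ideal.dvd_iff_le.2 he)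
  rw [Nat.add_one_sub_one, pow_one, Ideal.dvd_iff_le] at hdvd
  exact hP (hdvd (aeval_derivative_mem_differentIdeal (𝓞 k) k K θ hθ))

lemma isUnramifiedAbove_of_disc_notMem (h2 : Module.finrank k K = 2) {θ : 𝓞 K} {t n : 𝓞 k}
    (hθ : θ ^ 2 - algebraMap (𝓞 k) (𝓞 K) t * θ + algebraMap (𝓞 k) (𝓞 K) n = 0)
    (hθk : (θ : K) ∉ (algebraMap k K).range) {v : HeightOneSpectrum (𝓞 k)}
    (hv : t ^ 2 - 4 * n ∉ v.asIdeal) : IsUnramifiedAbove k K v := by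
  obtain ⟨⟨P, hP, hPv⟩⟩ := v.asIdeal.nonempty_primesOver (S := 𝓞 K)
  refine ⟨⟨P, hP, Ideal.ne_bot_of_liesOver_of_ne_bot v.ne_bot P⟩, hPv, ?_⟩
  have hadjoin : Algebra.adjoin k {(θ : K)} = ⊤ := by
    have := Subalgebra.isSimpleOrder_of_finrank h2
    refine (eq_bot_or_eq_top _).resolve_left fun hbot => hθk ?_
    exact Algebra.mem_bot.1 (hbot ▸ Algebra.self_mem_adjoin_singleton k (θ : K))
  refine ramificationIdx'_eq_one_of_aeval_derivative_notMem hadjoin fun hmem => hv ?_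
  have hθA : θ ∉ (algebraMap (𝓞 k) (𝓞 K)).range := fun ⟨x, hx⟩ =>
    hθk ⟨x, congrArg (algebraMap (𝓞 K) K) hx⟩
  have hdisc : algebraMap (𝓞 k) (𝓞 K) (t ^ 2 - 4 * n) =
      (2 * θ - algebraMap (𝓞 k) (𝓞 K) t) ^ 2 := by
    simp only [map_sub, map_mul, map_pow, map_ofNat]
    linear_combination -4 * hθ
  have hderiv : aeval θ (derivative (minpoly (𝓞 k) θ)) =
      2 * θ - algebraMap (𝓞 k) (𝓞 K) t := by
    rw [minpoly_eq_of_quadratic hθ hθA]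
    simpa [← sub_eq_add_neg] using .inl one_add_one_eq_two
  rw [hderiv] at hmem
  rw [hPv.over, Ideal.under, Ideal.mem_comap, hdisc]
  exact P.pow_mem_of_mem hmem 2 two_pos

namespace IsSqrtExtension

lemma notMem_range {k K : Type*} [Field k] [Field K] [Algebra k K] {θ : K} {d : k}
    (h : IsSqrtExtension θ d) : θ ∉ (algebraMap k K).range := by
  rintro ⟨x, rfl⟩
  exact h.not_isSquare ⟨x, (algebraMap k K).injective (by rw [← h.sq_eq, ← sq, map_pow])⟩

lemma isUnramifiedAbove {b : K} {d : ℕ} (h : IsSqrtExtension b (d : k))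
    {v : HeightOneSpectrum (𝓞 k)} (h2 : 2 ∉ v.asIdeal) (hd : (d : 𝓞 k) ∉ v.asIdeal) :
    IsUnramifiedAbove k K v := by
  obtain ⟨θ, rfl, hθ⟩ := exists_integer_sq_eq (h.sq_eq.trans (map_natCast _ d))
  refine isUnramifiedAbove_of_disc_notMem h.finrank_eq_two (t := 0) (n := -d)
    (by simp [hθ]) h.notMem_range fun hv => ?_
  rw [show (0 : 𝓞 k) ^ 2 - 4 * -d = 2 * (2 * d) by ring] at hv
  have := v.isPrime
  simp only [Ideal.IsPrime.mul_mem_iff_mem_or_mem, h2, hd, or_self] at hv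

lemma isUnramifiedAbove_of_mod_four_eq_one {b : K} {d : ℕ} (h : IsSqrtExtension b (d : k))
    (hd4 : d % 4 = 1) {v : HeightOneSpectrum (𝓞 k)} (hd : (d : 𝓞 k) ∉ v.asIdeal) :
    IsUnramifiedAbove k K v := by
  obtain ⟨n, rfl⟩ : ∃ n, d = 4 * n + 1 := ⟨d / 4, by omega⟩
  obtain ⟨θ, hθb, hθ⟩ := exists_integer_half_one_add (h.sq_eq.trans (map_natCast _ _))
  refine isUnramifiedAbove_of_disc_notMem h.finrank_eq_two (t := 1) (n := -n)
    (by simpa [← sub_eq_add_neg] using hθ) ?_ fun hv => hd ?_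
  · rintro ⟨x, hx⟩
    refine h.notMem_range ⟨2 * x - 1, ?_⟩
    rw [map_sub, map_mul, hx, map_ofNat, hθb, map_one, add_sub_cancel_left]
  · convert hv using 1
    push_cast
    ring

end IsSqrtExtension

end Ramification

section PrimesAbove

open IsDedekindDomain

variable {K : Type*} [Field K] [NumberField K]

variable (K) in
/-- The set of primes of `K` above the rational prime `ℓ`. -/
def primesAbove (ℓ : ℕ) : Set (HeightOneSpectrum (𝓞 K)) :=
  {v | (ℓ : 𝓞 K) ∈ v.asIdeal}

lemma finite_primesAbove {ℓ : ℕ} (hℓ : ℓ ≠ 0) : (primesAbove K ℓ).Finite :=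
  (Ideal.finite_factors (I := Ideal.span {(ℓ : 𝓞 K)}) (by simpa using hℓ)).subset
    fun _ hv => Ideal.dvd_span_singleton.2 hv

lemma ncard_primesAbove_mul_le {ℓ : ℕ} (hℓ : ℓ.Prime) {e f : ℕ}
    (he : ∀ v ∈ primesAbove K ℓ, v.asIdeal ^ e ∣ Ideal.span {(ℓ : 𝓞 K)})
    (hf : ∀ v ∈ primesAbove K ℓ, ℓ ^ f ≤ Ideal.absNorm v.asIdeal) :
    (primesAbove K ℓ).ncard * (f * e) ≤ Module.finrank ℚ K := by
  classical
  have hfin := finite_primesAbove (K := K) hℓ.ne_zero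
  have hprod : ∏ v ∈ hfin.toFinset, v.asIdeal ^ e ∣ Ideal.span {(ℓ : 𝓞 K)} := by
    refine Finset.prod_dvd_of_coprime (fun v _ w _ hvw => IsCoprime.pow ?_)
      fun v hv => he v (hfin.mem_toFinset.1 hv)
    exact Ideal.isCoprime_iff_sup_eq.2
      (v.isMaximal.coprime_of_ne w.isMaximal fun h => hvw (HeightOneSpectrum.ext h))
  have hnorm := map_dvd (Ideal.absNorm (S := 𝓞 K)) hprod
  rw [Ideal.absNorm_span_natCast, RingOfIntegers.rank, map_prod] at hnorm
  refine (Nat.pow_le_pow_iff_right hℓ.one_lt).1 (le_trans ?_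
    (Nat.le_of_dvd (pow_pos hℓ.pos _) hnorm))
  rw [mul_comm, pow_mul, Set.ncard_eq_toFinset_card _ hfin]
  refine Finset.pow_card_le_prod _ _ _ fun v hv => ?_
  rw [map_pow, pow_mul]
  exact Nat.pow_le_pow_left (hf v (hfin.mem_toFinset.1 hv)) e

lemma exists_absNorm_eq_pow {ℓ : ℕ} (hℓ : ℓ.Prime) {v : HeightOneSpectrum (𝓞 K)}
    (hv : v ∈ primesAbove K ℓ) : ∃ j ≠ 0, Ideal.absNorm v.asIdeal = ℓ ^ j := by
  have hdvd := Ideal.absNorm_dvd_absNorm_of_le ((Ideal.span_singleton_le_iff_mem _).2 hv)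
  rw [Ideal.absNorm_span_natCast, Nat.dvd_prime_pow hℓ] at hdvd
  obtain ⟨j, -, hj⟩ := hdvd
  refine ⟨j, fun h => v.isPrime.ne_top ?_, hj⟩
  rwa [h, pow_zero, Ideal.absNorm_eq_one_iff] at hj

lemma le_absNorm_of_mem_primesAbove {ℓ : ℕ} (hℓ : ℓ.Prime) {v : HeightOneSpectrum (𝓞 K)}
    (hv : v ∈ primesAbove K ℓ) : ℓ ^ 1 ≤ Ideal.absNorm v.asIdeal := by
  obtain ⟨j, hj0, hj⟩ := exists_absNorm_eq_pow hℓ hv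
  exact hj ▸ Nat.pow_le_pow_right hℓ.pos (Nat.one_le_iff_ne_zero.2 hj0)

lemma sq_le_absNorm_of_mem_primesAbove {ℓ : ℕ} (hℓ : ℓ.Prime)
    (hres : IsEmpty (𝓞 K →+* ZMod ℓ)) {v : HeightOneSpectrum (𝓞 K)}
    (hv : v ∈ primesAbove K ℓ) : ℓ ^ 2 ≤ Ideal.absNorm v.asIdeal := by
  obtain ⟨j, hj0, hj⟩ := exists_absNorm_eq_pow hℓ hv
  have hj1 : j ≠ 1 := by
    rintro rfl
    have hcard : Nat.card (𝓞 K ⧸ v.asIdeal) = ℓ := hj.trans (pow_one ℓ)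
    have : Finite (𝓞 K ⧸ v.asIdeal) := Nat.finite_of_card_ne_zero (hcard ▸ hℓ.ne_zero)
    have := Fintype.ofFinite (𝓞 K ⧸ v.asIdeal)
    rw [Nat.card_eq_fintype_card] at hcard
    exact hres.false
      ((ZMod.ringEquivOfPrime _ hℓ hcard).symm.toRingHom.comp (Ideal.Quotient.mk _))
  exact hj ▸ Nat.pow_le_pow_right hℓ.pos (by omega)

lemma ncard_primesAbove_le {ℓ : ℕ} (hℓ : ℓ.Prime) :
    (primesAbove K ℓ).ncard ≤ Module.finrank ℚ K := by
  simpa using ncard_primesAbove_mul_le hℓ (e := 1)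
    (fun v hv => (pow_one v.asIdeal).symm ▸ Ideal.dvd_span_singleton.2 hv)
    fun _ => le_absNorm_of_mem_primesAbove hℓ

lemma ncard_primesAbove_mul_two_le {ℓ : ℕ} (hℓ : ℓ.Prime) (hres : IsEmpty (𝓞 K →+* ZMod ℓ)) :
    (primesAbove K ℓ).ncard * 2 ≤ Module.finrank ℚ K := by
  simpa using ncard_primesAbove_mul_le hℓ (e := 1)
    (fun v hv => (pow_one v.asIdeal).symm ▸ Ideal.dvd_span_singleton.2 hv)
    fun _ => sq_le_absNorm_of_mem_primesAbove hℓ hres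

lemma sq_dvd_span_of_sq_eq {ℓ : ℕ} {a : 𝓞 K} (ha : a ^ 2 = ℓ) {v : HeightOneSpectrum (𝓞 K)}
    (hv : v ∈ primesAbove K ℓ) : v.asIdeal ^ 2 ∣ Ideal.span {(ℓ : 𝓞 K)} := by
  rw [← ha, ← Ideal.span_singleton_pow]
  exact pow_dvd_pow_of_dvd (Ideal.dvd_span_singleton.2
    (v.isPrime.mem_of_pow_mem 2 (ha ▸ hv))) 2

lemma ncard_primesAbove_mul_two_le_of_sqrt {ℓ : ℕ} (hℓ : ℓ.Prime) {a : 𝓞 K} (ha : a ^ 2 = ℓ) :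
    (primesAbove K ℓ).ncard * 2 ≤ Module.finrank ℚ K := by
  simpa using ncard_primesAbove_mul_le hℓ (fun _ => sq_dvd_span_of_sq_eq ha)
    fun _ => le_absNorm_of_mem_primesAbove hℓ

lemma ncard_primesAbove_mul_four_le_of_sqrt {ℓ : ℕ} (hℓ : ℓ.Prime) {a : 𝓞 K} (ha : a ^ 2 = ℓ)
    (hres : IsEmpty (𝓞 K →+* ZMod ℓ)) : (primesAbove K ℓ).ncard * 4 ≤ Module.finrank ℚ K := by
  simpa using ncard_primesAbove_mul_le hℓ (fun _ => sq_dvd_span_of_sq_eq ha)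
    fun _ => sq_le_absNorm_of_mem_primesAbove hℓ hres

lemma isEmpty_ringHom_of_sq_eq {R S : Type*} [Semiring R] [Semiring S] {a : R} {d : ℕ}
    (ha : a ^ 2 = d) (hd : ¬ IsSquare (d : S)) : IsEmpty (R →+* S) :=
  ⟨fun f => hd ⟨f a, by rw [← map_mul, ← sq, ha, map_natCast]⟩⟩

lemma not_isSquare_two_zmod {ℓ : ℕ} [Fact ℓ.Prime] (h : ℓ % 8 = 3 ∨ ℓ % 8 = 5) :
    ¬ IsSquare (2 : ZMod ℓ) := by
  rw [ZMod.exists_sq_eq_two_iff (by omega)]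
  omega

end PrimesAbove

section PadicSquares

open Polynomial

variable {p : ℕ} [Fact p.Prime]

lemma padicInt_toZMod_eq_zero_iff {x : ℤ_[p]} : PadicInt.toZMod x = 0 ↔ ‖x‖ < 1 := by
  rw [← RingHom.mem_ker, PadicInt.ker_toZMod, IsLocalRing.mem_maximalIdeal, PadicInt.mem_nonunits]

lemma norm_eq_one_of_toZMod_ne_zero {x : ℤ_[p]} (hx : PadicInt.toZMod x ≠ 0) : ‖x‖ = 1 :=
  (PadicInt.norm_le_one x).antisymm (not_lt.1 (mt padicInt_toZMod_eq_zero_iff.2 hx))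

lemma isSquare_of_isSquare_toZMod (hp2 : p ≠ 2) {u : ℤ_[p]} (hu : PadicInt.toZMod u ≠ 0)
    (h : IsSquare (PadicInt.toZMod u)) : IsSquare u := by
  obtain ⟨b, hb⟩ := h
  obtain ⟨a, rfl⟩ := ZMod.ringHom_surjective PadicInt.toZMod b
  have ha : ‖a‖ = 1 := norm_eq_one_of_toZMod_ne_zero (left_ne_zero_of_mul (hb ▸ hu))
  have h2 : ‖((2 : ℕ) : ℤ_[p])‖ = 1 :=
    PadicInt.norm_natCast_eq_one_iff.2 ((Nat.coprime_primes Fact.out Nat.prime_two).2 hp2)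
  have hlt : ‖a ^ 2 - u‖ < 1 := by
    rw [← padicInt_toZMod_eq_zero_iff, map_sub, map_pow, hb, sq, sub_self]
  obtain ⟨z, hz, -⟩ := hensels_lemma (F := X ^ 2 - C u) (a := a)
    (by simpa [ha, show ‖(1 : ℤ_[p]) + 1‖ = 1 by rw [← h2]; norm_num] using hlt)
  exact ⟨z, by simpa [sub_eq_zero, sq, eq_comm] using hz⟩

lemma isSquare_intCast_padic (hp2 : p ≠ 2) {u : ℤ} (hu : (u : ZMod p) ≠ 0)
    (h : IsSquare (u : ZMod p)) : IsSquare (u : ℚ_[p]) := by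
  rw [← map_intCast PadicInt.toZMod] at hu h
  simpa using (isSquare_of_isSquare_toZMod hp2 hu h).map PadicInt.Coe.ringHom

lemma exists_sub_eq_mul_sq (hp2 : p ≠ 2) {a b : ℚ_[p]} (h : ‖b‖ < ‖a‖) :
    ∃ z, a - b = a * z ^ 2 := by
  have ha : a ≠ 0 := norm_pos_iff.1 ((norm_nonneg b).trans_lt h)
  have hlt : ‖b / a‖ < 1 := by rwa [norm_div, div_lt_one (norm_pos_iff.2 ha)]
  obtain ⟨ε, hε⟩ : ∃ ε : ℤ_[p], (ε : ℚ_[p]) = b / a := ⟨⟨b / a, hlt.le⟩, rfl⟩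
  have hone : PadicInt.toZMod (1 - ε) = 1 := by
    rw [map_sub, map_one, padicInt_toZMod_eq_zero_iff.2 (by rwa [PadicInt.norm_def, hε]), sub_zero]
  obtain ⟨z, hz⟩ := isSquare_of_isSquare_toZMod hp2 (hone.trans_ne one_ne_zero)
    (hone ▸ IsSquare.one)
  have hz' : 1 - b / a = (z : ℚ_[p]) * z := by
    rw [← hε]
    exact congrArg ((↑) : ℤ_[p] → ℚ_[p]) hz
  exact ⟨z, by rw [sq, ← hz']; field_simp⟩

lemma isSquare_padic_two_of_mod_eight_eq_one {n : ℕ} (hn : n % 8 = 1) :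
    IsSquare (n : ℚ_[2]) := by
  obtain ⟨c, rfl⟩ : ∃ c, n = 8 * c + 1 := ⟨n / 8, by omega⟩
  have hlt : ‖(2 : ℤ_[2]) * c‖ < 1 := by
    rw [PadicInt.norm_lt_one_iff_dvd]
    exact_mod_cast dvd_mul_right (2 : ℤ_[2]) c
  -- `x = 2z + 1` turns `x² = 8c + 1` into `z² + z = 2c`, to which Hensel's lemma applies.
  obtain ⟨z, hz, -⟩ := hensels_lemma (F := X ^ 2 + X - 2 * C (c : ℤ_[2])) (a := 0)
    (by simpa [map_ofNat] using hlt)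
  have hz' : (z : ℚ_[2]) ^ 2 + z - 2 * c = 0 := by
    simpa using! congrArg ((↑) : ℤ_[2] → ℚ_[2]) hz
  refine ⟨2 * z + 1, ?_⟩
  push_cast
  linear_combination -4 * hz'

lemma exists_primitive_triple (x y : ℚ_[p]) :
    ∃ (t : ℚ_[p]) (a b c : ℤ_[p]), a = t * x ∧ b = t * y ∧ c = t ∧ (a = 1 ∨ b = 1 ∨ c = 1) := by
  classical
  obtain ⟨m, hm, hmax⟩ := Finset.exists_max_image {x, y, 1} norm ⟨x, by simp⟩
  have hm0 : 0 < ‖m‖ := (zero_lt_one.trans_eq norm_one.symm).trans_le (hmax 1 (by simp))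
  have hle : ∀ u ∈ ({x, y, 1} : Finset ℚ_[p]), ‖m⁻¹ * u‖ ≤ 1 := fun u hu => by
    rw [norm_mul, norm_inv]
    exact inv_mul_le_one_of_le₀ (hmax u hu) hm0.le
  refine ⟨m⁻¹, ⟨m⁻¹ * x, hle x (by simp)⟩, ⟨m⁻¹ * y, hle y (by simp)⟩,
    ⟨m⁻¹ * 1, hle 1 (by simp)⟩, rfl, rfl, mul_one _, ?_⟩
  have hinv : m⁻¹ * m = 1 := inv_mul_cancel₀ (norm_pos_iff.1 hm0)
  simp only [Finset.mem_insert, Finset.mem_singleton] at hm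
  rcases hm with rfl | rfl | rfl
  · exact .inl (PadicInt.ext hinv)
  · exact .inr (.inl (PadicInt.ext hinv))
  · exact .inr (.inr (PadicInt.ext hinv))

lemma exists_primitive_of_sq_sub_mul_sq_eq_neg_one {d : ℕ} {x y : ℚ_[p]}
    (h : x ^ 2 - d * y ^ 2 = -1) :
    ∃ a b c : ℤ_[p], a ^ 2 - d * b ^ 2 = -c ^ 2 ∧ (a = 1 ∨ b = 1 ∨ c = 1) := by
  obtain ⟨t, a, b, c, ha, hb, hc, hone⟩ := exists_primitive_triple x y
  refine ⟨a, b, c, PadicInt.ext ?_, hone⟩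
  push_cast
  rw [ha, hb, hc]
  linear_combination t ^ 2 * h

lemma padic_two_sq_sub_mul_sq_ne_neg_one {d : ℕ} (hd : d % 4 = 3) (x y : ℚ_[2]) :
    x ^ 2 - d * y ^ 2 ≠ -1 := by
  intro h
  obtain ⟨a, b, c, habc, hone⟩ := exists_primitive_of_sq_sub_mul_sq_eq_neg_one h
  have hd4 : (d : ZMod (2 ^ 2)) = 3 := (ZMod.natCast_eq_natCast_iff d 3 4).2 hd
  have hmod : ∀ a b c : ZMod (2 ^ 2), a ^ 2 - 3 * b ^ 2 = -c ^ 2 → a ≠ 1 ∧ b ≠ 1 ∧ c ≠ 1 := by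
    decide
  have hred := congrArg (PadicInt.toZModPow (p := 2) 2) habc
  simp only [map_sub, map_mul, map_pow, map_neg, map_natCast, hd4] at hred
  obtain ⟨ha, hb, hc⟩ := hmod _ _ _ hred
  rcases hone with rfl | rfl | rfl
  · exact ha (map_one _)
  · exact hb (map_one _)
  · exact hc (map_one _)

lemma zmod_eq_zero_of_sq_add_sq_eq_zero (hp4 : p % 4 = 3) {a c : ZMod p}
    (h : a ^ 2 + c ^ 2 = 0) : a = 0 ∧ c = 0 := by
  have hc : c = 0 := by
    by_contra hc
    have hsq : IsSquare (-1 : ZMod p) := ⟨a / c, by field_simp; linear_combination -h⟩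
    rw [ZMod.exists_sq_eq_neg_one_iff] at hsq
    exact hsq hp4
  exact ⟨by simpa [hc] using h, hc⟩

lemma padic_sq_sub_mul_sq_ne_neg_one (hp4 : p % 4 = 3) {d : ℕ} (hd : ¬ p ∣ d) (x y : ℚ_[p]) :
    x ^ 2 - (p * d : ℕ) * y ^ 2 ≠ -1 := by
  intro h
  obtain ⟨a, b, c, habc, hone⟩ := exists_primitive_of_sq_sub_mul_sq_eq_neg_one h
  have hred := congrArg PadicInt.toZMod habc
  simp only [map_sub, map_mul, map_pow, map_neg, map_natCast, Nat.cast_mul, CharP.cast_eq_zero,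
    zero_mul, sub_zero, eq_neg_iff_add_eq_zero] at hred
  obtain ⟨ha, hc⟩ := zmod_eq_zero_of_sq_add_sq_eq_zero hp4 hred
  obtain ⟨a', rfl⟩ := (PadicInt.norm_lt_one_iff_dvd a).1 (padicInt_toZMod_eq_zero_iff.1 ha)
  obtain ⟨c', rfl⟩ := (PadicInt.norm_lt_one_iff_dvd c).1 (padicInt_toZMod_eq_zero_iff.1 hc)
  have hdiv : p * (a' ^ 2 + c' ^ 2) = d * b ^ 2 := by
    refine mul_left_cancel₀ (Nat.cast_ne_zero.2 (Fact.out : p.Prime).ne_zero) ?_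
    push_cast at habc
    linear_combination habc
  have hred' := congrArg PadicInt.toZMod hdiv
  simp only [map_mul, map_pow, map_natCast, CharP.cast_eq_zero, zero_mul] at hred'
  have hd0 : (d : ZMod p) ≠ 0 := mt (ZMod.natCast_eq_zero_iff d p).1 hd
  have hb : PadicInt.toZMod b = 0 :=
    pow_eq_zero_iff two_ne_zero |>.1 ((mul_eq_zero.1 hred'.symm).resolve_left hd0)
  rcases hone with h1 | h1 | h1
  · exact one_ne_zero (ha.symm.trans (h1 ▸ map_one _)).symm
  · exact one_ne_zero (hb.symm.trans (h1 ▸ map_one _)).symm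
  · exact one_ne_zero (hc.symm.trans (h1 ▸ map_one _)).symm

lemma padic_prime_ne_zero : (p : ℚ_[p]) ≠ 0 :=
  Nat.cast_ne_zero.2 (Fact.out : p.Prime).ne_zero

lemma eq_zero_of_norm_sq_eq_norm_prime_mul_sq {x y : ℚ_[p]}
    (h : ‖x ^ 2‖ = ‖(p : ℚ_[p]) * y ^ 2‖) : x = 0 := by
  by_contra hx
  have hy : y ≠ 0 := by
    rintro rfl
    exact hx (by simpa using h)
  have hx2 := pow_ne_zero 2 hx
  have hy2 := pow_ne_zero 2 hy
  have hp1 : (1 : ℝ) < p := mod_cast (Fact.out : p.Prime).one_lt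
  rw [Padic.norm_eq_zpow_neg_valuation hx2,
    Padic.norm_eq_zpow_neg_valuation (mul_ne_zero padic_prime_ne_zero hy2)] at h
  have hval := zpow_right_injective₀ (zero_lt_one.trans hp1) hp1.ne' h
  simp only [Padic.valuation_pow, Padic.valuation_mul padic_prime_ne_zero hy2,
    Padic.valuation_p] at hval
  push_cast at hval
  omega

variable (p) in
/-- The subgroup of `ℚ_pˣ` generated by `p` and the squares. When `p ≡ 1 (mod 4)` and `u` is a
unit square in `ℚ_p`, it is the group of norms from `ℚ_p(√(pu))`. -/
noncomputable def primeSquareSubgroup : Subgroup ℚ_[p]ˣ :=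
  Subgroup.zpowers (Units.mk0 (p : ℚ_[p]) padic_prime_ne_zero) ⊔ (powMonoidHom 2).range

lemma mem_primeSquareSubgroup_of_eq {t : ℚ_[p]ˣ} (n : ℤ) {z : ℚ_[p]}
    (h : (t : ℚ_[p]) = (p : ℚ_[p]) ^ n * z ^ 2) : t ∈ primeSquareSubgroup p := by
  have hz : z ≠ 0 := by
    rintro rfl
    simp at h
  exact Subgroup.mem_sup.2 ⟨_, ⟨n, rfl⟩, _, ⟨Units.mk0 z hz, rfl⟩, Units.ext (by simp [h])⟩

lemma exists_eq_sq_or_of_mem_primeSquareSubgroup {t : ℚ_[p]ˣ} (h : t ∈ primeSquareSubgroup p) :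
    ∃ z : ℚ_[p], (t : ℚ_[p]) = z ^ 2 ∨ (t : ℚ_[p]) = p * z ^ 2 := by
  obtain ⟨_, ⟨n, rfl⟩, _, ⟨w, rfl⟩, rfl⟩ := Subgroup.mem_sup.1 h
  obtain ⟨m, rfl | rfl⟩ := n.even_or_odd'
  · exact ⟨p ^ m * w, .inl (by simp [zpow_mul, sq, mul_zpow]; ring)⟩
  · exact ⟨p ^ m * w, .inr (by simp [zpow_add₀ padic_prime_ne_zero, zpow_mul, sq, mul_zpow]; ring)⟩

lemma mem_primeSquareSubgroup_of_eq_sq_sub (hp4 : p % 4 = 1) {r : ℚ_[p]} (hr : IsSquare r)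
    {x y : ℚ_[p]} {t : ℚ_[p]ˣ} (ht : (t : ℚ_[p]) = x ^ 2 - p * r * y ^ 2) :
    t ∈ primeSquareSubgroup p := by
  have hp2 : p ≠ 2 := by omega
  obtain ⟨ρ, rfl⟩ := hr
  obtain ⟨i, hi⟩ : IsSquare (((-1 : ℤ) : ℚ_[p])) := isSquare_intCast_padic hp2 (by simp)
    (by simpa using ZMod.exists_sq_eq_neg_one_iff.2 (by omega))
  have ht' : (t : ℚ_[p]) = x ^ 2 - p * (ρ * y) ^ 2 := by rw [ht]; ring
  generalize ρ * y = w at ht'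
  rcases lt_trichotomy ‖x ^ 2‖ ‖(p : ℚ_[p]) * w ^ 2‖ with hlt | heq | hgt
  · obtain ⟨z, hz⟩ := exists_sub_eq_mul_sq hp2 hlt
    refine mem_primeSquareSubgroup_of_eq 1 (z := i * w * z) ?_
    push_cast at hi
    rw [zpow_one, ht']
    linear_combination -hz + p * w ^ 2 * z ^ 2 * hi
  · have hx := eq_zero_of_norm_sq_eq_norm_prime_mul_sq heq
    rw [hx, zero_pow two_ne_zero, norm_zero, eq_comm, norm_eq_zero] at heq
    exact absurd (by rw [ht', hx, heq]; simp) t.ne_zero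
  · obtain ⟨z, hz⟩ := exists_sub_eq_mul_sq hp2 hgt
    exact mem_primeSquareSubgroup_of_eq 0 (z := x * z) (by rw [ht', hz, zpow_zero]; ring)

lemma isSquare_zmod_of_mem_primeSquareSubgroup {m : ℤ} (hm : ¬ (p : ℤ) ∣ m) {t : ℚ_[p]ˣ}
    (ht : (t : ℚ_[p]) = m) (h : t ∈ primeSquareSubgroup p) : IsSquare (m : ZMod p) := by
  have hnorm : ‖(m : ℚ_[p])‖ = 1 :=
    (Padic.norm_int_le_one m).antisymm (not_lt.1 (mt Padic.norm_intCast_lt_one_iff.1 hm))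
  obtain ⟨z, hz | hz⟩ := exists_eq_sq_or_of_mem_primeSquareSubgroup h <;> rw [ht] at hz
  · have hz1 : ‖z‖ ≤ 1 := by
      rw [hz, norm_pow] at hnorm
      exact ((pow_eq_one_iff_of_nonneg (norm_nonneg z) two_ne_zero).1 hnorm).le
    obtain ⟨y, rfl⟩ : ∃ y : ℤ_[p], (y : ℚ_[p]) = z := ⟨⟨z, hz1⟩, rfl⟩
    have hy : (m : ℤ_[p]) = y * y := PadicInt.ext (by push_cast; rw [hz, sq])
    exact ⟨PadicInt.toZMod y, by rw [← map_mul, ← hy, map_intCast]⟩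
  · rw [hz, ← norm_one (α := ℚ_[p]), ← one_pow 2] at hnorm
    exact absurd (eq_zero_of_norm_sq_eq_norm_prime_mul_sq hnorm.symm) one_ne_zero

end PadicSquares

section GeneratedExtension

variable {k K : Type*} [Field k] [Field K] [Algebra k K]

lemma nonempty_algHom_of_sq_eq {F : Type*} [Field F] [Algebra k F] {S : Set K}
    (hS : IntermediateField.adjoin k S = ⊤)
    (h : ∀ x ∈ S, ∃ d : k, x ^ 2 = algebraMap k K d ∧ IsSquare (algebraMap k F d)) :
    Nonempty (K →ₐ[k] F) := by
  refine IntermediateField.nonempty_algHom_of_adjoin_splits (fun x hx => ?_) hS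
  obtain ⟨d, hxd, t, ht⟩ := h x hx
  have hmonic := Polynomial.monic_X_pow_sub_C d two_ne_zero
  have haeval : Polynomial.aeval x (Polynomial.X ^ 2 - Polynomial.C d) = 0 := by simp [hxd]
  have hfactor : (Polynomial.X ^ 2 - Polynomial.C d).map (algebraMap k F) =
      (Polynomial.X - Polynomial.C t) * (Polynomial.X - Polynomial.C (-t)) := by
    simp only [Polynomial.map_sub, Polynomial.map_pow, Polynomial.map_X, Polynomial.map_C, ht,
      map_mul, map_neg]
    ring
  refine ⟨⟨_, hmonic, haeval⟩, Polynomial.Splits.of_dvd ?_ (hmonic.map _).ne_zero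
    (Polynomial.map_dvd _ (minpoly.dvd k x haeval))⟩
  exact hfactor ▸ (Polynomial.Splits.X_sub_C _).mul (Polynomial.Splits.X_sub_C _)

lemma isSqrtExtension_gen {x : K} {d : k} (hx : x ^ 2 = algebraMap k K d) (hd : ¬ IsSquare d) :
    IsSqrtExtension (IntermediateField.AdjoinSimple.gen k x) d where
  finrank_eq_two := by
    have haeval : Polynomial.aeval x (Polynomial.X ^ 2 - Polynomial.C d) = 0 := by simp [hx]
    have hmonic := Polynomial.monic_X_pow_sub_C d two_ne_zero
    have hirr : Irreducible (Polynomial.X ^ 2 - Polynomial.C d) :=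
      X_pow_sub_C_irreducible_of_prime Nat.prime_two fun b hb => hd ⟨b, by rw [← hb, sq]⟩
    rw [IntermediateField.adjoin.finrank ⟨_, hmonic, haeval⟩,
      ← minpoly.eq_of_irreducible_of_monic hirr haeval hmonic, Polynomial.natDegree_X_pow_sub_C]
  sq_eq := Subtype.ext hx
  not_isSquare := hd

namespace IsSqrtExtension

variable {θ : K} {d : k}

lemma adjoin_eq_top (h : IsSqrtExtension θ d) : IntermediateField.adjoin k {θ} = ⊤ := by
  refine eq_top_iff.2 fun x _ => ?_
  obtain ⟨u, v, rfl⟩ := h.exists_eq_add_mul x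
  exact add_mem (IntermediateField.algebraMap_mem _ _) (mul_mem
    (IntermediateField.algebraMap_mem _ _) (IntermediateField.mem_adjoin_simple_self k θ))

lemma nonempty_algHom (h : IsSqrtExtension θ d) {F : Type*} [Field F] [Algebra k F]
    (hd : IsSquare (algebraMap k F d)) : Nonempty (K →ₐ[k] F) :=
  nonempty_algHom_of_sq_eq h.adjoin_eq_top (by rintro x rfl; exact ⟨d, h.sq_eq, hd⟩)

lemma not_isSquare_algebraMap [CharZero k] (h : IsSqrtExtension θ d) {e : k} (he : ¬ IsSquare e)
    (hde : ¬ IsSquare (d * e)) : ¬ IsSquare (algebraMap k K e) := by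
  rintro ⟨z, hz⟩
  obtain ⟨u, v, rfl⟩ := h.exists_eq_add_mul z
  have hlin : algebraMap k K (2 * u * v) * θ = algebraMap k K (e - u ^ 2 - d * v ^ 2) := by
    simp only [map_sub, map_mul, map_pow, map_ofNat, hz, ← h.sq_eq]
    ring
  have huv : 2 * u * v = 0 := by
    by_contra huv
    refine h.notMem_range ⟨(e - u ^ 2 - d * v ^ 2) / (2 * u * v), ?_⟩
    rw [map_div₀, ← hlin, mul_div_cancel_left₀ _ ((map_ne_zero _).2 huv)]
  have hsq : e = u ^ 2 + d * v ^ 2 := by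
    rw [huv, map_zero, zero_mul, eq_comm, map_eq_zero] at hlin
    linear_combination hlin
  obtain rfl | rfl : u = 0 ∨ v = 0 := by simpa using huv
  · exact hde ⟨d * v, by rw [hsq]; ring⟩
  · exact he ⟨u, by rw [hsq]; ring⟩

end IsSqrtExtension

lemma exists_norm_eq_sq_sub_mul_sq [FiniteDimensional k K] {y : K} {B : k}
    (hy : y ^ 2 = algebraMap k K B) (hB : ¬ IsSquare B) (z : K) :
    ∃ u v : k, Algebra.norm k z = u ^ 2 - B * v ^ 2 := by
  have h := isSqrtExtension_gen hy hB
  obtain ⟨u, v, huv⟩ := h.exists_eq_add_mul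
    (Algebra.norm (IntermediateField.adjoin k {y}) z)
  exact ⟨u, v, by rw [← Algebra.norm_norm (S := IntermediateField.adjoin k {y}), huv,
    h.norm_add_mul]⟩

lemma norm_ne_neg_one [FiniteDimensional k K] {F : Type*} [Field F] (f : k →+* F) {y : K} {d : ℕ}
    (hd0 : (d : F) ≠ 0) (hd : ∀ u v : F, u ^ 2 - d * v ^ 2 ≠ -1) (hy : y ^ 2 = d) (z : K) :
    Algebra.norm k z ≠ -1 := by
  intro hz
  have hnonsq : ¬ IsSquare (d : k) := by
    rintro ⟨t, ht⟩
    have hft : (d : F) = f t ^ 2 := by rw [← map_natCast f, ht, map_mul, sq]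
    have ht0 : f t ≠ 0 := by simpa [hft] using hd0
    exact hd 0 (f t)⁻¹ (by rw [hft]; field_simp; ring)
  obtain ⟨u, v, huv⟩ := exists_norm_eq_sq_sub_mul_sq (hy.trans (map_natCast _ d).symm) hnonsq z
  exact hd (f u) (f v) (by simpa [hz, eq_comm] using congrArg f huv)

end GeneratedExtension

section BiquadraticExtension

variable {k K : Type*} [Field k] [Field K] [Algebra k K]

/-- `K = k(√d, √e)` has degree four over `k`, with `a` and `b` as the chosen square roots of `d`
and `e`. -/
structure IsBiquadratic (a b : K) (d e : k) : Prop where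
  finrank_eq_four : Module.finrank k K = 4
  left_sq_eq : a ^ 2 = algebraMap k K d
  right_sq_eq : b ^ 2 = algebraMap k K e
  left_not_isSquare : ¬ IsSquare d
  right_not_isSquare : ¬ IsSquare e
  mul_not_isSquare : ¬ IsSquare (d * e)

namespace IsBiquadratic

variable {a b : K} {d e : k}

lemma symm (h : IsBiquadratic a b d e) : IsBiquadratic b a e d where
  finrank_eq_four := h.finrank_eq_four
  left_sq_eq := h.right_sq_eq
  right_sq_eq := h.left_sq_eq
  left_not_isSquare := h.right_not_isSquare
  right_not_isSquare := h.left_not_isSquare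
  mul_not_isSquare := mul_comm d e ▸ h.mul_not_isSquare

lemma left (h : IsBiquadratic a b d e) :
    IsSqrtExtension (IntermediateField.AdjoinSimple.gen k a) d :=
  isSqrtExtension_gen h.left_sq_eq h.left_not_isSquare

lemma right [CharZero k] (h : IsBiquadratic a b d e) :
    IsSqrtExtension b (algebraMap k (IntermediateField.adjoin k {a}) e) where
  finrank_eq_two := by
    have := Module.finrank_mul_finrank k (IntermediateField.adjoin k {a}) K
    rw [h.left.finrank_eq_two, h.finrank_eq_four] at this
    omega
  sq_eq := h.right_sq_eq
  not_isSquare := h.left.not_isSquare_algebraMap h.right_not_isSquare h.mul_not_isSquare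

lemma right_natCast [CharZero k] {n : ℕ} (h : IsBiquadratic a b d (n : k)) :
    IsSqrtExtension b (n : IntermediateField.adjoin k {a}) := by
  simpa only [map_natCast] using h.right

lemma not_isSquare_algebraMap [CharZero k] (h : IsBiquadratic a b d e) {f : k}
    (hf : ¬ IsSquare f) (hdf : ¬ IsSquare (d * f)) (hef : ¬ IsSquare (e * f))
    (hdef : ¬ IsSquare (d * (e * f))) : ¬ IsSquare (algebraMap k K f) := by
  rw [IsScalarTower.algebraMap_apply k (IntermediateField.adjoin k {a})]
  refine h.right.not_isSquare_algebraMap (h.left.not_isSquare_algebraMap hf hdf) ?_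
  rw [← map_mul]
  exact h.left.not_isSquare_algebraMap hef hdef

end IsBiquadratic

lemma isBiquadratic_adjoin [CharZero k] {a b : K} {d e : k} (ha : a ^ 2 = algebraMap k K d)
    (hb : b ^ 2 = algebraMap k K e) (hd : ¬ IsSquare d) (he : ¬ IsSquare e)
    (hde : ¬ IsSquare (d * e)) :
    IsBiquadratic (K := IntermediateField.adjoin k {a, b})
      ⟨a, IntermediateField.subset_adjoin _ _ (by simp)⟩
      ⟨b, IntermediateField.subset_adjoin _ _ (by simp)⟩ d e where
  finrank_eq_four := by
    have ha' := isSqrtExtension_gen ha hd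
    have hb' := isSqrtExtension_gen (k := IntermediateField.adjoin k {a}) hb
      (ha'.not_isSquare_algebraMap he hde)
    rw [show ({a, b} : Set K) = {a} ∪ {b} from rfl, ← IntermediateField.adjoin_adjoin_left]
    refine (Module.finrank_mul_finrank k (IntermediateField.adjoin k {a})
      (IntermediateField.adjoin (IntermediateField.adjoin k {a}) {b})).symm.trans ?_
    rw [ha'.finrank_eq_two, hb'.finrank_eq_two]
  left_sq_eq := Subtype.ext ha
  right_sq_eq := Subtype.ext hb
  left_not_isSquare := hd
  right_not_isSquare := he
  mul_not_isSquare := hde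

lemma not_isSquare_prime_mul {r m : ℕ} (hr : r.Prime) (hm : ¬ r ∣ m) :
    ¬ IsSquare ((r * m : ℕ) : ℚ) := by
  rw [Rat.isSquare_natCast_iff]
  rintro ⟨t, ht⟩
  obtain ⟨u, rfl⟩ : r ∣ t := hr.dvd_of_dvd_pow (n := 2) ⟨m, by rw [sq, ht]⟩
  exact hm ⟨u * u, Nat.eq_of_mul_eq_mul_left hr.pos (by rw [ht]; ring)⟩

lemma not_isSquare_two_rat : ¬ IsSquare (2 : ℚ) := by
  simpa using not_isSquare_prime_mul (m := 1) Nat.prime_two (by norm_num)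

end BiquadraticExtension

section NormUnits

variable {k K : Type*} [Field k] [Field K] [Algebra k K]

variable (k K) in
/-- The units of `𝓞 k` that are norms of elements of `K`, not necessarily integral ones. -/
noncomputable def normUnits : Subgroup (𝓞 k)ˣ :=
  (Units.map (Algebra.norm k : K →* k)).range.comap (Units.map (algebraMap (𝓞 k) k).toMonoidHom)

lemma mem_normUnits_iff [FiniteDimensional k K] {u : (𝓞 k)ˣ} :
    u ∈ normUnits k K ↔ ∃ x : K, Algebra.norm k x = ((u : 𝓞 k) : k) := by
  constructor
  · rintro ⟨x, hx⟩
    exact ⟨x, congrArg Units.val hx⟩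
  · rintro ⟨x, hx⟩
    have hx0 : x ≠ 0 := by
      rintro rfl
      exact (Units.map (algebraMap (𝓞 k) k).toMonoidHom u).ne_zero (by simpa using hx.symm)
    exact ⟨Units.mk0 x hx0, Units.ext hx⟩

lemma sq_mem_normUnits (h2 : Module.finrank k K = 2) (u : (𝓞 k)ˣ) : u ^ 2 ∈ normUnits k K := by
  have := Module.finite_of_finrank_pos (two_pos.trans_eq h2.symm)
  exact mem_normUnits_iff.2 ⟨algebraMap k K (u : 𝓞 k), by simp [Algebra.norm_algebraMap, h2]⟩

lemma finiteIndex_normUnits [NumberField k] (h2 : Module.finrank k K = 2) :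
    (normUnits k K).FiniteIndex := by
  have : Finite ((𝓞 k)ˣ ⧸ (powMonoidHom 2 : (𝓞 k)ˣ →* (𝓞 k)ˣ).range) :=
    finite_squareClasses_units k
  have : (powMonoidHom 2 : (𝓞 k)ˣ →* (𝓞 k)ˣ).range.FiniteIndex :=
    Subgroup.finiteIndex_of_finite_quotient
  refine Subgroup.finiteIndex_of_le (H := (powMonoidHom 2 : (𝓞 k)ˣ →* (𝓞 k)ˣ).range) ?_
  rintro _ ⟨u, rfl⟩
  exact sq_mem_normUnits h2 u

lemma notMem_normUnits_of_norm_eq_neg_one {E F : Type*} [Field E] [Field F] [Algebra E k]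
    [Algebra E K] [IsScalarTower E k K] [FiniteDimensional E K] (f : E →+* F) {y : K} {d : ℕ}
    (hd0 : (d : F) ≠ 0) (hd : ∀ u v : F, u ^ 2 - d * v ^ 2 ≠ -1) (hy : y ^ 2 = d) {u : (𝓞 k)ˣ}
    (hu : Algebra.norm E ((u : 𝓞 k) : k) = -1) : u ∉ normUnits k K := by
  rintro ⟨x, hx⟩
  refine norm_ne_neg_one f hd0 hd hy (x : K) ?_
  rw [← Algebra.norm_norm (S := k), ← hu]
  exact congrArg (Algebra.norm E) (congrArg Units.val hx)

lemma two_le_index_of_notMem {G : Type*} [Group G] {U : Subgroup G} [U.FiniteIndex] {x : G}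
    (hx : x ∉ U) : 2 ≤ U.index :=
  U.one_lt_index_of_ne_top fun h => hx (h ▸ Subgroup.mem_top x)

lemma four_le_card_of_ne_one {Q : Type*} [Group Q] [Finite Q] {x y : Q} (hx : x ≠ 1)
    (hy : y ≠ 1) (hxy : x * y ≠ 1) (hx2 : x * x = 1) : 4 ≤ Nat.card Q := by
  classical
  have := Fintype.ofFinite Q
  have hne : x ≠ y := fun h => hxy (h ▸ hx2)
  have hcard : ({1, x, y, x * y} : Finset Q).card = 4 := by
    rw [Finset.card_insert_of_notMem, Finset.card_insert_of_notMem, Finset.card_pair] <;>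
      simp [hx, hy, hne, hx.symm, hy.symm, hxy.symm]
  exact hcard ▸ Nat.card_eq_fintype_card (α := Q) ▸ Finset.card_le_univ _

lemma four_le_index_of_notMem {G : Type*} [CommGroup G] {U : Subgroup G} [U.FiniteIndex] {x y : G}
    (hx2 : x ^ 2 ∈ U) (hx : x ∉ U) (hy : y ∉ U) (hxy : x * y ∉ U) : 4 ≤ U.index := by
  have hmk (z : G) : (z : G ⧸ U) = 1 ↔ z ∈ U := QuotientGroup.eq_one_iff z
  exact four_le_card_of_ne_one ((hmk x).not.2 hx) ((hmk y).not.2 hy) ((hmk (x * y)).not.2 hxy)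
    ((hmk (x * x)).2 (sq x ▸ hx2))

end NormUnits

section OverSqrtTwo

open IsDedekindDomain

lemma mem_or_mem_of_natCast_mul_mem {R : Type*} [CommRing R] {v : HeightOneSpectrum R} {m n : ℕ}
    (h : ((m * n : ℕ) : R) ∈ v.asIdeal) : (m : R) ∈ v.asIdeal ∨ (n : R) ∈ v.asIdeal :=
  v.isPrime.mem_or_mem (Nat.cast_mul (α := R) m n ▸ h)

lemma exists_unit_eq_one_add_sqrt_two {k : Type*} [Field k] {a : k} (ha : a ^ 2 = 2) :
    ∃ ε : (𝓞 k)ˣ, ((ε : 𝓞 k) : k) = 1 + a := by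
  obtain ⟨a', rfl, ha'⟩ := exists_integer_sq_eq (a := a) (d := 2) (by exact_mod_cast ha)
  have hmul : (1 + a') * (a' - 1) = 1 := by
    push_cast at ha'
    linear_combination ha'
  exact ⟨⟨1 + a', a' - 1, hmul, mul_comm (a' - 1) _ ▸ hmul⟩, by simp⟩

namespace IsSqrtExtension

section

variable {k L : Type*} [Field k] [Field L] [Algebra k L] {a : L}

lemma sq_eq_two (hL : IsSqrtExtension a (2 : k)) : a ^ 2 = 2 := by
  rw [hL.sq_eq, map_ofNat]

lemma norm_one_add_sqrt_two (hL : IsSqrtExtension a (2 : k)) :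
    Algebra.norm k (1 + a) = -1 := by
  have := hL.norm_add_mul 1 1
  rw [map_one, one_mul] at this
  rw [this]
  ring

end

variable {L : Type*} [Field L] [NumberField L] {a : L}

lemma norm_neg_one_add_sqrt_two (hL : IsSqrtExtension a (2 : ℚ)) :
    Algebra.norm ℚ (-(1 + a)) = -1 := by
  rw [← neg_one_mul, map_mul, hL.norm_one_add_sqrt_two, ← map_one (algebraMap ℚ L), ← map_neg,
    Algebra.norm_algebraMap, hL.finrank_eq_two]
  norm_num

lemma twoTorsion_classGroup_eq_bot_of_sqrt_two [IsTotallyReal L]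
    (hL : IsSqrtExtension a (2 : ℚ)) : twoTorsion (ClassGroup (𝓞 L)) = ⊥ := by
  have hrat : twoTorsion (ClassGroup (𝓞 ℚ)) = ⊥ := by
    have : Subsingleton (ClassGroup (𝓞 ℚ)) :=
      Fintype.card_le_one_iff_subsingleton.1 Rat.classNumber_eq.le
    exact Subsingleton.elim _ _
  have hbound := ambiguous_class_bound hL hrat (finite_primesAbove two_ne_zero)
    (fun v hv => IsSqrtExtension.isUnramifiedAbove (d := 2) (by exact_mod_cast hL)
      (by exact_mod_cast hv) hv) (U := ⊤) (fun _ _ => trivial)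
  have hcard := ncard_primesAbove_le (K := ℚ) Nat.prime_two
  rw [Module.finrank_self] at hcard
  have hpow := Nat.pow_le_pow_right two_pos hcard
  rw [Subgroup.index_top] at hbound
  exact Subgroup.eq_bot_of_card_le _ (by omega)

lemma ncard_primesAbove_le_one_of_mod_eight (hL : IsSqrtExtension a (2 : ℚ)) {ℓ : ℕ}
    (hℓ : ℓ.Prime) (hℓ8 : ℓ % 8 = 3 ∨ ℓ % 8 = 5) : (primesAbove L ℓ).ncard ≤ 1 := by
  have : Fact ℓ.Prime := ⟨hℓ⟩
  obtain ⟨a', -, ha'⟩ := exists_integer_sq_eq (a := a) (d := 2)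
    (by exact_mod_cast hL.sq_eq_two)
  have := ncard_primesAbove_mul_two_le hℓ
    (isEmpty_ringHom_of_sq_eq ha' (by exact_mod_cast not_isSquare_two_zmod hℓ8))
  rw [hL.finrank_eq_two] at this
  omega

lemma ncard_primesAbove_two_le_one (hL : IsSqrtExtension a (2 : ℚ)) :
    (primesAbove L 2).ncard ≤ 1 := by
  obtain ⟨a', -, ha'⟩ := exists_integer_sq_eq (a := a) (d := 2)
    (by exact_mod_cast hL.sq_eq_two)
  have := ncard_primesAbove_mul_two_le_of_sqrt Nat.prime_two ha'
  rw [hL.finrank_eq_two] at this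
  omega

variable {K : Type*} [Field K] [NumberField K] [Algebra L K] {b : K} {r m : ℕ}

lemma notMem_normUnits_of_norm_rat_eq_neg_one (hr : r.Prime) (hr4 : r % 4 = 3) (hrm : ¬ r ∣ m)
    (hK : IsSqrtExtension b ((r * m : ℕ) : L)) {u : (𝓞 L)ˣ}
    (hu : Algebra.norm ℚ ((u : 𝓞 L) : L) = -1) : u ∉ normUnits L K := by
  have : Fact r.Prime := ⟨hr⟩
  have hm0 : m ≠ 0 := by rintro rfl; exact hrm (dvd_zero r)
  exact notMem_normUnits_of_norm_eq_neg_one (E := ℚ) (algebraMap ℚ ℚ_[r])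
    (Nat.cast_ne_zero.2 (mul_ne_zero hr.ne_zero hm0))
    (padic_sq_sub_mul_sq_ne_neg_one hr4 hrm) (hK.sq_eq.trans (map_natCast _ _)) hu

lemma neg_one_notMem_normUnits (hL : IsSqrtExtension a (2 : ℚ)) (hr : r.Prime)
    (hr8 : r % 8 = 7) (hrm : ¬ r ∣ m) (hK : IsSqrtExtension b ((r * m : ℕ) : L)) :
    -1 ∉ normUnits L K := by
  have : Fact r.Prime := ⟨hr⟩
  have hm0 : m ≠ 0 := by rintro rfl; exact hrm (dvd_zero r)
  have hr2 : ((2 : ℤ) : ZMod r) ≠ 0 := by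
    have : ¬ r ∣ 2 := fun h => by
      have := Nat.le_of_dvd two_pos h
      omega
    exact_mod_cast (ZMod.natCast_eq_zero_iff 2 r).not.2 this
  have htwo : IsSquare ((2 : ℤ) : ℚ_[r]) := isSquare_intCast_padic (by omega) hr2
    (by exact_mod_cast (ZMod.exists_sq_eq_two_iff (p := r) (by omega)).2 (Or.inr hr8))
  obtain ⟨f⟩ := hL.nonempty_algHom (F := ℚ_[r]) (by simpa using htwo)
  exact notMem_normUnits_of_norm_eq_neg_one (E := L) f.toRingHom
    (Nat.cast_ne_zero.2 (mul_ne_zero hr.ne_zero hm0))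
    (padic_sq_sub_mul_sq_ne_neg_one (by omega) hrm) (hK.sq_eq.trans (map_natCast _ _))
    (by simp)

/-- If `r ≡ 7 mod 8`, then `r` may split in `L`, but then `-1` and `1 + √2` are independent modulo
norms; if `r ≡ 3 mod 8`, then `r` is inert. -/
lemma two_pow_ncard_primesAbove_le_index_normUnits (hL : IsSqrtExtension a (2 : ℚ))
    (hr : r.Prime) (hr4 : r % 4 = 3) (hrm : ¬ r ∣ m)
    (hK : IsSqrtExtension b ((r * m : ℕ) : L)) :
    2 ^ (primesAbove L r).ncard ≤ (normUnits L K).index := by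
  have := finiteIndex_normUnits hK.finrank_eq_two
  obtain ⟨ε, hε⟩ := exists_unit_eq_one_add_sqrt_two hL.sq_eq_two
  have hε_notMem : ε ∉ normUnits L K :=
    notMem_normUnits_of_norm_rat_eq_neg_one hr hr4 hrm hK (hε ▸ hL.norm_one_add_sqrt_two)
  obtain hr8 | hr8 : r % 8 = 7 ∨ r % 8 = 3 := by omega
  · have hneg_notMem : -1 * ε ∉ normUnits L K :=
      notMem_normUnits_of_norm_rat_eq_neg_one hr hr4 hrm hK
        (by simpa [hε] using hL.norm_neg_one_add_sqrt_two)
    have hcard := ncard_primesAbove_le (K := L) hr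
    rw [hL.finrank_eq_two] at hcard
    exact (Nat.pow_le_pow_right two_pos hcard).trans <|
      four_le_index_of_notMem (sq_mem_normUnits hK.finrank_eq_two _)
        (hL.neg_one_notMem_normUnits hr hr8 hrm hK) hε_notMem hneg_notMem
  · have hcard := hL.ncard_primesAbove_le_one_of_mod_eight hr (Or.inl hr8)
    exact (Nat.pow_le_pow_right two_pos hcard).trans (two_le_index_of_notMem hε_notMem)

lemma two_mul_card_twoTorsion_le [IsTotallyReal K] (hL : IsSqrtExtension a (2 : ℚ))
    (hr : r.Prime) (hr4 : r % 4 = 3) (hrm : ¬ r ∣ m) (hK : IsSqrtExtension b ((r * m : ℕ) : L))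
    {S : Set (HeightOneSpectrum (𝓞 L))} (hSfin : S.Finite)
    (hS : ∀ v ∉ S, v ∉ primesAbove L r → IsUnramifiedAbove L K v) :
    2 * Nat.card (twoTorsion (ClassGroup (𝓞 K))) ≤ 2 ^ S.ncard := by
  have : IsTotallyReal L := IsTotallyReal.of_algebra L K
  have hindex := hL.two_pow_ncard_primesAbove_le_index_normUnits hr hr4 hrm hK
  have hbound := ambiguous_class_bound hK hL.twoTorsion_classGroup_eq_bot_of_sqrt_two
    (hSfin.union (finite_primesAbove hr.ne_zero))
    (fun v hv => hS v (fun h => hv (Or.inl h)) (fun h => hv (Or.inr h)))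
    (U := normUnits L K) (fun u hu => mem_normUnits_iff.2 hu)
  refine le_of_mul_le_mul_left (a := 2 ^ (primesAbove L r).ncard) ?_ (Nat.two_pow_pos _)
  calc _ ≤ (normUnits L K).index * (2 * Nat.card (twoTorsion (ClassGroup (𝓞 K)))) :=
        Nat.mul_le_mul_right _ hindex
    _ = 2 * (normUnits L K).index * Nat.card (twoTorsion (ClassGroup (𝓞 K))) := by ring
    _ ≤ 2 ^ (S ∪ primesAbove L r).ncard := hbound
    _ ≤ 2 ^ (S.ncard + (primesAbove L r).ncard) :=
        Nat.pow_le_pow_right two_pos (Set.ncard_union_le _ _)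
    _ = _ := by rw [pow_add, mul_comm]

end IsSqrtExtension

variable {K : Type*} [Field K] [NumberField K] [IsTotallyReal K] {a b : K} {r s : ℕ}

namespace IsBiquadratic

lemma twoTorsion_classGroup_eq_bot (h : IsBiquadratic a b (2 : ℚ) ((s * r : ℕ) : ℚ))
    (hs : s.Prime) (hr : r.Prime) (hsr : s ≠ r) (hs8 : s % 8 = 3) (hr4 : r % 4 = 3) :
    twoTorsion (ClassGroup (𝓞 K)) = ⊥ := by
  rw [mul_comm] at h
  have hK := h.right_natCast
  have hmod : r * s % 4 = 1 := by rw [Nat.mul_mod, hr4, show s % 4 = 3 by omega]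
  have hbound := h.left.two_mul_card_twoTorsion_le hr hr4
    ((Nat.prime_dvd_prime_iff_eq hr hs).not.2 hsr.symm) hK (finite_primesAbove hs.ne_zero)
    fun v hvs hvr => hK.isUnramifiedAbove_of_mod_four_eq_one hmod fun hv =>
      (mem_or_mem_of_natCast_mul_mem hv).elim hvr hvs
  have hpow := Nat.pow_le_pow_right two_pos
    (h.left.ncard_primesAbove_le_one_of_mod_eight hs (Or.inl hs8))
  exact Subgroup.eq_bot_of_card_le _ (by omega)

lemma card_twoTorsion_classGroup_le_two (h : IsBiquadratic a b (2 : ℚ) ((s * r : ℕ) : ℚ))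
    (hs : s.Prime) (hr : r.Prime) (hsr : s ≠ r) (hs8 : s % 8 = 5) (hr4 : r % 4 = 3) :
    Nat.card (twoTorsion (ClassGroup (𝓞 K))) ≤ 2 := by
  rw [mul_comm] at h
  have hK := h.right_natCast
  have hbound := h.left.two_mul_card_twoTorsion_le hr hr4
    ((Nat.prime_dvd_prime_iff_eq hr hs).not.2 hsr.symm) hK
    ((finite_primesAbove two_ne_zero).union (finite_primesAbove hs.ne_zero))
    fun v hv hvr => hK.isUnramifiedAbove (fun h2 => hv (Or.inl (by exact_mod_cast h2)))
      fun hv' => (mem_or_mem_of_natCast_mul_mem hv').elim hvr fun hvs => hv (Or.inr hvs)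
  have hcard := (Set.ncard_union_le _ _).trans (add_le_add h.left.ncard_primesAbove_two_le_one
    (h.left.ncard_primesAbove_le_one_of_mod_eight hs (Or.inr hs8)))
  have hpow := Nat.pow_le_pow_right two_pos hcard
  omega

end IsBiquadratic

end OverSqrtTwo

section OctonicField

open IsDedekindDomain

lemma isEmpty_ringHom_zmod_two {K : Type*} [Field K] [CharZero K] {b : K} {n : ℕ} (hb : b ^ 2 = n)
    (hn : n % 8 = 5) : IsEmpty (𝓞 K →+* ZMod 2) := by
  obtain ⟨m, rfl⟩ : ∃ m, n = 4 * (2 * m + 1) + 1 := ⟨n / 8, by omega⟩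
  obtain ⟨θ, -, hθ⟩ := exists_integer_half_one_add hb
  refine ⟨fun f => ?_⟩
  have hodd : ((2 * m + 1 : ℕ) : ZMod 2) = 1 := ZMod.natCast_eq_one_iff_odd.2 ⟨m, rfl⟩
  have hf : f θ ^ 2 - f θ - 1 = 0 := by
    rw [← hodd, ← map_natCast f, ← map_pow, ← map_sub, ← map_sub, hθ, map_zero]
  generalize f θ = t at hf
  revert hf t
  decide

variable {k K : Type*} [Field k] [Field K] [NumberField k] [NumberField K] [Algebra k K]
  {a e : k}

lemma IsBiquadratic.one_add_sqrt_two_notMem_normUnits {n m : ℕ}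
    (hk : IsBiquadratic a e (2 : ℚ) (n : ℚ)) (hn : n % 8 = 1) (hm : m % 4 = 3) {b : K}
    (hb : b ^ 2 = m) {ε : (𝓞 k)ˣ} (hε : ((ε : 𝓞 k) : k) = 1 + a) : ε ∉ normUnits k K := by
  have hsqrt : IsSqrtExtension a (2 : IntermediateField.adjoin ℚ {e}) := by
    simpa only [map_ofNat] using hk.symm.right
  obtain ⟨f⟩ := hk.symm.left.nonempty_algHom (F := ℚ_[2])
    (by simpa using isSquare_padic_two_of_mod_eight_eq_one hn)
  exact notMem_normUnits_of_norm_eq_neg_one (E := IntermediateField.adjoin ℚ {e}) f.toRingHom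
    (Nat.cast_ne_zero.2 (by omega)) (padic_two_sq_sub_mul_sq_ne_neg_one hm) hb
    (hε ▸ hsqrt.norm_one_add_sqrt_two)

variable {b c : K} {p q s : ℕ}

lemma isUnramifiedAbove_of_isSqrtExtension (hqs : q.Coprime s)
    (hb : IsSqrtExtension b ((p * q : ℕ) : k)) (hc : IsSqrtExtension c ((p * s : ℕ) : k))
    {v : HeightOneSpectrum (𝓞 k)} (hv : v ∉ primesAbove k p ∪ primesAbove k 2) :
    IsUnramifiedAbove k K v := by
  have hvp : (p : 𝓞 k) ∉ v.asIdeal := fun h => hv (Or.inl h)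
  have hv2 : (2 : 𝓞 k) ∉ v.asIdeal := fun h => hv (Or.inr (by exact_mod_cast h))
  by_cases hvq : (q : 𝓞 k) ∈ v.asIdeal
  · refine hc.isUnramifiedAbove hv2 fun h => ?_
    have hvs := (mem_or_mem_of_natCast_mul_mem h).resolve_left hvp
    obtain ⟨x, y, hxy⟩ := Nat.isCoprime_iff_coprime.2 hqs
    have hone : (x : 𝓞 k) * q + y * s = 1 := by exact_mod_cast congrArg (Int.cast : ℤ → 𝓞 k) hxy
    refine v.isPrime.ne_top ((Ideal.eq_top_iff_one _).2 (hone ▸ ?_))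
    exact add_mem (Ideal.mul_mem_left _ _ hvq) (Ideal.mul_mem_left _ _ hvs)
  · exact hb.isUnramifiedAbove hv2 fun h => (mem_or_mem_of_natCast_mul_mem h).elim hvp hvq

/-- If `s ≡ 3 mod 8`, then `2` may split in `k`, but then `1 + √2` is not a norm; if `s ≡ 7 mod 8`,
then there is only one prime of `k` above `2`. -/
lemma IsBiquadratic.two_pow_ncard_primesAbove_two_le
    (hk : IsBiquadratic a e (2 : ℚ) ((q * s : ℕ) : ℚ)) (hp8 : p % 8 = 5) (hq8 : q % 8 = 3)
    (hs4 : s % 4 = 3) (hb : IsSqrtExtension b ((p * q : ℕ) : k)) :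
    2 ^ (primesAbove k 2).ncard ≤ 2 * (normUnits k K).index := by
  have := finiteIndex_normUnits hb.finrank_eq_two
  have ha : a ^ 2 = 2 := by rw [hk.left_sq_eq, map_ofNat]
  have he : e ^ 2 = (q * s : ℕ) := by rw [hk.right_sq_eq, map_natCast]
  obtain ⟨a', -, ha'⟩ := exists_integer_sq_eq (a := a) (d := 2) (by exact_mod_cast ha)
  obtain hs8 | hs8 : s % 8 = 3 ∨ s % 8 = 7 := by omega
  · have hcard := ncard_primesAbove_mul_two_le_of_sqrt Nat.prime_two ha'
    rw [hk.finrank_eq_four] at hcard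
    have hpow := Nat.pow_le_pow_right two_pos (show (primesAbove k 2).ncard ≤ 2 by omega)
    obtain ⟨ε, hε⟩ := exists_unit_eq_one_add_sqrt_two ha
    have hindex := two_le_index_of_notMem (hk.one_add_sqrt_two_notMem_normUnits
      (by rw [Nat.mul_mod, hq8, hs8])
      (by rw [Nat.mul_mod, show p % 4 = 1 by omega, show q % 4 = 3 by omega])
      (hb.sq_eq.trans (map_natCast _ _)) hε)
    omega
  · have hcard := ncard_primesAbove_mul_four_le_of_sqrt Nat.prime_two ha'
      (isEmpty_ringHom_zmod_two he (by rw [Nat.mul_mod, hq8, hs8]))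
    rw [hk.finrank_eq_four] at hcard
    have hpow := Nat.pow_le_pow_right two_pos (show (primesAbove k 2).ncard ≤ 1 by omega)
    have hindex := Nat.pos_of_ne_zero (normUnits k K).index_ne_zero_of_finite
    omega

lemma IsBiquadratic.card_twoTorsion_classGroup_le_four [IsTotallyReal K]
    (hk : IsBiquadratic a e (2 : ℚ) ((q * s : ℕ) : ℚ)) (hp : p.Prime) (hq : q.Prime)
    (hs : s.Prime) (hqs : q ≠ s) (hp8 : p % 8 = 5) (hq8 : q % 8 = 3) (hs4 : s % 4 = 3)
    (hb : IsSqrtExtension b ((p * q : ℕ) : k)) (hc : IsSqrtExtension c ((p * s : ℕ) : k)) :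
    Nat.card (twoTorsion (ClassGroup (𝓞 K))) ≤ 4 := by
  have : IsTotallyReal k := IsTotallyReal.of_algebra k K
  have : Fact p.Prime := ⟨hp⟩
  have hbound := ambiguous_class_bound hb (hk.twoTorsion_classGroup_eq_bot hq hs hqs hq8 hs4)
    ((finite_primesAbove hp.ne_zero).union (finite_primesAbove two_ne_zero))
    (fun v => isUnramifiedAbove_of_isSqrtExtension ((Nat.coprime_primes hq hs).2 hqs) hb hc)
    (U := normUnits k K) (fun u hu => mem_normUnits_iff.2 hu)
  have hindex := hk.two_pow_ncard_primesAbove_two_le hp8 hq8 hs4 hb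
  obtain ⟨a', -, ha'⟩ := exists_integer_sq_eq (a := a) (d := 2) (by simp [hk.left_sq_eq])
  have hcard := ncard_primesAbove_mul_two_le hp
    (isEmpty_ringHom_of_sq_eq ha' (by exact_mod_cast not_isSquare_two_zmod (Or.inr hp8)))
  rw [hk.finrank_eq_four] at hcard
  refine le_of_mul_le_mul_left (a := 2 ^ (primesAbove k 2).ncard) ?_ (Nat.two_pow_pos _)
  calc _ ≤ 2 * (normUnits k K).index * Nat.card (twoTorsion (ClassGroup (𝓞 K))) :=
        Nat.mul_le_mul_right _ hindex
    _ ≤ 2 ^ (primesAbove k p ∪ primesAbove k 2).ncard := hbound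
    _ ≤ 2 ^ ((primesAbove k 2).ncard + 2) := Nat.pow_le_pow_right two_pos
        ((Set.ncard_union_le _ _).trans (by omega))
    _ = _ := pow_add _ _ _

end OctonicField

section ClassGroupHoms

open scoped nonZeroDivisors Pointwise

variable {R G : Type*} [CommRing R] [IsDedekindDomain R] [Group G]

/-- The homomorphism on the class group induced by a homomorphism on nonzero ideals which is
trivial on principal ideals. -/
noncomputable def classGroupLift (f : (Ideal R)⁰ →* G)
    (hf : ∀ I : (Ideal R)⁰, (I : Ideal R).IsPrincipal → f I = 1) : ClassGroup R →* G :=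
  (Con.lift (Con.ker ClassGroup.mk0) f fun I J h => by
    obtain ⟨x, y, hx, hy, hIJ⟩ := ClassGroup.mk0_eq_mk0_iff.1 ((Con.ker_rel _).1 h)
    let P (z : R) (hz : z ≠ 0) : (Ideal R)⁰ := ⟨Ideal.span {z}, by simpa using hz⟩
    have hP (z : R) (hz : z ≠ 0) : f (P z hz) = 1 := hf _ ⟨z, rfl⟩
    have hmul : P x hx * I = P y hy * J := Subtype.ext hIJ
    simpa [hP] using congrArg f hmul).comp
  (Con.quotientKerEquivOfSurjective ClassGroup.mk0 ClassGroup.mk0_surjective).symm.toMonoidHom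

lemma classGroupLift_mk0 {f : (Ideal R)⁰ →* G}
    (hf : ∀ I : (Ideal R)⁰, (I : Ideal R).IsPrincipal → f I = 1) (I : (Ideal R)⁰) :
    classGroupLift f hf (ClassGroup.mk0 I) = f I := by
  have : (Con.quotientKerEquivOfSurjective ClassGroup.mk0 ClassGroup.mk0_surjective).symm
      (ClassGroup.mk0 I) = (I : (Con.ker (ClassGroup.mk0 (R := R))).Quotient) :=
    (MulEquiv.symm_apply_eq _).2 rfl
  simp [classGroupLift, this]

variable (k K : Type*) [Field k] [Field K] [NumberField k] [NumberField K] [Algebra k K]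

/-- The relative ideal norm, as a homomorphism on nonzero ideals. -/
noncomputable def relNormIdeal : (Ideal (𝓞 K))⁰ →* (Ideal (𝓞 k))⁰ :=
  ((Ideal.relNorm (𝓞 k) (S := 𝓞 K)).toMonoidHom.comp (Submonoid.subtype _)).codRestrict _ fun I =>
    mem_nonZeroDivisors_iff_ne_zero.2
      (mt Ideal.relNorm_eq_bot_iff.1 (nonZeroDivisors.coe_ne_zero I))

/-- The relative norm on ideal classes. -/
noncomputable def relNormClass : ClassGroup (𝓞 K) →* ClassGroup (𝓞 k) :=
  classGroupLift (ClassGroup.mk0.comp (relNormIdeal k K)) fun I ⟨⟨x, hx⟩⟩ =>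
    (ClassGroup.mk0_eq_one_iff _).2 ⟨⟨_, by
      rw [Ideal.submodule_span_eq] at hx ⊢
      change Ideal.relNorm (𝓞 k) (I : Ideal (𝓞 K)) = _
      rw [hx, Ideal.relNorm_singleton]⟩⟩

variable {k K}
variable {Γ : Type*} [Group Γ] [MulSemiringAction Γ K]

/-- The action of a field automorphism on nonzero ideals. -/
noncomputable def smulIdeal (σ : Γ) : (Ideal (𝓞 K))⁰ →* (Ideal (𝓞 K))⁰ :=
  ((MulDistribMulAction.toMonoidHom (Ideal (𝓞 K)) σ).comp (Submonoid.subtype _)).codRestrict _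
    fun I => mem_nonZeroDivisors_iff_ne_zero.2
      ((smul_ne_zero_iff_ne σ).2 (nonZeroDivisors.coe_ne_zero I))

/-- The action of a field automorphism on ideal classes. -/
noncomputable def smulClass (σ : Γ) : ClassGroup (𝓞 K) →* ClassGroup (𝓞 K) :=
  classGroupLift (ClassGroup.mk0.comp (smulIdeal σ)) fun I ⟨⟨x, hx⟩⟩ =>
    (ClassGroup.mk0_eq_one_iff _).2 ⟨⟨σ • x, by
      rw [Ideal.submodule_span_eq] at hx ⊢
      change σ • (I : Ideal (𝓞 K)) = _
      rw [hx, Ideal.smul_closure, Set.smul_set_singleton]⟩⟩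

lemma smulClass_mul (σ τ : Γ) (c : ClassGroup (𝓞 K)) :
    smulClass (σ * τ) c = smulClass σ (smulClass τ c) := by
  obtain ⟨I, rfl⟩ := ClassGroup.mk0_surjective c
  simp only [smulClass, classGroupLift_mk0, MonoidHom.comp_apply]
  exact congrArg ClassGroup.mk0 (Subtype.ext (mul_smul σ τ (I : Ideal (𝓞 K))))

lemma absNorm_smul (σ : Γ) (I : Ideal (𝓞 K)) : Ideal.absNorm (σ • I) = Ideal.absNorm I := by
  rw [← Ideal.absNorm_relNorm ℤ, Ideal.relNorm_smul, Ideal.absNorm_relNorm]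

lemma ideal_eq_of_le_of_absNorm_eq {I J : Ideal (𝓞 K)} (hI : I ≠ ⊥) (h : I ≤ J)
    (hn : Ideal.absNorm I = Ideal.absNorm J) : I = J := by
  obtain ⟨C, rfl⟩ := Ideal.dvd_iff_le.2 h
  have hJ : Ideal.absNorm J ≠ 0 := by rwa [← hn, Ne, Ideal.absNorm_eq_zero_iff]
  rw [map_mul, mul_eq_left₀ hJ, Ideal.absNorm_eq_one_iff] at hn
  rw [hn, Ideal.mul_top]

namespace IsSqrtExtension

variable {θ : K} {d : k}

lemma map_intNorm (h : IsSqrtExtension θ d) {σ : Γ}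
    (hσ : ∀ u : k, σ • algebraMap k K u = algebraMap k K u)
    (hσθ : σ • θ = -θ) (x : 𝓞 K) :
    algebraMap (𝓞 k) (𝓞 K) (Algebra.intNorm (𝓞 k) (𝓞 K) x) = x * σ • x := by
  apply FaithfulSMul.algebraMap_injective (𝓞 K) K
  rw [← IsScalarTower.algebraMap_apply, IsScalarTower.algebraMap_apply (𝓞 k) k K,
    Algebra.algebraMap_intNorm (L := K), map_mul]
  change _ = (x : K) * σ • (x : K)
  obtain ⟨u, v, huv⟩ := h.exists_eq_add_mul (x : K)
  change algebraMap k K (Algebra.norm k (x : K)) = _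
  rw [huv, h.norm_add_mul, smul_add, smul_mul', hσ, hσ, hσθ]
  rw [map_sub, map_mul, map_pow, map_pow, ← h.sq_eq]
  ring

lemma map_relNorm (h : IsSqrtExtension θ d) {σ : Γ}
    (hσ : ∀ u : k, σ • algebraMap k K u = algebraMap k K u)
    (hσθ : σ • θ = -θ) {I : Ideal (𝓞 K)} (hI : I ≠ ⊥) :
    (Ideal.relNorm (𝓞 k) I).map (algebraMap (𝓞 k) (𝓞 K)) = I * σ • I := by
  have hnorm : Ideal.absNorm ((Ideal.relNorm (𝓞 k) I).map (algebraMap (𝓞 k) (𝓞 K))) =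
      Ideal.absNorm I ^ 2 := by
    rw [Ideal.absNorm_algebraMap, Ideal.absNorm_relNorm, ← h.finrank_eq_two,
      IsFractionRing.finrank_eq (𝓞 k) k (𝓞 K) K]
  refine ideal_eq_of_le_of_absNorm_eq ?_ ?_ (by rw [hnorm, map_mul, absNorm_smul, sq])
  · rw [Ne, ← Ideal.absNorm_eq_zero_iff, hnorm]
    exact pow_ne_zero 2 (mt Ideal.absNorm_eq_zero_iff.1 hI)
  · rw [Ideal.map_relNorm, Ideal.span_le]
    rintro _ ⟨x, hx, rfl⟩
    rw [Function.comp_apply, h.map_intNorm hσ hσθ]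
    exact Ideal.mul_mem_mul hx (Ideal.smul_mem_pointwise_smul _ _ _ hx)

lemma extendedHom_relNormClass (h : IsSqrtExtension θ d) {σ : Γ}
    (hσ : ∀ u : k, σ • algebraMap k K u = algebraMap k K u)
    (hσθ : σ • θ = -θ) (c : ClassGroup (𝓞 K)) :
    ClassGroup.extendedHom (𝓞 k) (𝓞 K) (relNormClass k K c) = c * smulClass σ c := by
  obtain ⟨I, rfl⟩ := ClassGroup.mk0_surjective c
  simp only [relNormClass, smulClass, classGroupLift_mk0, MonoidHom.comp_apply,
    ClassGroup.extendedHom_mk0, ← map_mul]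
  exact congrArg ClassGroup.mk0
    (Subtype.ext (h.map_relNorm hσ hσθ (nonZeroDivisors.coe_ne_zero I)))

end IsSqrtExtension

end ClassGroupHoms

section GenusCharacter

open scoped nonZeroDivisors

variable (K : Type*) [Field K] [NumberField K] (p : ℕ) [Fact p.Prime]

/-- The absolute norm of a nonzero ideal, modulo the subgroup of `ℚ_[p]ˣ` generated by `p` and the
squares. -/
noncomputable def normClass : (Ideal (𝓞 K))⁰ →* ℚ_[p]ˣ ⧸ primeSquareSubgroup p where
  toFun I := QuotientGroup.mk (Units.mk0 (Ideal.absNorm (I : Ideal (𝓞 K)) : ℚ_[p])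
    (Nat.cast_ne_zero.2 (Ideal.absNorm_ne_zero_iff_mem_nonZeroDivisors.2 I.2)))
  map_one' := congrArg QuotientGroup.mk (Units.ext (by simp))
  map_mul' I J := by
    rw [← QuotientGroup.mk_mul]
    exact congrArg QuotientGroup.mk (Units.ext (by simp))

/-- The condition that the norm class at `p` is trivial on principal ideals. -/
def HasGenusCharacter : Prop :=
  ∀ I : (Ideal (𝓞 K))⁰, (I : Ideal (𝓞 K)).IsPrincipal → normClass K p I = 1

variable {K p}

/-- The character of the class group given by the norm class at `p`; it is one of the characters of
Gauss's genus theory. -/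
noncomputable def genusCharacter (h : HasGenusCharacter K p) :
    ClassGroup (𝓞 K) →* ℚ_[p]ˣ ⧸ primeSquareSubgroup p :=
  classGroupLift (normClass K p) h

lemma genusCharacter_mk0 (h : HasGenusCharacter K p) (I : (Ideal (𝓞 K))⁰) :
    genusCharacter h (ClassGroup.mk0 I) = normClass K p I :=
  classGroupLift_mk0 h I

lemma genusCharacter_relNormClass {k : Type*} [Field k] [NumberField k] [Algebra k K]
    (hk : HasGenusCharacter k p) (hK : HasGenusCharacter K p) (c : ClassGroup (𝓞 K)) :
    genusCharacter hk (relNormClass k K c) = genusCharacter hK c := by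
  obtain ⟨I, rfl⟩ := ClassGroup.mk0_surjective c
  rw [relNormClass, classGroupLift_mk0, MonoidHom.comp_apply, genusCharacter_mk0,
    genusCharacter_mk0]
  refine congrArg QuotientGroup.mk (Units.ext (congrArg Nat.cast ?_))
  exact Ideal.absNorm_relNorm (𝓞 k) (𝓞 K) (I : Ideal (𝓞 K))

lemma sq_eq_one_of_primeSquareSubgroup (x : ℚ_[p]ˣ ⧸ primeSquareSubgroup p) : x ^ 2 = 1 := by
  obtain ⟨t, rfl⟩ := QuotientGroup.mk_surjective x
  rw [← QuotientGroup.mk_pow, QuotientGroup.eq_one_iff]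
  exact mem_primeSquareSubgroup_of_eq 0 (z := t) (by simp)

lemma normClass_eq_one_iff_isSquare {I : (Ideal (𝓞 K))⁰} (hp : p ≠ 2)
    (hI : ¬ p ∣ Ideal.absNorm (I : Ideal (𝓞 K))) :
    normClass K p I = 1 ↔ IsSquare ((Ideal.absNorm (I : Ideal (𝓞 K)) : ℕ) : ZMod p) := by
  refine (QuotientGroup.eq_one_iff _).trans ⟨fun h => ?_, fun h => ?_⟩
  · simpa using isSquare_zmod_of_mem_primeSquareSubgroup
      (m := Ideal.absNorm (I : Ideal (𝓞 K))) (by exact_mod_cast hI) (by simp) h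
  · obtain ⟨z, hz⟩ := isSquare_intCast_padic (u := Ideal.absNorm (I : Ideal (𝓞 K))) hp
      (by simpa [ZMod.natCast_eq_zero_iff] using hI) (by simpa using h)
    exact mem_primeSquareSubgroup_of_eq 0 (z := z) (by simpa [sq] using hz)

lemma hasGenusCharacter_of_sq_eq (hp4 : p % 4 = 1) {r : ℕ} (hpr : ¬ p ∣ r)
    (hr : IsSquare (r : ZMod p)) {b : K} (hb : b ^ 2 = (p * r : ℕ)) : HasGenusCharacter K p := by
  rintro I ⟨⟨x, hx⟩⟩
  obtain ⟨u, v, huv⟩ := exists_norm_eq_sq_sub_mul_sq (k := ℚ) (B := ((p * r : ℕ) : ℚ))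
    (hb.trans (map_natCast _ _).symm) (not_isSquare_prime_mul Fact.out hpr) (x : K)
  have hnorm : ((Algebra.norm ℤ x : ℤ) : ℚ_[p]) = (u : ℚ_[p]) ^ 2 - p * r * (v : ℚ_[p]) ^ 2 := by
    rw [← Algebra.coe_norm_int] at huv
    exact_mod_cast congrArg (Rat.cast : ℚ → ℚ_[p]) huv
  have hr' : IsSquare (r : ℚ_[p]) := by
    simpa using isSquare_intCast_padic (p := p) (u := r) (by omega)
      (by simpa [ZMod.natCast_eq_zero_iff] using hpr) (by simpa using hr)
  obtain ⟨i, hi⟩ : IsSquare (((-1 : ℤ) : ℚ_[p])) := isSquare_intCast_padic (by omega) (by simp)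
    (by simpa using ZMod.exists_sq_eq_neg_one_iff.2 (by omega))
  have hneg : (-1 : ℚ_[p]ˣ) ∈ primeSquareSubgroup p :=
    mem_primeSquareSubgroup_of_eq 0 (z := i) (by simpa [sq] using hi)
  have habs : Ideal.absNorm (I : Ideal (𝓞 K)) = (Algebra.norm ℤ x).natAbs := by
    rw [hx, Ideal.submodule_span_eq, Ideal.absNorm_span_singleton]
  refine (QuotientGroup.eq_one_iff _).2 ?_
  rcases Int.natAbs_eq (Algebra.norm ℤ x) with h | h
  · refine mem_primeSquareSubgroup_of_eq_sq_sub hp4 hr' ((?_ : _ = _).trans hnorm)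
    rw [Units.val_mk0, habs, ← Int.cast_natCast, ← h]
  · rw [← Subgroup.mul_mem_cancel_left _ hneg]
    refine mem_primeSquareSubgroup_of_eq_sq_sub hp4 hr' ((?_ : _ = _).trans hnorm)
    rw [Units.val_mul, Units.val_neg, Units.val_one, neg_one_mul, Units.val_mk0, habs,
      ← Int.cast_natCast, ← Int.cast_neg, ← h]

end GenusCharacter

section SqrtTwoIdeal

open scoped nonZeroDivisors

lemma span_pair_sq_eq_span_singleton {R : Type*} [CommRing R] {α y m : R} (hα : α ^ 2 = 2)
    (hy : y ^ 2 = α * y + 2 * m - 1) :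
    Ideal.span {y + 1, α} ^ 2 = Ideal.span {α} := by
  have hz : (y + 1) ^ 2 = α * (y + α * (y + m)) := by
    linear_combination hy - (y + m) * hα
  have hα_mem := Ideal.mem_span_singleton_self α
  refine le_antisymm ?_ ?_
  · rw [sq, Ideal.span_pair_mul_span_pair, Ideal.span_le]
    rintro x (rfl | rfl | rfl | rfl)
    · exact sq (y + 1) ▸ hz ▸ Ideal.mul_mem_right _ _ hα_mem
    · exact Ideal.mul_mem_left _ _ hα_mem
    all_goals exact Ideal.mul_mem_right _ _ hα_mem
  · rw [Ideal.span_singleton_le_iff_mem, sq]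
    have hy_mem : y + 1 ∈ Ideal.span {y + 1, α} := Ideal.subset_span (by simp)
    have hα_mem : α ∈ Ideal.span {y + 1, α} := Ideal.subset_span (by simp)
    have hα_eq : α = (y + 1) * α - ((y + 1) * (y + 1) - (y + m) * (α * α)) := by
      linear_combination hz
    have := sub_mem (Ideal.mul_mem_mul hy_mem hα_mem) (sub_mem (Ideal.mul_mem_mul hy_mem hy_mem)
      (Ideal.mul_mem_left _ (y + m) (Ideal.mul_mem_mul hα_mem hα_mem)))
    rwa [← hα_eq] at this

variable {K : Type*} [Field K] [NumberField K]

lemma exists_ideal_sq_eq_span_sqrt_two {α : 𝓞 K} (hα : α ^ 2 = 2) {b : K} {d : ℕ}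
    (hb : b ^ 2 = d) (hd : d % 4 = 3) :
    ∃ D : (Ideal (𝓞 K))⁰, (D : Ideal (𝓞 K)) ^ 2 = Ideal.span {α} := by
  obtain ⟨m, hm⟩ : ∃ m, d + 1 = 4 * m := ⟨(d + 1) / 4, by omega⟩
  have hdm : (d : K) + 1 = 4 * m := by exact_mod_cast hm
  have hαK : (α : K) ^ 2 = 2 :=
    (map_pow (algebraMap (𝓞 K) K) α 2).symm.trans ((congrArg _ hα).trans (map_ofNat _ 2))
  have hα0 : (α : K) ≠ 0 := fun h => by simp [h] at hαK
  have hsq : ((1 + b) / α) ^ 2 = (α : K) * ((1 + b) / α) + 2 * m - 1 := by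
    field_simp
    linear_combination hb + hdm - (2 * m - 1 + 1 + b) * hαK
  have hint : IsIntegral ℤ ((1 + b) / (α : K)) := by
    obtain ⟨β, rfl, -⟩ := exists_integer_sq_eq hb
    refine IsIntegral.of_pow two_pos ?_
    rw [hsq, mul_div_cancel₀ _ hα0]
    convert! RingOfIntegers.isIntegral_coe (1 + β + 2 * (m : 𝓞 K) - 1) using 1
  let y : 𝓞 K := ⟨_, hint⟩
  refine ⟨⟨Ideal.span {y + 1, α}, ?_⟩,
    span_pair_sq_eq_span_singleton hα (m := (m : 𝓞 K)) (RingOfIntegers.ext ?_)⟩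
  · exact mem_nonZeroDivisors_iff_ne_zero.2 fun h => hα0 (by
      simpa using (Ideal.span_eq_bot.1 h) α (by simp))
  · refine (map_pow (algebraMap (𝓞 K) K) y 2).trans (hsq.trans ?_)
    change _ = algebraMap (𝓞 K) K (α * y + 2 * m - 1)
    rw [map_sub, map_add, map_mul, map_mul, map_ofNat, map_natCast, map_one]
    rfl

lemma absNorm_pow_four_of_sq_eq_span {α : 𝓞 K} (hα : α ^ 2 = 2) {D : Ideal (𝓞 K)}
    (hD : D ^ 2 = Ideal.span {α}) : Ideal.absNorm D ^ 4 = 2 ^ Module.finrank ℚ K := by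
  have hD4 : D ^ 4 = Ideal.span {algebraMap ℤ (𝓞 K) 2} := by
    rw [show 4 = 2 * 2 from rfl, pow_mul, hD, Ideal.span_singleton_pow, hα, map_ofNat]
  rw [← map_pow, hD4, Ideal.absNorm_span_singleton, Algebra.norm_algebraMap, RingOfIntegers.rank,
    Int.natAbs_pow]
  rfl

lemma mk0_mem_twoTorsion {R : Type*} [CommRing R] [IsDedekindDomain R] {D : (Ideal R)⁰} {x : R}
    (hD : (D : Ideal R) ^ 2 = Ideal.span {x}) : ClassGroup.mk0 D ∈ twoTorsion (ClassGroup R) := by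
  rw [mem_twoTorsion, ← map_pow]
  exact (ClassGroup.mk0_eq_one_iff _).2 ⟨⟨x, hD⟩⟩

lemma extendedHom_mk0_eq_of_sq_eq_span {k : Type*} [Field k] [NumberField k] [Algebra k K]
    {D : (Ideal (𝓞 k))⁰} {E : (Ideal (𝓞 K))⁰} {x : 𝓞 k}
    (hD : (D : Ideal (𝓞 k)) ^ 2 = Ideal.span {x})
    (hE : (E : Ideal (𝓞 K)) ^ 2 = Ideal.span {algebraMap (𝓞 k) (𝓞 K) x}) :
    ClassGroup.extendedHom (𝓞 k) (𝓞 K) (ClassGroup.mk0 D) = ClassGroup.mk0 E := by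
  rw [ClassGroup.extendedHom_mk0]
  refine congrArg ClassGroup.mk0 (Subtype.ext (ideal_sq_injective ?_))
  rw [hE, ← Ideal.map_pow, hD, Ideal.map_span, Set.image_singleton]

end SqrtTwoIdeal

section NormStep

open scoped nonZeroDivisors

lemma eq_one_or_eq_of_pow_four_eq_one {G Q : Type*} [CommGroup G] [Finite G] [Group Q]
    (hQ : ∀ x : Q, x ^ 2 = 1) (χ : G →* Q) (hcard : Nat.card (twoTorsion G) ≤ 2) {d x : G}
    (hd : d ∈ twoTorsion G) (hχ : χ d ≠ 1) (hx : x ^ 4 = 1) :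
    (χ x = 1 → x = 1) ∧ (χ x ≠ 1 → x = d) := by
  have hd1 : d ≠ 1 := fun h => hχ (h ▸ map_one χ)
  have hmem (y : G) (hy : y ∈ twoTorsion G) : y = 1 ∨ y = d := by
    have hlt : 1 < Nat.card (twoTorsion G) := Finite.one_lt_card_iff_nontrivial.2
      ⟨⟨⟨d, hd⟩, 1, fun h => hd1 (congrArg Subtype.val h)⟩⟩
    have huniq := ((Nat.card_eq_two_iff' (1 : twoTorsion G)).1 (by omega)).unique
      (y₁ := ⟨y, hy⟩) (y₂ := ⟨d, hd⟩)
    exact or_iff_not_imp_left.2 fun h => congrArg Subtype.val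
      (huniq (fun e => h (congrArg Subtype.val e)) fun e => hd1 (congrArg Subtype.val e))
  have hx2 : x ^ 2 = 1 :=
    (hmem (x ^ 2) (mem_twoTorsion.2 (by rw [← pow_mul, hx]))).resolve_right fun h =>
      hχ (by rw [← h, map_pow, hQ])
  rcases hmem x (mem_twoTorsion.2 hx2) with rfl | rfl
  · simp
  · simp [hχ]

variable {k K : Type*} [Field k] [Field K] [NumberField k] [NumberField K] [Algebra k K]
  {a b : k} {p r : ℕ} [Fact p.Prime]

lemma genusCharacter_ne_one_of_sq_eq_span (hk : HasGenusCharacter k p)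
    (hdeg : Module.finrank ℚ k = 4) (hp8 : p % 8 = 5) {α : 𝓞 k} (hα : α ^ 2 = 2)
    {D : (Ideal (𝓞 k))⁰} (hD : (D : Ideal (𝓞 k)) ^ 2 = Ideal.span {α}) :
    genusCharacter hk (ClassGroup.mk0 D) ≠ 1 := by
  have hN : Ideal.absNorm (D : Ideal (𝓞 k)) = 2 :=
    Nat.pow_left_injective (n := 4) (by norm_num)
      ((absNorm_pow_four_of_sq_eq_span hα hD).trans (by rw [hdeg]))
  rw [genusCharacter_mk0, Ne, normClass_eq_one_iff_isSquare (by omega) (by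
    rw [hN, Nat.prime_dvd_prime_iff_eq Fact.out Nat.prime_two]; omega), hN]
  exact_mod_cast not_isSquare_two_zmod (.inr hp8)

lemma IsBiquadratic.extendedHom_relNormClass [IsTotallyReal k]
    (h : IsBiquadratic a b (2 : ℚ) ((p * r : ℕ) : ℚ)) (hr : r.Prime) (hpr : p ≠ r)
    (hp8 : p % 8 = 5) (hr4 : r % 4 = 3) (hres : IsSquare (r : ZMod p))
    (hK : HasGenusCharacter K p) {α : 𝓞 K} (hα : (α : K) = algebraMap k K a)
    {D : (Ideal (𝓞 K))⁰} (hD : (D : Ideal (𝓞 K)) ^ 2 = Ideal.span {α})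
    {c : ClassGroup (𝓞 K)} (hc : c ^ 4 = 1) :
    (genusCharacter hK c = 1 →
      ClassGroup.extendedHom (𝓞 k) (𝓞 K) (relNormClass k K c) = 1) ∧
    (genusCharacter hK c ≠ 1 →
      ClassGroup.extendedHom (𝓞 k) (𝓞 K) (relNormClass k K c) = ClassGroup.mk0 D) := by
  have hp : p.Prime := Fact.out
  have hb : b ^ 2 = ((p * r : ℕ) : k) := h.right_sq_eq.trans (map_natCast _ _)
  have hk : HasGenusCharacter k p := hasGenusCharacter_of_sq_eq (by omega)
    (mt (Nat.prime_dvd_prime_iff_eq hp hr).1 hpr) hres hb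
  obtain ⟨α', hα', hsq⟩ := exists_integer_sq_eq (a := a) (d := 2) (by simpa using h.left_sq_eq)
  obtain ⟨D', hD'⟩ := exists_ideal_sq_eq_span_sqrt_two (by exact_mod_cast hsq) hb
    (by rw [Nat.mul_mod, show p % 4 = 1 by omega, hr4])
  have hext : ClassGroup.extendedHom (𝓞 k) (𝓞 K) (ClassGroup.mk0 D') = ClassGroup.mk0 D := by
    refine extendedHom_mk0_eq_of_sq_eq_span hD' (hD.trans ?_)
    congr 2
    exact RingOfIntegers.ext (hα.trans (congrArg _ hα'.symm))
  obtain ⟨htriv, hnontriv⟩ := eq_one_or_eq_of_pow_four_eq_one sq_eq_one_of_primeSquareSubgroup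
    (genusCharacter hk) (h.card_twoTorsion_classGroup_le_two hp hr hpr hp8 hr4)
    (mk0_mem_twoTorsion hD')
    (genusCharacter_ne_one_of_sq_eq_span hk h.finrank_eq_four hp8 (by exact_mod_cast hsq) hD')
    (x := relNormClass k K c) (by rw [← map_pow, hc, map_one])
  rw [genusCharacter_relNormClass hk hK] at htriv hnontriv
  exact ⟨fun hχ => by rw [htriv hχ, map_one], fun hχ => by rw [hnontriv hχ, hext]⟩

end NormStep

section SqrtTwo

variable {K : Type*} [Field K] [CharZero K]

lemma isBiquadratic_adjoin_sqrt_two {a b : K} {r m : ℕ} (ha : a ^ 2 = 2)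
    (hb : b ^ 2 = (r * m : ℕ)) (hr : r.Prime) (hr2 : r ≠ 2) (hrm : ¬ r ∣ m) :
    IsBiquadratic (K := IntermediateField.adjoin ℚ {a, b})
      ⟨a, IntermediateField.subset_adjoin _ _ (by simp)⟩
      ⟨b, IntermediateField.subset_adjoin _ _ (by simp)⟩ (2 : ℚ) ((r * m : ℕ) : ℚ) := by
  refine isBiquadratic_adjoin (by rw [ha, map_ofNat]) (by rw [hb, map_natCast])
    not_isSquare_two_rat (not_isSquare_prime_mul hr hrm) ?_
  have h2m : ¬ r ∣ 2 * m := by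
    rw [hr.dvd_mul, Nat.prime_dvd_prime_iff_eq hr Nat.prime_two]
    exact not_or.2 ⟨hr2, hrm⟩
  rw [show (2 : ℚ) * ((r * m : ℕ) : ℚ) = ((r * (2 * m) : ℕ) : ℚ) by push_cast; ring]
  exact not_isSquare_prime_mul hr h2m

lemma IsBiquadratic.not_isSquare_prime_mul {a b : K} {r m n : ℕ}
    (h : IsBiquadratic a b (2 : ℚ) (n : ℚ)) (hr : r.Prime) (hr2 : r ≠ 2) (hrm : ¬ r ∣ m)
    (hrn : ¬ r ∣ n) : ¬ IsSquare ((r * m : ℕ) : K) := by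
  have hr2' : ¬ r ∣ 2 := (Nat.prime_dvd_prime_iff_eq hr Nat.prime_two).not.2 hr2
  have hnonsq {t : ℕ} (ht : ¬ r ∣ t) : ¬ IsSquare ((t : ℚ) * ((r * m : ℕ) : ℚ)) := by
    rw [show (t : ℚ) * ((r * m : ℕ) : ℚ) = ((r * (t * m) : ℕ) : ℚ) by push_cast; ring]
    exact _root_.not_isSquare_prime_mul hr (by simp [hr.dvd_mul, ht, hrm])
  rw [← map_natCast (algebraMap ℚ K)]
  refine h.not_isSquare_algebraMap (_root_.not_isSquare_prime_mul hr hrm) (hnonsq hr2') (hnonsq hrn)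
    ?_
  rw [← mul_assoc]
  exact_mod_cast hnonsq (t := 2 * n) (by simp [hr.dvd_mul, hr2', hrn])

end SqrtTwo

section Tower

variable {k K : Type*} [Field k] [Field K] [Algebra k K]

lemma finrank_eq_eight_of_adjoin_eq_top {a b c : K} {f : k}
    (hM : Module.finrank k (IntermediateField.adjoin k {a, b}) = 4)
    (hc : c ^ 2 = algebraMap k K f)
    (hf : ¬ IsSquare (algebraMap k (IntermediateField.adjoin k {a, b}) f))
    (htop : IntermediateField.adjoin k {a, b, c} = ⊤) : Module.finrank k K = 8 := by
  have hc' := isSqrtExtension_gen (k := IntermediateField.adjoin k {a, b}) hc hf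
  have hset : ({a, b} ∪ {c} : Set K) = {a, b, c} := by
    ext x
    simp only [Set.mem_union, Set.mem_insert_iff, Set.mem_singleton_iff, or_assoc]
  rw [← IntermediateField.finrank_top', ← htop, ← hset, ← IntermediateField.adjoin_adjoin_left]
  refine (Module.finrank_mul_finrank k (IntermediateField.adjoin k {a, b})
    (IntermediateField.adjoin (IntermediateField.adjoin k {a, b}) {c})).symm.trans ?_
  rw [hM, hc'.finrank_eq_two]

lemma finrank_eq_two_of_finrank_eq_four {M : IntermediateField k K}
    (hK : Module.finrank k K = 8) (hM : Module.finrank k M = 4) : Module.finrank M K = 2 := by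
  have := Module.finrank_mul_finrank k M K
  rw [hK, hM] at this
  omega

end Tower

/-- `K` is a model of `F₁ = ℚ(√2, √(pq), √(ps))`: it is generated over `ℚ` by the chosen square
roots `a`, `b` and `c` of `2`, `pq` and `ps`. The conditions on the primes are the ones of the
theorem that are symmetric in `q` and `s`, the Legendre symbols being inverted by quadratic
reciprocity. -/
structure IsModelF1 {K : Type*} [Field K] [CharZero K] (a b c : K) (p q s : ℕ) : Prop where
  prime_p : p.Prime
  prime_q : q.Prime
  prime_s : s.Prime
  q_ne_s : q ≠ s
  p_mod_eight : p % 8 = 5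
  q_mod_four : q % 4 = 3
  s_mod_four : s % 4 = 3
  isSquare_q : IsSquare (q : ZMod p)
  isSquare_s : IsSquare (s : ZMod p)
  sq_a : a ^ 2 = 2
  sq_b : b ^ 2 = (p * q : ℕ)
  sq_c : c ^ 2 = (p * s : ℕ)
  adjoin_eq_top : IntermediateField.adjoin ℚ {a, b, c} = ⊤

namespace IsModelF1

variable {K : Type*} [Field K] [CharZero K] {a b c : K} {p q s : ℕ}

lemma swap (h : IsModelF1 a b c p q s) : IsModelF1 a c b p s q where
  __ := h
  prime_q := h.prime_s
  prime_s := h.prime_q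
  q_ne_s := h.q_ne_s.symm
  q_mod_four := h.s_mod_four
  s_mod_four := h.q_mod_four
  isSquare_q := h.isSquare_s
  isSquare_s := h.isSquare_q
  sq_b := h.sq_c
  sq_c := h.sq_b
  adjoin_eq_top := Set.pair_comm c b ▸ h.adjoin_eq_top

lemma not_p_dvd_q (h : IsModelF1 a b c p q s) : ¬ p ∣ q := fun hd => by
  have := (Nat.prime_dvd_prime_iff_eq h.prime_p h.prime_q).1 hd
  have := h.p_mod_eight
  have := h.q_mod_four
  omega

lemma not_q_dvd_p (h : IsModelF1 a b c p q s) : ¬ q ∣ p := fun hd =>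
  h.not_p_dvd_q ((Nat.prime_dvd_prime_iff_eq h.prime_q h.prime_p).1 hd).symm.dvd

lemma not_q_dvd_s (h : IsModelF1 a b c p q s) : ¬ q ∣ s := fun hd =>
  h.q_ne_s ((Nat.prime_dvd_prime_iff_eq h.prime_q h.prime_s).1 hd)

lemma not_p_dvd_qs (h : IsModelF1 a b c p q s) : ¬ p ∣ q * s := by
  rw [h.prime_p.dvd_mul]
  exact not_or.2 ⟨h.not_p_dvd_q, h.swap.not_p_dvd_q⟩

lemma p_ne_two (h : IsModelF1 a b c p q s) : p ≠ 2 := by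
  have := h.p_mod_eight
  omega

lemma q_ne_two (h : IsModelF1 a b c p q s) : q ≠ 2 := by
  have := h.q_mod_four
  omega

lemma p_ne_zero (h : IsModelF1 a b c p q s) : (p : K) ≠ 0 :=
  Nat.cast_ne_zero.2 h.prime_p.ne_zero

lemma sq_sqrt_qs (h : IsModelF1 a b c p q s) : (b * c / p) ^ 2 = (q * s : ℕ) := by
  have := h.p_ne_zero
  rw [div_pow, mul_pow, h.sq_b, h.sq_c]
  push_cast
  field_simp

lemma isBiquadratic_qs (h : IsModelF1 a b c p q s) :
    IsBiquadratic (K := IntermediateField.adjoin ℚ {a, b * c / p})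
      ⟨a, IntermediateField.subset_adjoin _ _ (by simp)⟩
      ⟨b * c / p, IntermediateField.subset_adjoin _ _ (by simp)⟩ (2 : ℚ) ((q * s : ℕ) : ℚ) :=
  isBiquadratic_adjoin_sqrt_two h.sq_a h.sq_sqrt_qs h.prime_q h.q_ne_two h.not_q_dvd_s

lemma isBiquadratic_pq (h : IsModelF1 a b c p q s) :
    IsBiquadratic (K := IntermediateField.adjoin ℚ {a, b})
      ⟨a, IntermediateField.subset_adjoin _ _ (by simp)⟩
      ⟨b, IntermediateField.subset_adjoin _ _ (by simp)⟩ (2 : ℚ) ((p * q : ℕ) : ℚ) :=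
  isBiquadratic_adjoin_sqrt_two h.sq_a h.sq_b h.prime_p h.p_ne_two h.not_p_dvd_q

lemma not_isSquare_ps (h : IsModelF1 a b c p q s) :
    ¬ IsSquare ((p * s : ℕ) : IntermediateField.adjoin ℚ {a, b}) := by
  rw [mul_comm]
  refine h.isBiquadratic_pq.not_isSquare_prime_mul h.prime_s h.swap.q_ne_two h.swap.not_q_dvd_p ?_
  rw [h.prime_s.dvd_mul]
  exact not_or.2 ⟨h.swap.not_q_dvd_p, h.swap.not_q_dvd_s⟩

lemma finrank_eq_eight (h : IsModelF1 a b c p q s) : Module.finrank ℚ K = 8 :=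
  finrank_eq_eight_of_adjoin_eq_top h.isBiquadratic_pq.finrank_eq_four
    (h.sq_c.trans (map_natCast _ _).symm) (by simpa only [map_natCast] using h.not_isSquare_ps)
    h.adjoin_eq_top

lemma isSqrtExtension_pq_ps (h : IsModelF1 a b c p q s) :
    IsSqrtExtension c ((p * s : ℕ) : IntermediateField.adjoin ℚ {a, b}) where
  finrank_eq_two := finrank_eq_two_of_finrank_eq_four h.finrank_eq_eight
    h.isBiquadratic_pq.finrank_eq_four
  sq_eq := h.sq_c.trans (map_natCast _ _).symm
  not_isSquare := h.not_isSquare_ps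

lemma isSqrtExtension_qs {x : K} {m : ℕ} (h : IsModelF1 a b c p q s) (hx : x ^ 2 = (p * m : ℕ))
    (hm : ¬ p ∣ m) :
    IsSqrtExtension x ((p * m : ℕ) : IntermediateField.adjoin ℚ {a, b * c / p}) where
  finrank_eq_two := finrank_eq_two_of_finrank_eq_four h.finrank_eq_eight
    h.isBiquadratic_qs.finrank_eq_four
  sq_eq := hx.trans (map_natCast _ _).symm
  not_isSquare := h.isBiquadratic_qs.not_isSquare_prime_mul h.prime_p h.p_ne_two hm h.not_p_dvd_qs

lemma card_twoTorsion_classGroup_le_four {K : Type*} [Field K] [NumberField K] [IsTotallyReal K]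
    {a b c : K} (h : IsModelF1 a b c p q s) (hq8 : q % 8 = 3) :
    Nat.card (twoTorsion (ClassGroup (𝓞 K))) ≤ 4 :=
  h.isBiquadratic_qs.card_twoTorsion_classGroup_le_four h.prime_p h.prime_q h.prime_s h.q_ne_s
    h.p_mod_eight hq8 h.s_mod_four (h.isSqrtExtension_qs h.sq_b h.not_p_dvd_q)
    (h.isSqrtExtension_qs h.sq_c h.swap.not_p_dvd_q)

end IsModelF1

section Exponent

open nonZeroDivisors

variable {K : Type*} [Field K]

lemma IsSqrtExtension.exists_algEquiv_fixing {k : Type*} [Field k] [Algebra k K] [CharZero k]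
    {M : IntermediateField k K} {θ : K} {d : M} (h : IsSqrtExtension θ d) :
    ∃ σ : K ≃ₐ[k] K, (∀ u ∈ M, σ • u = u) ∧ σ • θ = -θ := by
  have : Algebra.IsQuadraticExtension M K := ⟨h.finrank_eq_two⟩
  have hcard : Nat.card (K ≃ₐ[M] K) = 2 := (IsGalois.card_aut_eq_finrank M K).trans h.finrank_eq_two
  have := Nat.finite_of_card_ne_zero (hcard.trans_ne two_ne_zero)
  have := Finite.one_lt_card_iff_nontrivial.1 (hcard.symm ▸ one_lt_two)
  obtain ⟨σ, hσ⟩ := exists_ne (1 : K ≃ₐ[M] K)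
  refine ⟨σ.restrictScalars k, fun u hu => σ.commutes ⟨u, hu⟩,
    (sq_eq_sq_iff_eq_or_eq_neg.1 ?_).resolve_left fun hθ => hσ ?_⟩
  · change σ θ ^ 2 = θ ^ 2
    rw [← map_pow, h.sq_eq, AlgEquiv.commutes]
  · ext x
    obtain ⟨u, v, rfl⟩ := h.exists_eq_add_mul x
    have hθ' : σ θ = θ := hθ
    rw [map_add, map_mul, AlgEquiv.commutes, AlgEquiv.commutes, hθ', AlgEquiv.one_apply]

lemma eq_one_of_pow_four_eq_one {G : Type*} [CommGroup G] (h : twoTorsion G = ⊥) {x : G}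
    (hx : x ^ 4 = 1) : x = 1 := by
  have heq {y : G} (hy : y ^ 2 = 1) : y = 1 :=
    Subgroup.mem_bot.1 (h ▸ mem_twoTorsion.2 hy)
  exact heq (heq (by rw [← pow_mul, hx]))

namespace IsModelF1

variable [NumberField K] {p q s : ℕ} {a b c : K}

lemma exists_algEquiv (h : IsModelF1 a b c p q s) : ∃ σ τ : K ≃ₐ[ℚ] K,
    (∀ u ∈ IntermediateField.adjoin ℚ {a, b * c / p}, σ • u = u) ∧ σ • b = -b ∧
    (∀ u ∈ IntermediateField.adjoin ℚ {a, b}, τ • u = u) ∧ τ • c = -c ∧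
    (∀ u ∈ IntermediateField.adjoin ℚ {a, c}, (σ * τ) • u = u) ∧ (σ * τ) • b = -b := by
  have hb := h.isSqrtExtension_qs h.sq_b h.not_p_dvd_q
  obtain ⟨σ, hσ, hσb⟩ := hb.exists_algEquiv_fixing
  obtain ⟨τ, hτ, hτc⟩ := h.isSqrtExtension_pq_ps.exists_algEquiv_fixing
  have hσc : σ • c = -c := by
    have hp := h.p_ne_zero
    have hb0 : b ≠ 0 := fun hb0 => hb.notMem_range ⟨0, by rw [map_zero, hb0]⟩
    have hbc : σ • (b * c / p) = b * c / p :=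
      hσ _ (IntermediateField.subset_adjoin _ _ (by simp))
    rw [AlgEquiv.smul_def, map_div₀, map_mul, map_natCast, ← AlgEquiv.smul_def, hσb,
      ← AlgEquiv.smul_def, div_left_inj' hp] at hbc
    exact mul_left_cancel₀ hb0 (by linear_combination -hbc)
  refine ⟨σ, τ, hσ, hσb, hτ, hτc, ?_, ?_⟩
  · rw [IntermediateField.forall_mem_adjoin_smul_eq_self_iff]
    rintro x (rfl | rfl)
    · rw [mul_smul, hτ x (IntermediateField.subset_adjoin _ _ (by simp)),
        hσ x (IntermediateField.subset_adjoin _ _ (by simp))]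
    · rw [mul_smul, hτc, smul_neg, hσc, neg_neg]
  · rw [mul_smul, hτ b (IntermediateField.subset_adjoin _ _ (by simp)), hσb]

lemma hasGenusCharacter [Fact p.Prime] (h : IsModelF1 a b c p q s) : HasGenusCharacter K p :=
  hasGenusCharacter_of_sq_eq (by have := h.p_mod_eight; omega) h.not_p_dvd_q h.isSquare_q h.sq_b

lemma exists_ideal_sq_eq (h : IsModelF1 a b c p q s) : ∃ (α : 𝓞 K) (D : (Ideal (𝓞 K))⁰),
    (α : K) = a ∧ α ^ 2 = 2 ∧ (D : Ideal (𝓞 K)) ^ 2 = Ideal.span {α} := by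
  obtain ⟨α, hα, hsq⟩ := exists_integer_sq_eq (a := a) (d := 2) (by exact_mod_cast h.sq_a)
  obtain ⟨D, hD⟩ := exists_ideal_sq_eq_span_sqrt_two (by exact_mod_cast hsq) h.sq_b
    (by rw [Nat.mul_mod, h.q_mod_four, show p % 4 = 1 by have := h.p_mod_eight; omega])
  exact ⟨α, D, hα, by exact_mod_cast hsq, hD⟩

lemma norm_class_dichotomy [Fact p.Prime] [IsTotallyReal K] (h : IsModelF1 a b c p q s)
    {α : 𝓞 K} {D : (Ideal (𝓞 K))⁰} (hα : (α : K) = a)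
    (hD : (D : Ideal (𝓞 K)) ^ 2 = Ideal.span {α}) {σ : K ≃ₐ[ℚ] K}
    (hσ : ∀ u ∈ IntermediateField.adjoin ℚ {a, b}, σ • u = u) (hσc : σ • c = -c)
    {x : ClassGroup (𝓞 K)} (hx : x ^ 4 = 1) :
    (genusCharacter h.hasGenusCharacter x = 1 → x * smulClass σ x = 1) ∧
    (genusCharacter h.hasGenusCharacter x ≠ 1 → x * smulClass σ x = ClassGroup.mk0 D) := by
  have : IsTotallyReal (IntermediateField.adjoin ℚ {a, b}) := .of_algebra _ K
  rw [← h.isSqrtExtension_pq_ps.extendedHom_relNormClass (fun u => hσ u u.2) hσc]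
  exact h.isBiquadratic_pq.extendedHom_relNormClass h.prime_q
    (fun hpq => h.not_p_dvd_q hpq.dvd) h.p_mod_eight h.q_mod_four h.isSquare_q _ hα hD hx

lemma sq_eq_one_of_pow_four_eq_one [IsTotallyReal K] (h : IsModelF1 a b c p q s) (hq8 : q % 8 = 3)
    {x : ClassGroup (𝓞 K)} (hx : x ^ 4 = 1) : x ^ 2 = 1 := by
  have : Fact p.Prime := ⟨h.prime_p⟩
  have : IsTotallyReal (IntermediateField.adjoin ℚ {a, b * c / p}) := .of_algebra _ K
  obtain ⟨α, D, hα, -, hD⟩ := h.exists_ideal_sq_eq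
  obtain ⟨σ, τ, hσ, hσb, hτ, hτc, hστ, hστb⟩ := h.exists_algEquiv
  have hnorm : relNormClass (IntermediateField.adjoin ℚ {a, b * c / p}) K (smulClass τ x) = 1 :=
    eq_one_of_pow_four_eq_one (h.isBiquadratic_qs.twoTorsion_classGroup_eq_bot h.prime_q
      h.prime_s h.q_ne_s hq8 h.s_mod_four) (by rw [← map_pow, ← map_pow, hx, map_one, map_one])
  have hk : smulClass τ x * smulClass (σ * τ) x = 1 := by
    rw [smulClass_mul, ← (h.isSqrtExtension_qs h.sq_b h.not_p_dvd_q).extendedHom_relNormClass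
      (fun u => hσ u u.2) hσb, hnorm, map_one]
  have hsq : x ^ 2 = (x * smulClass τ x) * (x * smulClass (σ * τ) x) := by
    rw [mul_mul_mul_comm, hk, mul_one, sq]
  obtain ⟨hτ1, hτD⟩ := h.norm_class_dichotomy hα hD hτ hτc hx
  obtain ⟨hστ1, hστD⟩ := h.swap.norm_class_dichotomy hα hD hστ hστb hx
  rw [hsq]
  by_cases hχ : genusCharacter h.hasGenusCharacter x = 1
  · rw [hτ1 hχ, hστ1 hχ, mul_one]
  · rw [hτD hχ, hστD hχ, ← sq, mem_twoTorsion.1 (mk0_mem_twoTorsion hD)]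

end IsModelF1

end Exponent

section Pell

variable {F : Type*} [Field F]

lemma isSquare_of_isCoprime_of_mul_eq_sq (hF : IsSquare (-1 : F)) {m n w : ℤ}
    (hmn : IsCoprime m n) (h : m * n = w ^ 2) : IsSquare (m : F) := by
  obtain ⟨u, rfl | rfl⟩ := Int.sq_of_isCoprime hmn h
  · rw [Int.cast_pow]
    exact IsSquare.sq _
  · simpa using hF.mul (IsSquare.sq (u : F))

lemma isSquare_of_isCoprime_of_mul_eq_prime_mul {r : ℕ} (hr : r.Prime) (hrF : IsSquare (r : F))
    {z : ℤ} (hz : ∀ {m n : ℤ}, IsCoprime m n → m * n = z → IsSquare (m : F)) {m n : ℤ}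
    (hmn : IsCoprime m n) (h : m * n = r * z) : IsSquare (m : F) := by
  have hr0 : (r : ℤ) ≠ 0 := Nat.cast_ne_zero.2 hr.ne_zero
  obtain ⟨m', rfl⟩ | ⟨n', rfl⟩ :=
    (Nat.prime_iff_prime_int.1 hr).dvd_or_dvd (Dvd.intro _ h.symm)
  · rw [Int.cast_mul, Int.cast_natCast]
    exact hrF.mul (hz hmn.of_mul_left_right (mul_left_cancel₀ hr0 (by rw [← h, mul_assoc])))
  · exact hz hmn.of_mul_right_right (mul_left_cancel₀ hr0 (by rw [← h, mul_left_comm]))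

lemma exists_eq_of_pell_of_even {t w n : ℤ} (hn : n % 4 = 1) (ht : Even t)
    (h : t ^ 2 - 4 = n * w ^ 2) : ∃ i u, t = 4 * i + 2 ∧ w = 4 * u := by
  obtain ⟨x, rfl⟩ : ∃ x, n = 4 * x + 1 := ⟨n / 4, by omega⟩
  obtain ⟨j, rfl⟩ := ht.two_dvd
  obtain ⟨v, rfl⟩ : 2 ∣ w := by
    have hw : Even ((4 * x + 1) * w ^ 2) := h ▸ ⟨2 * j ^ 2 - 2, by ring⟩
    rw [Int.even_mul, Int.even_pow' two_ne_zero] at hw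
    exact (hw.resolve_left (Int.not_even_iff_odd.2 ⟨2 * x, by ring⟩)).two_dvd
  have hmod : j ^ 2 - v ^ 2 = 4 * (x * v ^ 2) + 1 := by linarith
  obtain ⟨i, rfl | rfl⟩ := Int.even_or_odd' j <;> obtain ⟨u, rfl | rfl⟩ := Int.even_or_odd' v <;>
    ring_nf at hmod
  · omega
  · omega
  · exact ⟨i, u, by ring, by ring⟩
  · omega

lemma isSquare_add_two_of_pell {q s : ℕ} (hq : q.Prime) (hs : s.Prime) (hqs : q * s % 4 = 1)
    (hF : IsSquare (-1 : F)) (hqF : IsSquare (q : F)) (hsF : IsSquare (s : F)) {t w : ℤ}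
    (h : t ^ 2 - 4 = (q * s : ℕ) * w ^ 2) : IsSquare ((t : F) + 2) := by
  have hfactor {m n w : ℤ} (hmn : IsCoprime m n) (h : m * n = q * (s * w ^ 2)) :
      IsSquare (m : F) :=
    isSquare_of_isCoprime_of_mul_eq_prime_mul hq hqF
      (isSquare_of_isCoprime_of_mul_eq_prime_mul hs hsF
        (isSquare_of_isCoprime_of_mul_eq_sq hF)) hmn h
  rw [Nat.cast_mul] at h
  obtain ht | ⟨j, rfl⟩ := Int.even_or_odd t
  · obtain ⟨i, u, rfl, rfl⟩ := exists_eq_of_pell_of_even (by exact_mod_cast hqs) ht h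
    have hi : IsSquare ((i + 1 : ℤ) : F) :=
      hfactor (n := i) (w := u) ⟨1, -1, by ring⟩ (by linarith)
    rw [show ((4 * i + 2 : ℤ) : F) + 2 = 2 ^ 2 * ((i + 1 : ℤ) : F) by push_cast; ring]
    exact (IsSquare.sq _).mul hi
  · have hcop : IsCoprime (2 * j + 1 + 2) (2 * j + 1 - 2) :=
      by
      have h2 : IsCoprime (2 * j + 1 - 2) 2 := ⟨-1, j, by ring⟩
      obtain ⟨u, v, huv⟩ := h2.mul_right h2
      exact ⟨v, u - v, by linarith⟩
    exact_mod_cast hfactor hcop (w := w) (by linarith)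

lemma exists_intCast_eq_of_squarefree_mul_sq {n : ℕ} (hn : Squarefree n) {w : ℚ} {z : ℤ}
    (h : n * w ^ 2 = z) : ∃ v : ℤ, w = v := by
  have hn0 : (n : ℚ) ≠ 0 := Nat.cast_ne_zero.2 hn.ne_zero
  obtain ⟨m, hm⟩ := IsIntegrallyClosed.exists_algebraMap_eq_of_isIntegral_pow (R := ℤ)
    (x := n * w) two_pos (by
      rw [show (n * w) ^ 2 = algebraMap ℤ ℚ (n * z) by simp [← h]; ring]
      exact isIntegral_algebraMap)
  obtain ⟨v, rfl⟩ : (n : ℤ) ∣ m := by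
    refine ((Int.squarefree_natCast.2 hn).dvd_pow_iff_dvd two_ne_zero).1 ⟨z, ?_⟩
    have : (m : ℚ) ^ 2 = n * z := by rw [← h, show (m : ℚ) = n * w from hm]; ring
    exact_mod_cast this
  refine ⟨v, mul_left_cancel₀ hn0 ?_⟩
  simpa using hm.symm

end Pell

section QuadraticUnit

variable {E F : Type*} [Field E] [NumberField E] [Field F]

lemma norm_unit_eq_one {q d : ℕ} [Fact q.Prime] (hq4 : q % 4 = 3) (hd : ¬ q ∣ d) {θ : E}
    (hθ : θ ^ 2 = (q * d : ℕ)) (η : (𝓞 E)ˣ) : Algebra.norm ℚ (η : E) = 1 := by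
  have habs := NumberField.isUnit_iff_norm.1 η.isUnit
  rw [RingOfIntegers.coe_norm, abs_eq zero_le_one] at habs
  have hqd : ((q * d : ℕ) : ℚ_[q]) ≠ 0 :=
    Nat.cast_ne_zero.2 (mul_ne_zero (Fact.out : q.Prime).ne_zero (by rintro rfl; simp at hd))
  exact habs.resolve_right
    (norm_ne_neg_one (algebraMap ℚ ℚ_[q]) hqd (padic_sq_sub_mul_sq_ne_neg_one hq4 hd) hθ _)

lemma IsSqrtExtension.exists_pell {θ : E} {n : ℕ} (h : IsSqrtExtension θ (n : ℚ))
    (hn : Squarefree n) {η : (𝓞 E)ˣ} (hη : Algebra.norm ℚ (η : E) = 1) :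
    ∃ t w : ℤ, t ^ 2 - 4 = n * w ^ 2 ∧ (1 + (η : E)) ^ 2 = (t + 2) * η := by
  obtain ⟨x, y, hxy⟩ := h.exists_eq_add_mul (η : E)
  have hnorm : x ^ 2 - n * y ^ 2 = 1 := by rw [← h.norm_add_mul, ← hxy, hη]
  have hmul : (η : E) * (algebraMap ℚ E x - algebraMap ℚ E y * θ) = 1 := by
    have := congrArg (algebraMap ℚ E) hnorm
    simp only [map_sub, map_mul, map_pow, map_one] at this
    rw [hxy, ← this]
    linear_combination -(algebraMap ℚ E y) ^ 2 * h.sq_eq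
  have hinv : ((η⁻¹ : (𝓞 E)ˣ) : E) = algebraMap ℚ E x - algebraMap ℚ E y * θ := by
    have hη0 : (η : E) ≠ 0 := left_ne_zero_of_mul_eq_one hmul
    refine mul_left_cancel₀ hη0 (Eq.trans ?_ hmul.symm)
    rw [← map_mul (algebraMap (𝓞 E) E), Units.mul_inv, map_one]
  have hsum : algebraMap ℚ E (2 * x) = algebraMap (𝓞 E) E (η + (η⁻¹ : (𝓞 E)ˣ)) := by
    rw [map_add, hinv, hxy, map_mul, map_ofNat]
    ring
  obtain ⟨t, ht⟩ : ∃ t : ℤ, algebraMap ℤ ℚ t = 2 * x := IsIntegrallyClosed.isIntegral_iff.1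
    ((isIntegral_algebraMap_iff (algebraMap ℚ E).injective).1
      (hsum ▸ RingOfIntegers.isIntegral_coe _))
  replace ht : (t : ℚ) = 2 * x := ht
  have hpell : (n : ℚ) * (2 * y) ^ 2 = (t ^ 2 - 4 : ℤ) := by
    push_cast
    rw [ht]
    linear_combination -4 * hnorm
  obtain ⟨w, hw⟩ := exists_intCast_eq_of_squarefree_mul_sq hn hpell
  rw [hw] at hpell
  refine ⟨t, w, by exact_mod_cast hpell.symm, ?_⟩
  have htE : (t : E) = η + ((η⁻¹ : (𝓞 E)ˣ) : E) := by
    rw [← map_add (algebraMap (𝓞 E) E), ← hsum, ← ht, map_intCast]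
  rw [htE, hinv]
  linear_combination -hmul

/-- A unit `η` of norm one satisfies `(1 + η)² = (Tr η + 2) η`, so that it is, up to squares,
the rational integer `Tr η + 2`. -/
lemma IsSqrtExtension.isSquare_map_unit {q s : ℕ} [Fact q.Prime] (hs : s.Prime) (hqs : q ≠ s)
    (hq4 : q % 4 = 3) (hs4 : s % 4 = 3) {θ : E} (h : IsSqrtExtension θ ((q * s : ℕ) : ℚ))
    (f : E →+* F) (hF : IsSquare (-1 : F)) (hqF : IsSquare (q : F)) (hsF : IsSquare (s : F))
    (η : (𝓞 E)ˣ) : IsSquare (f η) := by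
  have hq : q.Prime := Fact.out
  have hcop : q.Coprime s := (Nat.coprime_primes hq hs).2 hqs
  obtain ⟨t, w, htw, hη⟩ := h.exists_pell
    ((Nat.squarefree_mul hcop).2 ⟨hq.squarefree, hs.squarefree⟩)
    (norm_unit_eq_one hq4 (fun hd => hqs ((Nat.prime_dvd_prime_iff_eq hq hs).1 hd))
      (h.sq_eq.trans (map_natCast _ _)) η)
  obtain hη1 | hη1 := eq_or_ne (1 + (η : E)) 0
  · rwa [eq_neg_of_add_eq_zero_right hη1, map_neg, map_one]
  · have ht := isSquare_add_two_of_pell hq hs (by simp [Nat.mul_mod, hq4, hs4]) hF hqF hsF htw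
    have hfη : f (1 + (η : E)) ^ 2 = (t + 2) * f η := by
      rw [← map_pow, hη, map_mul, map_add, map_intCast, map_ofNat]
    have ht0 : (t + 2 : F) ≠ 0 := left_ne_zero_of_mul (hfη ▸ pow_ne_zero 2
      ((map_ne_zero f).2 hη1))
    rw [eq_div_of_mul_eq ht0 ((mul_comm _ _).trans hfη.symm)]
    exact (IsSquare.sq _).div ht

end QuadraticUnit

section NonPrincipal

open nonZeroDivisors

variable {K : Type*} [Field K]

lemma associated_norm_of_pow_finrank {k : Type*} [Field k] [NumberField k] [NumberField K]
    [Algebra k K] {β : 𝓞 K} {x : 𝓞 k}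
    (h : Associated (β ^ Module.finrank k K) (algebraMap (𝓞 k) (𝓞 K) x)) :
    Associated (RingOfIntegers.norm k β) x := by
  have hd : Module.finrank k K ≠ 0 := Module.finrank_pos.ne'
  have hnorm := h.map (RingOfIntegers.norm k)
  rw [map_pow, RingOfIntegers.norm_algebraMap] at hnorm
  exact associated_of_dvd_dvd ((IsIntegrallyClosed.pow_dvd_pow_iff hd).1 hnorm.dvd)
    ((IsIntegrallyClosed.pow_dvd_pow_iff hd).1 hnorm.symm.dvd)

namespace IsModelF1

variable [NumberField K] {p q s : ℕ} {a b c : K}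

lemma isSquare_padic [Fact p.Prime] (h : IsModelF1 a b c p q s) : IsSquare (q : ℚ_[p]) := by
  refine mod_cast isSquare_intCast_padic h.p_ne_two (u := q) ?_ (by exact_mod_cast h.isSquare_q)
  exact_mod_cast mt (ZMod.natCast_eq_zero_iff q p).1 h.not_p_dvd_q

lemma isSquare_neg_one_padic [Fact p.Prime] (h : IsModelF1 a b c p q s) :
    IsSquare (-1 : ℚ_[p]) := by
  refine mod_cast isSquare_intCast_padic h.p_ne_two (u := -1) (by simp) ?_
  rw [Int.cast_neg, Int.cast_one, ZMod.exists_sq_eq_neg_one_iff]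
  have := h.p_mod_eight
  omega

lemma two_mul_sq_ne [Fact p.Prime] (h : IsModelF1 a b c p q s) {x y z : ℚ_[p]} (hz : z ≠ 0) :
    2 * z ^ 2 ≠ x ^ 2 - p * q * y ^ 2 := fun hxyz => by
  have hp8 := h.p_mod_eight
  have hmem := mem_primeSquareSubgroup_of_eq_sq_sub (by omega) h.isSquare_padic
    (t := Units.mk0 2 two_ne_zero) (x := x / z) (y := y / z)
    (by rw [Units.val_mk0]; field_simp; exact hxyz)
  have hp2 : ¬ (p : ℤ) ∣ 2 := fun hd =>
    h.p_ne_two ((Nat.prime_dvd_prime_iff_eq h.prime_p Nat.prime_two).1 (by exact_mod_cast hd))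
  have hsq := isSquare_zmod_of_mem_primeSquareSubgroup hp2 (by simp) hmem
  exact not_isSquare_two_zmod (.inr hp8) (by exact_mod_cast hsq)

lemma isSqrtExtension_sqrt_qs (h : IsModelF1 a b c p q s) :
    IsSqrtExtension (IntermediateField.AdjoinSimple.gen ℚ (b * c / p)) ((q * s : ℕ) : ℚ) :=
  isSqrtExtension_gen (h.sq_sqrt_qs.trans (map_natCast (algebraMap ℚ K) _).symm)
    (not_isSquare_prime_mul h.prime_q h.not_q_dvd_s)

lemma finrank_sqrt_qs (h : IsModelF1 a b c p q s) :
    Module.finrank (IntermediateField.adjoin ℚ {b * c / p}) K = 4 := by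
  have := Module.finrank_mul_finrank ℚ (IntermediateField.adjoin ℚ {b * c / p}) K
  rw [h.isSqrtExtension_sqrt_qs.finrank_eq_two, h.finrank_eq_eight] at this
  omega

lemma not_isSquare_pq (h : IsModelF1 a b c p q s) :
    ¬ IsSquare ((p * q : ℕ) : IntermediateField.adjoin ℚ {b * c / p}) := by
  have hmul : ¬ IsSquare (((q * s : ℕ) : ℚ) * ((p * q : ℕ) : ℚ)) := by
    rw [← Nat.cast_mul, mul_left_comm]
    refine not_isSquare_prime_mul h.prime_p ?_
    rw [h.prime_p.dvd_mul]
    exact not_or.2 ⟨h.not_p_dvd_qs, h.not_p_dvd_q⟩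
  simpa only [map_natCast] using h.isSqrtExtension_sqrt_qs.not_isSquare_algebraMap
    (not_isSquare_prime_mul h.prime_p h.not_p_dvd_q) hmul

/-- Otherwise `2` would be, up to a unit of `ℚ(√(qs))`, a norm from `K` to `ℚ(√(qs))`; but such
units become squares in `ℚ_p`, while `2` is not a norm from `ℚ_p(√(pq))`. -/
lemma mk0_ne_one (h : IsModelF1 a b c p q s) {α : 𝓞 K} (hα : α ^ 2 = 2) {D : (Ideal (𝓞 K))⁰}
    (hD : (D : Ideal (𝓞 K)) ^ 2 = Ideal.span {α}) : ClassGroup.mk0 D ≠ 1 := by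
  have := Fact.mk h.prime_p
  have := Fact.mk h.prime_q
  intro hD1
  obtain ⟨⟨β, hβ⟩⟩ := (ClassGroup.mk0_eq_one_iff D.2).1 hD1
  replace hβ : (D : Ideal (𝓞 K)) = Ideal.span {β} := hβ
  let E := IntermediateField.adjoin ℚ {b * c / p}
  have hE := h.isSqrtExtension_sqrt_qs
  obtain ⟨η, hη⟩ : Associated 2 (RingOfIntegers.norm E β) := by
    refine (associated_norm_of_pow_finrank ?_).symm
    rw [hβ, Ideal.span_singleton_pow, Ideal.span_singleton_eq_span_singleton] at hD
    rw [h.finrank_sqrt_qs, pow_mul β 2 2, map_ofNat, ← hα]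
    exact hD.pow_pow
  obtain ⟨x, y, hxy⟩ := exists_norm_eq_sq_sub_mul_sq (h.sq_b.trans (map_natCast _ _).symm)
    h.not_isSquare_pq (β : K)
  obtain ⟨f⟩ := hE.nonempty_algHom (F := ℚ_[p]) (by
    rw [map_natCast, Nat.cast_mul]
    exact h.isSquare_padic.mul h.swap.isSquare_padic)
  obtain ⟨z, hz⟩ := hE.isSquare_map_unit h.prime_s h.q_ne_s h.q_mod_four h.s_mod_four
    (f : E →+* ℚ_[p]) h.isSquare_neg_one_padic h.isSquare_padic h.swap.isSquare_padic η
  have hz0 : z ≠ 0 := by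
    rintro rfl
    exact (map_ne_zero (f : E →+* ℚ_[p])).2 (RingOfIntegers.coe_ne_zero_iff.2 η.ne_zero)
      (hz.trans (mul_zero 0))
  refine h.two_mul_sq_ne (x := f x) (y := f y) hz0 ?_
  have hfnorm := congrArg (fun u : 𝓞 E => f (u : E)) hη
  change f (algebraMap (𝓞 E) E (2 * η)) = _ at hfnorm
  rw [map_mul, map_ofNat, map_mul, map_ofNat, RingOfIntegers.coe_norm, hxy] at hfnorm
  rw [sq z, ← hz]
  refine hfnorm.trans ?_
  simp

end IsModelF1

end NonPrincipal

section SplitPrime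

open nonZeroDivisors

lemma exists_coprime_not_isSquare {T : Finset ℕ} (hT : ∀ r ∈ T, r.Prime) (h2 : 2 ∉ T) :
    ∃ z : ℕ, z.Coprime (8 * ∏ r ∈ T, r) ∧ z % 8 = 1 ∧ ∀ r ∈ T, ¬ IsSquare (z : ZMod r) := by
  induction T using Finset.induction with
  | empty => exact ⟨1, by simp⟩
  | insert r T hrT ih =>
    obtain ⟨hr, hT⟩ := Finset.forall_mem_insert _ _ _ |>.1 hT
    obtain ⟨hr2, h2⟩ := not_or.1 (mt Finset.mem_insert.2 h2)
    obtain ⟨z, hz, hz8, hzT⟩ := ih hT h2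
    have := Fact.mk hr
    obtain ⟨u, hu⟩ := FiniteField.exists_nonsquare (F := ZMod r) (by
      rw [ZMod.ringChar_zmod_n]
      exact Ne.symm hr2)
    have hcop : (8 * ∏ r ∈ T, r).Coprime r := Nat.Coprime.mul_left
      (((Nat.coprime_primes Nat.prime_two hr).2 hr2).pow_left 3)
      (Nat.Coprime.prod_left fun t ht =>
        (Nat.coprime_primes (hT t ht) hr).2 (by rintro rfl; exact hrT ht))
    obtain ⟨x, hxz, hxu⟩ := Nat.chineseRemainder hcop z u.val
    have hx (d : ℕ) (hd : d ∣ 8 * ∏ r ∈ T, r) : x ≡ z [MOD d] := hxz.of_dvd hd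
    have hxr : (x : ZMod r) = u := by
      rw [(ZMod.natCast_eq_natCast_iff _ _ _).2 hxu, ZMod.natCast_zmod_val]
    refine ⟨x, ?_, Eq.trans (hx 8 (dvd_mul_right _ _)) hz8, fun t ht => ?_⟩
    · rw [Finset.prod_insert hrT, mul_left_comm, mul_comm]
      refine Nat.Coprime.mul_right (hxz.gcd_eq.trans hz) ?_
      refine ((ZMod.isUnit_iff_coprime x r).1 (isUnit_iff_ne_zero.2 fun h0 => hu ?_))
      rw [← hxr, h0]
      exact IsSquare.zero
    · obtain rfl | ht := Finset.mem_insert.1 ht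
      · rwa [hxr]
      · rw [(ZMod.natCast_eq_natCast_iff _ _ _).2
          (hx t ((Finset.dvd_prod_of_mem _ ht).mul_left 8))]
        exact hzT t ht

lemma exists_prime_not_isSquare {T : Finset ℕ} (hT : ∀ r ∈ T, r.Prime) (h2 : 2 ∉ T) (N : ℕ) :
    ∃ ℓ : ℕ, ℓ.Prime ∧ N < ℓ ∧ ℓ % 8 = 1 ∧ ∀ r ∈ T, ¬ IsSquare (ℓ : ZMod r) := by
  obtain ⟨z, hz, hz8, hzT⟩ := exists_coprime_not_isSquare hT h2
  have hpos : 8 * ∏ r ∈ T, r ≠ 0 :=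
    mul_ne_zero (by norm_num) (Finset.prod_ne_zero_iff.2 fun r hr => (hT r hr).ne_zero)
  obtain ⟨ℓ, hℓN, hℓ, hℓz⟩ := Nat.forall_exists_prime_gt_and_modEq N hpos hz
  refine ⟨ℓ, hℓ, hℓN, Eq.trans (hℓz.of_mul_right _) hz8, fun r hr => ?_⟩
  rw [(ZMod.natCast_eq_natCast_iff _ _ _).2
    (hℓz.of_dvd ((Finset.dvd_prod_of_mem _ hr).mul_left 8))]
  exact hzT r hr

lemma isSquare_mul_of_not_isSquare {F : Type*} [Field F] [Finite F] {x y : F}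
    (hx : ¬ IsSquare x) (hy : ¬ IsSquare y) : IsSquare (x * y) := by
  classical
  have := Fintype.ofFinite F
  rw [← quadraticChar_neg_one_iff_not_isSquare] at hx hy
  by_contra h
  rw [← quadraticChar_neg_one_iff_not_isSquare, map_mul, hx, hy] at h
  norm_num at h

lemma exists_ideal_absNorm_eq {K : Type*} [Field K] [NumberField K] {ℓ : ℕ} [Fact ℓ.Prime]
    (f : K →+* ℚ_[ℓ]) : ∃ I : (Ideal (𝓞 K))⁰, Ideal.absNorm (I : Ideal (𝓞 K)) = ℓ := by
  have hnorm (x : 𝓞 K) : ‖f x‖ ≤ 1 := by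
    have hint : IsIntegral ℤ_[ℓ] (f x) :=
      ((RingOfIntegers.isIntegral_coe x).map (f.toIntAlgHom)).tower_top
    obtain ⟨y, hy⟩ := IsIntegrallyClosed.isIntegral_iff.1 hint
    rw [← hy]
    exact y.2
  let g : 𝓞 K →+* ℤ_[ℓ] :=
    (f.comp (algebraMap (𝓞 K) K)).codRestrict (PadicInt.subring ℓ) hnorm
  have hsurj : Function.Surjective (PadicInt.toZMod.comp g) := ZMod.ringHom_surjective _
  have hcard : Ideal.absNorm (RingHom.ker (PadicInt.toZMod.comp g)) = ℓ := by
    rw [Ideal.absNorm_apply, Submodule.cardQuot_apply,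
      Nat.card_congr (RingHom.quotientKerEquivOfSurjective hsurj).toEquiv, Nat.card_zmod]
  exact ⟨⟨_, Ideal.absNorm_ne_zero_iff_mem_nonZeroDivisors.1
    (hcard.trans_ne (Fact.out : ℓ.Prime).ne_zero)⟩, hcard⟩

end SplitPrime

section ClassGroupCard

open nonZeroDivisors

lemma sq_eq_one_of_pow_two_pow_eq_one {G : Type*} [Monoid G]
    (hG : ∀ x : G, x ^ 4 = 1 → x ^ 2 = 1) {n : ℕ} {x : G} (hx : x ^ 2 ^ n = 1) : x ^ 2 = 1 := by
  induction n generalizing x with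
  | zero => rw [pow_zero, pow_one] at hx; rw [hx, one_pow]
  | succ n ih => exact hG x (by rw [show 4 = 2 * 2 from rfl, pow_mul, ih (by
      rw [← pow_mul, ← pow_succ', hx])])

lemma exists_odd_pow_mem_twoTorsion {G : Type*} [CommGroup G] [Finite G]
    (hG : ∀ x : G, x ^ 4 = 1 → x ^ 2 = 1) (x : G) : ∃ m, Odd m ∧ x ^ m ∈ twoTorsion G := by
  obtain ⟨n, m, hm, hnm⟩ := Nat.exists_eq_two_pow_mul_odd (orderOf_pos x).ne'
  exact ⟨m, hm, mem_twoTorsion.2 (sq_eq_one_of_pow_two_pow_eq_one hG (n := n) (by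
    rw [← pow_mul, mul_comm, ← hnm, pow_orderOf_eq_one]))⟩

lemma four_le_card_twoTorsion {G Q : Type*} [CommGroup G] [Finite G] [Group Q]
    (hG : ∀ x : G, x ^ 4 = 1 → x ^ 2 = 1) (hQ : ∀ x : Q, x ^ 2 = 1) (χ : G →* Q) {d x : G}
    (hd : d ∈ twoTorsion G) (hd1 : d ≠ 1) (hχd : χ d = 1) (hχx : χ x ≠ 1) :
    4 ≤ Nat.card (twoTorsion G) := by
  obtain ⟨m, hm, hxm⟩ := exists_odd_pow_mem_twoTorsion hG x
  have hχ : χ (x ^ m) ≠ 1 := by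
    obtain ⟨t, rfl⟩ := hm
    rwa [map_pow, pow_succ, pow_mul, hQ, one_pow, one_mul]
  refine four_le_card_of_ne_one (x := (⟨d, hd⟩ : twoTorsion G)) (y := ⟨x ^ m, hxm⟩) ?_ ?_ ?_ ?_
  · exact fun h => hd1 (congrArg Subtype.val h)
  · exact fun h => hχ (by rw [show x ^ m = 1 from congrArg Subtype.val h, map_one])
  · intro h
    have := congrArg χ (show d * x ^ m = 1 from congrArg Subtype.val h)
    rw [map_mul, hχd, one_mul, map_one] at this
    exact hχ this
  · exact Subtype.ext ((sq d).symm.trans (mem_twoTorsion.1 hd))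

namespace IsModelF1

variable {K : Type*} [Field K] [NumberField K] {p q s : ℕ} {a b c : K}

lemma nonempty_algHom_padic (h : IsModelF1 a b c p q s) {ℓ : ℕ} [Fact ℓ.Prime]
    (hℓ8 : ℓ % 8 = 1) (hp : ¬ IsSquare (p : ZMod ℓ)) (hq : ¬ IsSquare (q : ZMod ℓ))
    (hs : ¬ IsSquare (s : ZMod ℓ)) : Nonempty (K →ₐ[ℚ] ℚ_[ℓ]) := by
  have hℓ2 : ℓ ≠ 2 := by omega
  have hpadic {d : ℕ} (hd0 : (d : ZMod ℓ) ≠ 0) (hd : IsSquare (d : ZMod ℓ)) :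
      IsSquare (algebraMap ℚ ℚ_[ℓ] d) := by
    simpa using isSquare_intCast_padic hℓ2 (u := d) (by simpa using hd0) (by simpa using hd)
  have hne {r : ℕ} (hr : ¬ IsSquare (r : ZMod ℓ)) : (r : ZMod ℓ) ≠ 0 := by
    rintro h0
    exact hr (h0 ▸ IsSquare.zero)
  have hmul {r : ℕ} (hr : ¬ IsSquare (r : ZMod ℓ)) : IsSquare (algebraMap ℚ ℚ_[ℓ] (p * r : ℕ)) :=
    hpadic (by rw [Nat.cast_mul]; exact mul_ne_zero (hne hp) (hne hr))
      (by rw [Nat.cast_mul]; exact isSquare_mul_of_not_isSquare hp hr)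
  refine nonempty_algHom_of_sq_eq h.adjoin_eq_top ?_
  rintro x (rfl | rfl | rfl)
  · refine ⟨(2 : ℕ), by simp [h.sq_a], hpadic ?_ ?_⟩
    · rwa [Ne, ZMod.natCast_eq_zero_iff, Nat.prime_dvd_prime_iff_eq Fact.out Nat.prime_two]
    · exact_mod_cast (ZMod.exists_sq_eq_two_iff hℓ2).2 (.inl hℓ8)
  · exact ⟨_, h.sq_b.trans (map_natCast _ _).symm, hmul hq⟩
  · exact ⟨_, h.sq_c.trans (map_natCast _ _).symm, hmul hs⟩

lemma exists_genusCharacter_ne_one [Fact p.Prime] (h : IsModelF1 a b c p q s) :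
    ∃ x, genusCharacter h.hasGenusCharacter x ≠ 1 := by
  have := Fact.mk h.prime_q
  have := Fact.mk h.prime_s
  obtain ⟨ℓ, hℓ, hℓp, hℓ8, hres⟩ := exists_prime_not_isSquare (T := {p, q, s})
    (by simp [h.prime_p, h.prime_q, h.prime_s])
    (by simp [h.p_ne_two.symm, h.q_ne_two.symm, h.swap.q_ne_two.symm]) p
  have := Fact.mk hℓ
  have hrec (r : ℕ) [Fact r.Prime] (hr2 : r ≠ 2) (hr : r ∈ ({p, q, s} : Finset ℕ)) :
      ¬ IsSquare (r : ZMod ℓ) :=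
    mt (ZMod.exists_sq_eq_prime_iff_of_mod_four_eq_one (by omega) hr2).1 (hres r hr)
  obtain ⟨f⟩ := h.nonempty_algHom_padic hℓ8 (hrec p h.p_ne_two (by simp))
    (hrec q h.q_ne_two (by simp)) (hrec s h.swap.q_ne_two (by simp))
  obtain ⟨I, hI⟩ := exists_ideal_absNorm_eq (f : K →+* ℚ_[ℓ])
  refine ⟨ClassGroup.mk0 I, ?_⟩
  rw [genusCharacter_mk0, Ne, normClass_eq_one_iff_isSquare h.p_ne_two, hI]
  · exact hres p (by simp)
  · rw [hI, Nat.prime_dvd_prime_iff_eq h.prime_p hℓ]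
    exact hℓp.ne

lemma genusCharacter_eq_one [Fact p.Prime] (h : IsModelF1 a b c p q s) {α : 𝓞 K}
    (hα : α ^ 2 = 2) {D : (Ideal (𝓞 K))⁰} (hD : (D : Ideal (𝓞 K)) ^ 2 = Ideal.span {α}) :
    genusCharacter h.hasGenusCharacter (ClassGroup.mk0 D) = 1 := by
  have hnorm : Ideal.absNorm (D : Ideal (𝓞 K)) = 4 := by
    refine Nat.pow_left_injective (n := 4) (by norm_num)
      ((absNorm_pow_four_of_sq_eq_span hα hD).trans ?_)
    rw [h.finrank_eq_eight]
    norm_num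
  rw [genusCharacter_mk0, normClass_eq_one_iff_isSquare h.p_ne_two, hnorm]
  · exact ⟨2, by norm_num⟩
  · rw [hnorm, show 4 = 2 ^ 2 from rfl]
    exact fun hd => h.p_ne_two
      ((Nat.prime_dvd_prime_iff_eq h.prime_p Nat.prime_two).1 (h.prime_p.dvd_of_dvd_pow hd))

lemma card_twoTorsion_classGroup [IsTotallyReal K] (h : IsModelF1 a b c p q s) (hq8 : q % 8 = 3) :
    Nat.card (twoTorsion (ClassGroup (𝓞 K))) = 4 := by
  have := Fact.mk h.prime_p
  obtain ⟨α, D, -, hα, hD⟩ := h.exists_ideal_sq_eq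
  obtain ⟨x, hx⟩ := h.exists_genusCharacter_ne_one
  exact (h.card_twoTorsion_classGroup_le_four hq8).antisymm
    (four_le_card_twoTorsion (fun _ => h.sq_eq_one_of_pow_four_eq_one hq8)
      sq_eq_one_of_primeSquareSubgroup _ (mk0_mem_twoTorsion hD) (h.mk0_ne_one hα hD)
      (h.genusCharacter_eq_one hα hD) hx)

end IsModelF1

end ClassGroupCard

lemma sylow_two_eq_twoTorsion {G : Type*} [CommGroup G] (hG : ∀ x : G, x ^ 4 = 1 → x ^ 2 = 1)
    (P : Sylow 2 G) : (P : Subgroup G) = twoTorsion G := by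
  have htors : IsPGroup 2 (twoTorsion G) := fun x => ⟨1, by
    rw [pow_one]
    exact Subtype.ext (mem_twoTorsion.1 x.2)⟩
  refine (P.is_maximal' htors fun x hx => ?_).symm
  obtain ⟨n, hn⟩ := P.isPGroup' ⟨x, hx⟩
  exact mem_twoTorsion.2 (sq_eq_one_of_pow_two_pow_eq_one hG (congrArg Subtype.val hn))

lemma isKleinFour_twoTorsion {G : Type*} [CommGroup G] (hcard : Nat.card (twoTorsion G) = 4) :
    IsKleinFour (twoTorsion G) where
  card_four := hcard
  exponent_two := by
    have hdvd : Monoid.exponent (twoTorsion G) ∣ 2 :=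
      Monoid.exponent_dvd_of_forall_pow_eq_one fun x => Subtype.ext (mem_twoTorsion.1 x.2)
    refine ((Nat.dvd_prime Nat.prime_two).1 hdvd).resolve_left fun hone => ?_
    have := Monoid.exp_eq_one_iff.1 hone
    have := Nat.card_of_subsingleton (1 : twoTorsion G)
    omega

lemma isKleinFour_zmod_two_prod :
    IsKleinFour (Multiplicative (ZMod 2) × Multiplicative (ZMod 2)) where
  card_four := by simp [Nat.card_eq_fintype_card]
  exponent_two := by simp [Monoid.exponent_prod]

section RealGenerators

lemma ofReal_sqrt_sq (n : ℕ) : ((√n : ℝ) : ℂ) ^ 2 = n := by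
  rw [← Complex.ofReal_pow, Real.sq_sqrt (Nat.cast_nonneg n), Complex.ofReal_natCast]

lemma conj_eq_self_of_sq_eq_natCast {z : ℂ} {n : ℕ} (h : z ^ 2 = n) :
    starRingEnd ℂ z = z := by
  rw [← ofReal_sqrt_sq] at h
  obtain rfl | rfl := sq_eq_sq_iff_eq_or_eq_neg.1 h <;> simp

lemma isTotallyReal_of_adjoin_eq_top {K : Type*} [Field K] [NumberField K] {S : Set K}
    (hS : IntermediateField.adjoin ℚ S = ⊤) (h : ∀ x ∈ S, ∃ n : ℕ, x ^ 2 = n) :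
    IsTotallyReal K := by
  refine ⟨fun v => InfinitePlace.isReal_iff.2 (ComplexEmbedding.isReal_iff.2 (RingHom.ext
    fun x => ?_))⟩
  have hx : x ∈ IntermediateField.adjoin ℚ S := hS ▸ IntermediateField.mem_top
  rw [ComplexEmbedding.conjugate_coe_eq]
  induction hx using IntermediateField.adjoin_induction with
  | mem x hx =>
    obtain ⟨n, hn⟩ := h x hx
    exact conj_eq_self_of_sq_eq_natCast (by rw [← map_pow, hn, map_natCast])
  | algebraMap x => simp
  | add x y _ _ hx hy => rw [map_add, map_add, hx, hy]
  | mul x y _ _ hx hy => rw [map_mul, map_mul, hx, hy]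
  | inv x _ hx => rw [map_inv₀, map_inv₀, hx]

lemma IsModelF1.isTotallyReal {K : Type*} [Field K] [NumberField K] {a b c : K} {p q s : ℕ}
    (h : IsModelF1 a b c p q s) : IsTotallyReal K :=
  isTotallyReal_of_adjoin_eq_top h.adjoin_eq_top <| by
    rintro x (rfl | rfl | rfl)
    exacts [⟨2, h.sq_a⟩, ⟨_, h.sq_b⟩, ⟨_, h.sq_c⟩]

end RealGenerators

namespace fieldF1

variable (p q s : ℕ)

/-- `√2` in `F₁`. -/
noncomputable def sqrtTwo : fieldF1 p q s :=
  ⟨(√2 : ℝ), IntermediateField.subset_adjoin _ _ (by simp)⟩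

/-- `√(pq)` in `F₁`. -/
noncomputable def sqrtPQ : fieldF1 p q s :=
  ⟨(√(p * q) : ℝ), IntermediateField.subset_adjoin _ _ (by simp)⟩

/-- `√(ps)` in `F₁`. -/
noncomputable def sqrtPS : fieldF1 p q s :=
  ⟨(√(p * s) : ℝ), IntermediateField.subset_adjoin _ _ (by simp)⟩

lemma sqrtTwo_sq : sqrtTwo p q s ^ 2 = 2 :=
  Subtype.ext (ofReal_sqrt_sq 2)

lemma sqrtPQ_sq : sqrtPQ p q s ^ 2 = (p * q : ℕ) := by
  have := ofReal_sqrt_sq (p * q)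
  push_cast at this ⊢
  exact Subtype.ext this

lemma sqrtPS_sq : sqrtPS p q s ^ 2 = (p * s : ℕ) := by
  have := ofReal_sqrt_sq (p * s)
  push_cast at this ⊢
  exact Subtype.ext this

lemma adjoin_sqrt_eq_top :
    IntermediateField.adjoin ℚ {sqrtTwo p q s, sqrtPQ p q s, sqrtPS p q s} = ⊤ := by
  have htop : @IntermediateField.adjoin ℚ _ (fieldF1 p q s) _ (fieldF1 p q s).algebra'
      {sqrtTwo p q s, sqrtPQ p q s, sqrtPS p q s} = ⊤ := by
    refine IntermediateField.lift_injective _ ?_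
    rw [IntermediateField.lift_adjoin, IntermediateField.lift_top, Set.image_insert_eq,
      Set.image_pair, Set.insert_comm, Set.pair_comm]
    rfl
  rwa [Subsingleton.elim (fieldF1 p q s).algebra' DivisionRing.toRatAlgebra] at htop

lemma numberField : NumberField (fieldF1 p q s) where
  to_finiteDimensional := by
    refine IntermediateField.finiteDimensional_adjoin fun x hx => ?_
    have isIntegral_of_sq {z : ℂ} {n : ℕ} (h : z ^ 2 = n) : IsIntegral ℚ z :=
      .of_pow two_pos (h ▸ isIntegral_natCast n)
    rcases hx with rfl | rfl | rfl
    · exact isIntegral_of_sq (n := p * q) (by simpa using ofReal_sqrt_sq (p * q))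
    · exact isIntegral_of_sq (n := p * s) (by simpa using ofReal_sqrt_sq (p * s))
    · exact isIntegral_of_sq (ofReal_sqrt_sq 2)

variable {p q s} in
lemma isModelF1 (hp : p.Prime) (hq : q.Prime) (hs : s.Prime) (hqs : q ≠ s) (hp8 : p % 8 = 5)
    (hq4 : q % 4 = 3) (hs4 : s % 4 = 3) (hpq : IsSquare (p : ZMod q))
    (hps : IsSquare (p : ZMod s)) :
    IsModelF1 (sqrtTwo p q s) (sqrtPQ p q s) (sqrtPS p q s) p q s where
  prime_p := hp
  prime_q := hq
  prime_s := hs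
  q_ne_s := hqs
  p_mod_eight := hp8
  q_mod_four := hq4
  s_mod_four := hs4
  isSquare_q := by
    have := Fact.mk hp
    have := Fact.mk hq
    exact (ZMod.exists_sq_eq_prime_iff_of_mod_four_eq_one (by omega) (by omega)).2 hpq
  isSquare_s := by
    have := Fact.mk hp
    have := Fact.mk hs
    exact (ZMod.exists_sq_eq_prime_iff_of_mod_four_eq_one (by omega) (by omega)).2 hps
  sq_a := sqrtTwo_sq p q s
  sq_b := sqrtPQ_sq p q s
  sq_c := sqrtPS_sq p q s
  adjoin_eq_top := adjoin_sqrt_eq_top p q s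

end fieldF1

theorem two_class_group_of_F1
    (p q s : ℕ) (hp : p.Prime) (hq : q.Prime) (hs : s.Prime)
    (hpq : p ≠ q) (hps : p ≠ s) (hqs : q ≠ s)
    (hp8 : p % 8 = 5) (hq8 : q % 8 = 3) (hs4 : s % 4 = 3)
    (hQRq : IsSquare (p : ZMod q)) (hQRs : IsSquare (p : ZMod s)) :
    ∀ P : Sylow 2 (ClassGroup (𝓞 (fieldF1 p q s))),
      Nonempty ((P : Subgroup (ClassGroup (𝓞 (fieldF1 p q s)))) ≃*
        (Multiplicative (ZMod 2) × Multiplicative (ZMod 2))) := by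
  intro P
  have := fieldF1.numberField p q s
  have model := fieldF1.isModelF1 hp hq hs hqs hp8 (by omega) hs4 hQRq hQRs
  have := model.isTotallyReal
  rw [sylow_two_eq_twoTorsion (fun _ => model.sq_eq_one_of_pow_four_eq_one hq8) P]
  have := isKleinFour_twoTorsion (model.card_twoTorsion_classGroup hq8)
  have := isKleinFour_zmod_two_prod
  exact IsKleinFour.nonempty_mulEquiv
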